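/- If D is a planar regular region with n > 1 boundary components which are analytic Jordan curves, then for every z ∈ D the conjugate Hardy H² kernel strictly dominates π times the Bergman kernel: K̂(z) > π B(z). -/

import Mathlib

open MeasureTheory Metric Complex Set Filter

noncomputable section

/-- `u` is harmonic on `s`: locally the real part of a holomorphic function. -/
def HarmonicOnD (u : ℂ → ℝ) (s : Set ℂ) : Prop :=
  ∀ z ∈ s, ∃ r > 0, Metric.ball z r ⊆ s ∧ ∃ f : ℂ → ℂ,
    DifferentiableOn ℂ f (Metric.ball z r) ∧ ∀ w ∈ Metric.ball z r, u w = (f w).re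

/-- Upper circle average of an `EReal`-valued function (via decreasing truncations). -/
noncomputable def circleAvgE (u : ℂ → EReal) (z : ℂ) (r : ℝ) : EReal :=
  ⨅ n : ℕ, ((((2 * Real.pi)⁻¹ *
      ∫ θ in (0:ℝ)..(2 * Real.pi),
        (max (u (circleMap z r θ)) ((-(n : ℝ) : ℝ) : EReal)).toReal) : ℝ) : EReal)

/-- `u` is subharmonic on the open set `s`. -/
def SubharmonicOnE (u : ℂ → EReal) (s : Set ℂ) : Prop :=
  UpperSemicontinuousOn u s ∧ (∀ z ∈ s, u z ≠ ⊤) ∧ (∃ z ∈ s, u z ≠ ⊥) ∧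
  ∀ z ∈ s, ∀ r : ℝ, 0 < r → Metric.closedBall z r ⊆ s → u z ≤ circleAvgE u z r

/-- The Lelong number `v(dd^c u, z₀)` of a subharmonic function. -/
noncomputable def lelongNumber (u : ℂ → EReal) (z₀ : ℂ) : ℝ :=
  sSup {a : ℝ | 0 ≤ a ∧ ∃ C : ℝ, ∃ r > 0, ∀ z : ℂ, z ≠ z₀ → dist z z₀ < r →
    u z ≤ ((a * Real.log (dist z z₀) + C : ℝ) : EReal)}

/-- `G` is the (negative) Green function of `D` with pole at `z₀`. -/
structure IsGreenFunction (D : Set ℂ) (z₀ : ℂ) (G : ℂ → EReal) : Prop where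
  neg : ∀ z ∈ D, G z < 0
  pole : G z₀ = ⊥
  logharm : ∃ h : ℂ → ℝ, HarmonicOnD h D ∧
    ∀ z ∈ D \ {z₀}, G z = ((Real.log (dist z z₀) + h z : ℝ) : EReal)
  bdry : ∀ w ∈ frontier D, Filter.Tendsto (fun z => (G z).toReal) (nhdsWithin w D) (nhds 0)

/-- `Γ` is an analytic Jordan curve. -/
def IsAnalyticJordanCurve (Γ : Set ℂ) : Prop :=
  ∃ γ : ℝ → ℂ, AnalyticOnNhd ℝ γ Set.univ ∧ Function.Periodic γ (2 * Real.pi) ∧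
    (∀ t, deriv γ t ≠ 0) ∧ Set.InjOn γ (Set.Ico 0 (2 * Real.pi)) ∧ Γ = Set.range γ

/-- `D` is a bounded planar regular region whose boundary consists of `n`
analytic Jordan curves. -/
def IsRegularRegion (n : ℕ) (D : Set ℂ) : Prop :=
  IsOpen D ∧ IsConnected D ∧ Bornology.IsBounded D ∧
  ∃ Γ : Fin n → Set ℂ, (∀ i, IsAnalyticJordanCurve (Γ i)) ∧
    (Pairwise fun i j => Disjoint (Γ i) (Γ j)) ∧ frontier D = ⋃ i, Γ i

/-- `ν` is the outward unit normal vector field on `∂D`. -/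
def IsOutwardUnitNormal (D : Set ℂ) (ν : ℂ → ℂ) : Prop :=
  ∀ z ∈ frontier D, ‖ν z‖ = 1 ∧
    (∀ᶠ t in nhdsWithin (0:ℝ) (Set.Ioi (0:ℝ)),
      z + t • ν z ∉ closure D ∧ z - t • ν z ∈ D) ∧
    (∀ γ : ℝ → ℂ, γ 0 = z → (∀ᶠ t in nhds (0:ℝ), γ t ∈ frontier D) →
      DifferentiableAt ℝ γ 0 → ((starRingEnd ℂ) (ν z) * deriv γ 0).re = 0)

/-- Arclength (1-dimensional Hausdorff) measure on the boundary of `D`. -/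
noncomputable def bdryArc (D : Set ℂ) : Measure ℂ :=
  (MeasureTheory.Measure.hausdorffMeasure 1).restrict (frontier D)

/-- The analytic Hardy class `H₂^(c)(D)`. -/
def HardyH2c (D : Set ℂ) (f : ℂ → ℂ) : Prop :=
  DifferentiableOn ℂ f D ∧ ∃ U : ℂ → ℝ, HarmonicOnD U D ∧ ∀ z ∈ D, ‖f z‖ ^ 2 ≤ U z

/-- Nontangential convergence of `f` to `L` at the boundary point `w`. -/
def NTTendsto (D : Set ℂ) (f : ℂ → ℂ) (w L : ℂ) : Prop :=
  ∀ α : ℝ, 1 < α →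
    Filter.Tendsto f
      (nhdsWithin w {z | z ∈ D ∧ dist z w ≤ α * Metric.infDist z (frontier D)}) (nhds L)

/-- `g` is the nontangential boundary value function of `f` (a.e. on `∂D`). -/
def IsNTBoundaryValue (D : Set ℂ) (f g : ℂ → ℂ) : Prop :=
  ∀ᵐ w ∂(bdryArc D), NTTendsto D f w (g w)

/-- `K` is the weighted Szegő kernel of `D` with boundary weight `lam`. -/
structure IsSzegoKernel (D : Set ℂ) (lam : ℂ → ℝ) (K : ℂ → ℂ → ℂ) : Prop where
  holo : ∀ w ∈ D, DifferentiableOn ℂ (fun z => K z w) D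
  cont : ∀ w ∈ D, ContinuousOn (fun z => K z w) (closure D)
  hardy : ∀ w ∈ D, HardyH2c D (fun z => K z w)
  hermitian : ∀ z ∈ D, ∀ w ∈ D, K z w = (starRingEnd ℂ) (K w z)
  sqfin : ∀ w ∈ D, (∫⁻ z, ENNReal.ofReal (‖K z w‖ ^ 2 * lam z) ∂(bdryArc D)) ≠ ⊤
  reproduce : ∀ f fb : ℂ → ℂ, HardyH2c D f → IsNTBoundaryValue D f fb → ∀ w ∈ D,
    f w = ((2 * Real.pi)⁻¹ : ℂ) * ∫ z, fb z * (starRingEnd ℂ) (K z w) * (lam z : ℂ) ∂(bdryArc D)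

/-- `B` is the weighted Bergman kernel of `D` with weight `ρ`. -/
structure IsBergmanKernel (D : Set ℂ) (ρ : ℂ → ℝ) (B : ℂ → ℂ → ℂ) : Prop where
  holo : ∀ w ∈ D, DifferentiableOn ℂ (fun z => B z w) D
  hermitian : ∀ z ∈ D, ∀ w ∈ D, B z w = (starRingEnd ℂ) (B w z)
  sqfin : ∀ w ∈ D, (∫⁻ z in D, ENNReal.ofReal (‖B z w‖ ^ 2 * ρ z)) ≠ ⊤
  reproduce : ∀ f : ℂ → ℂ, DifferentiableOn ℂ f D →
    IntegrableOn (fun z => ‖f z‖ ^ 2) D volume → ∀ w ∈ D,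
      f w = ∫ z in D, f z * (starRingEnd ℂ) (B z w) * (ρ z : ℂ)

/-- Extended-real logarithm (with `elog 0 = ⊥`). -/
noncomputable def elog (x : ℝ) : EReal := if x = 0 then ⊥ else ((Real.log x : ℝ) : EReal)

/-- `χ_{z₀}^m = χ_{-u}`: there is a holomorphic `F` on `D` with `log |F| = m·G + u`. -/
def charEqGreenPow (D : Set ℂ) (z₀ : ℂ) (G : ℂ → EReal) (u : ℂ → ℝ) (m : ℕ) : Prop :=
  ∃ F : ℂ → ℂ, DifferentiableOn ℂ F D ∧ ∀ z ∈ D \ {z₀},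
    F z ≠ 0 ∧ Real.log ‖F z‖ = m * (G z).toReal + u z

/-- `χ_{z₀} = χ_{-u}`. -/
def charEqGreen (D : Set ℂ) (z₀ : ℂ) (G : ℂ → EReal) (u : ℂ → ℝ) : Prop :=
  charEqGreenPow D z₀ G u 1

/-- The weight `ρ = e^{-φ} c(-2ψ)` (realized through `EReal.toReal`). -/
noncomputable def wgt2 (φ ψ : ℂ → EReal) (c : ℝ → ℝ) (z : ℂ) : ℝ :=
  Real.exp (-(φ z).toReal) * c ((-((2 : EReal) * ψ z)).toReal)

/-- The weight `e^{-φ} c(-ψ)` (realized through `EReal.toReal`). -/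
noncomputable def wgt1 (φ ψ : ℂ → EReal) (c : ℝ → ℝ) (z : ℂ) : ℝ :=
  Real.exp (-(φ z).toReal) * c ((-(ψ z)).toReal)

/-- Admissible gain function `c` on `[0,∞)`. -/
structure AdmissibleC (c : ℝ → ℝ) : Prop where
  meas : Measurable c
  pos : ∀ t : ℝ, 0 ≤ t → 0 < c t
  mono : ∀ s t : ℝ, 0 ≤ s → s ≤ t → c t * Real.exp (-t) ≤ c s * Real.exp (-s)
  limz : Filter.Tendsto c (nhdsWithin 0 (Set.Ioi 0)) (nhds 1)
  czero : c 0 = 1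
  fin : (∫⁻ t in Set.Ioi (0:ℝ), ENNReal.ofReal (c t * Real.exp (-t))) ≠ ⊤

/-- Admissible gain function `c` on `(0,∞)` (no normalization at `0`). -/
structure AdmissibleC' (c : ℝ → ℝ) : Prop where
  meas : Measurable c
  pos : ∀ t : ℝ, 0 < t → 0 < c t
  mono : ∀ s t : ℝ, 0 < s → s ≤ t → c t * Real.exp (-t) ≤ c s * Real.exp (-s)
  fin : (∫⁻ t in Set.Ioi (0:ℝ), ENNReal.ofReal (c t * Real.exp (-t))) ≠ ⊤

/-- `Z` is a discrete subset of `D`. -/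
def DiscreteIn (Z D : Set ℂ) : Prop :=
  Z ⊆ D ∧ ∀ z ∈ D, ∃ r > 0, Metric.ball z r ∩ Z ⊆ {z}

/-- `w` has a positive lower bound on every compact subset of `D ∖ Z`. -/
def PosLowerBoundOnCompacts (D Z : Set ℂ) (w : ℂ → ℝ) : Prop :=
  ∀ Kc : Set ℂ, Kc ⊆ D \ Z → IsCompact Kc → ∃ m : ℝ, 0 < m ∧ ∀ z ∈ Kc, m ≤ w z

/-- `∫₀^∞ c(t) e^{-t} dt`. -/
noncomputable def cInt (c : ℝ → ℝ) : ℝ := ∫ t in Set.Ioi (0:ℝ), c t * Real.exp (-t)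

/-- `h(t) = ∫_t^∞ c(s) e^{-s} ds`. -/
noncomputable def hFun (c : ℝ → ℝ) (t : ℝ) : ℝ := ∫ s in Set.Ioi t, c s * Real.exp (-s)

end

open scoped Topology ComplexConjugate

noncomputable section

/-!
Write the Green function with pole `t` as `G = log ‖w - t‖ + h`, and let `u = exp (2 G)` and
`P = 2 ∂h`, which is holomorphic. On `∂D` put `b = conj (K · t) / ∇G`. Reproducing the functions
`(x - w)⁻¹`, `w ∉ closure D`, shows that the Cauchy integral of `b` is `-(w - t)⁻¹` outside `D`; by
the jump relation `c = (w - t) * (Cauchy integral of b) + 1` is holomorphic in `D` and continuous up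
to `∂D`, where `c p = (p - t) * b p`, and `c t = 1`. Pairing `c` with the Bergman kernel and
integrating by parts against cutoffs of `u` that tend to the indicator of `D` gives
`K t t - π * B t t ≥ 0`, with a defect that controls `‖c' + P * c‖ ^ 2`. If `c' + P * c` vanished
identically then `(w - t) / c` would, up to a scalar, have modulus `exp G`: it would be a proper map
to the disc with a single simple zero, hence injective, and `∂D` would be connected.
-/

/-! ### Wirtinger derivatives and the Cauchy–Pompeiu formula -/

/-- The real-linear form `a dz + b dz̄` on `ℂ`. -/
def wirtingerCLM (a b : ℂ) : ℂ →L[ℝ] ℂ :=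
  a • ContinuousLinearMap.id ℝ ℂ + b • (conjCLE : ℂ →L[ℝ] ℂ)

lemma wirtingerCLM_apply (a b x : ℂ) : wirtingerCLM a b x = a * x + b * conj x := by
  simp [wirtingerCLM]

/-- `F` is real differentiable at `w` with Wirtinger derivatives `∂F/∂z = a` and `∂F/∂z̄ = b`. -/
def HasWirtingerDerivAt (F : ℂ → ℂ) (a b w : ℂ) : Prop :=
  HasFDerivAt F (wirtingerCLM a b) w

namespace HasWirtingerDerivAt

variable {F G : ℂ → ℂ} {a b c d w : ℂ}

lemma congr_deriv (h : HasWirtingerDerivAt F a b w) (ha : a = c) (hb : b = d) :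
    HasWirtingerDerivAt F c d w := ha ▸ hb ▸ h

lemma congr_of_eventuallyEq (h : HasWirtingerDerivAt F a b w) (hFG : G =ᶠ[𝓝 w] F) :
    HasWirtingerDerivAt G a b w :=
  HasFDerivAt.congr_of_eventuallyEq h hFG

lemma continuousAt (h : HasWirtingerDerivAt F a b w) : ContinuousAt F w :=
  HasFDerivAt.continuousAt h

lemma of_hasFDerivAt {L : ℂ →L[ℝ] ℂ} (h : HasFDerivAt F L w)
    (hL : ∀ x, L x = a * x + b * conj x) : HasWirtingerDerivAt F a b w :=
  h.congr_fderiv <| ContinuousLinearMap.ext fun x => by rw [hL, wirtingerCLM_apply]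

lemma const (c w : ℂ) : HasWirtingerDerivAt (fun _ => c) 0 0 w :=
  of_hasFDerivAt (hasFDerivAt_const c w) (by simp)

lemma of_hasDerivAt (h : HasDerivAt F a w) : HasWirtingerDerivAt F a 0 w :=
  of_hasFDerivAt (h.hasFDerivAt.restrictScalars ℝ) (by simp [mul_comm])

lemma mul (hF : HasWirtingerDerivAt F a b w) (hG : HasWirtingerDerivAt G c d w) :
    HasWirtingerDerivAt (fun x => F x * G x) (a * G w + F w * c) (b * G w + F w * d) w :=
  of_hasFDerivAt (HasFDerivAt.mul hF hG) fun x => by simp [wirtingerCLM_apply]; ring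

lemma add (hF : HasWirtingerDerivAt F a b w) (hG : HasWirtingerDerivAt G c d w) :
    HasWirtingerDerivAt (fun x => F x + G x) (a + c) (b + d) w :=
  of_hasFDerivAt (HasFDerivAt.add hF hG) fun x => by simp [wirtingerCLM_apply]; ring

lemma conj_comp (hF : HasWirtingerDerivAt F a b w) :
    HasWirtingerDerivAt (fun x => conj (F x)) (conj b) (conj a) w :=
  of_hasFDerivAt ((conjCLE : ℂ →L[ℝ] ℂ).hasFDerivAt.comp w hF) fun x => by
    simp [wirtingerCLM_apply]; ring

lemma comp_hasDerivAt {φ : ℂ → ℂ} {φ' : ℂ} (hF : HasWirtingerDerivAt F a b w)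
    (hφ : HasDerivAt φ φ' (F w)) :
    HasWirtingerDerivAt (fun x => φ (F x)) (φ' * a) (φ' * b) w :=
  of_hasFDerivAt ((hφ.hasFDerivAt.restrictScalars ℝ).comp w hF) fun x => by
    simp [wirtingerCLM_apply]; ring

lemma ofReal_comp_hasDerivAt {u : ℂ → ℝ} {φ : ℝ → ℝ} {φ' : ℝ}
    (hu : HasWirtingerDerivAt (fun x => (u x : ℂ)) a b w) (hφ : HasDerivAt φ φ' (u w)) :
    HasWirtingerDerivAt (fun x => (φ (u x) : ℂ)) (φ' * a) (φ' * b) w := by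
  have hre : HasFDerivAt u (reCLM.comp (wirtingerCLM a b)) w := reCLM.hasFDerivAt.comp w hu
  have hval (x : ℂ) : ((wirtingerCLM a b x).re : ℂ) = a * x + b * conj x := by
    rw [← wirtingerCLM_apply]
    exact congrArg (fun L : ℂ →L[ℝ] ℂ => L x)
      (HasFDerivAt.unique (ofRealCLM.hasFDerivAt.comp w hre) hu)
  refine of_hasFDerivAt (ofRealCLM.hasFDerivAt.comp w (hφ.hasFDerivAt.comp w hre)) fun x => ?_
  rw [mul_assoc, mul_assoc, ← mul_add, ← hval]
  simp [mul_comm]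

lemma comp_sub_const {F : ℂ → ℂ} (p : ℂ) (h : HasWirtingerDerivAt F a b (w - p)) :
    HasWirtingerDerivAt (fun x => F (x - p)) a b w := by
  refine of_hasFDerivAt (HasFDerivAt.comp (g := F) w h ((hasFDerivAt_id w).sub_const p)) fun x => ?_
  simp [wirtingerCLM_apply]

lemma unique (h : HasWirtingerDerivAt F a b w) (h' : HasWirtingerDerivAt F c d w) :
    a = c ∧ b = d := by
  have hL (x : ℂ) : a * x + b * conj x = c * x + d * conj x := by
    simpa only [wirtingerCLM_apply] using
      congrArg (fun L : ℂ →L[ℝ] ℂ => L x) (HasFDerivAt.unique h h')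
  have h1 := hL 1
  have hI : a - b = c - d := mul_left_cancel₀ I_ne_zero (by
    have := hL I
    simp only [conj_I] at this
    linear_combination this)
  simp only [map_one, mul_one] at h1
  exact ⟨by linear_combination (h1 + hI) / 2, by linear_combination (h1 - hI) / 2⟩

end HasWirtingerDerivAt

/-- `F` vanishes on `D` outside some compact subset of `D`: the form in which the boundary terms of
the integrations by parts over `D` disappear. -/
def VanishesOffCompact {E : Type*} [Zero E] (D : Set ℂ) (F : ℂ → E) : Prop :=
  ∃ K ⊆ D, IsCompact K ∧ ∀ w ∈ D \ K, F w = 0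

namespace VanishesOffCompact

variable {E E' : Type*} {D : Set ℂ}

lemma of_imp [Zero E] [Zero E'] {F : ℂ → E} {H : ℂ → E'} (hF : VanishesOffCompact D F)
    (h : ∀ w ∈ D, F w = 0 → H w = 0) : VanishesOffCompact D H := by
  obtain ⟨K, hKD, hK, h0⟩ := hF
  exact ⟨K, hKD, hK, fun w hw => h w hw.1 (h0 w hw)⟩

lemma mul_right [MulZeroClass E] {F : ℂ → E} (hF : VanishesOffCompact D F) (H : ℂ → E) :
    VanishesOffCompact D fun w => F w * H w :=
  hF.of_imp fun w _ h => by rw [h, zero_mul]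

lemma indicator_eventuallyEq_zero [Zero E] {F : ℂ → E} (hF : VanishesOffCompact D F) {w : ℂ}
    (hw : w ∉ D) : D.indicator F =ᶠ[𝓝 w] 0 := by
  obtain ⟨K, hKD, hK, h0⟩ := hF
  filter_upwards [hK.isClosed.isOpen_compl.mem_nhds fun h => hw (hKD h)] with x hx
  exact indicator_apply_eq_zero.2 fun hxD => h0 x ⟨hxD, hx⟩

lemma hasCompactSupport_indicator [Zero E] {F : ℂ → E} (hF : VanishesOffCompact D F) :
    HasCompactSupport (D.indicator F) := by
  obtain ⟨K, -, hK, h0⟩ := hF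
  exact HasCompactSupport.intro hK fun x hx =>
    indicator_apply_eq_zero.2 fun hxD => h0 x ⟨hxD, hx⟩

lemma continuous_indicator [TopologicalSpace E] [Zero E] {F : ℂ → E} (hF : VanishesOffCompact D F)
    (hD : IsOpen D) (hc : ContinuousOn F D) : Continuous (D.indicator F) := by
  refine continuous_iff_continuousAt.2 fun w => ?_
  by_cases hw : w ∈ D
  · exact (hc.continuousAt (hD.mem_nhds hw)).congr
      (mem_of_superset (hD.mem_nhds hw) fun x hx => (indicator_of_mem hx F).symm)
  · exact (continuousAt_const (y := (0 : E))).congr (hF.indicator_eventuallyEq_zero hw).symm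

lemma integrable_indicator [NormedAddCommGroup E] {F : ℂ → E} (hF : VanishesOffCompact D F)
    (hD : IsOpen D) (hc : ContinuousOn F D) : Integrable (D.indicator F) :=
  (hF.continuous_indicator hD hc).integrable_of_hasCompactSupport hF.hasCompactSupport_indicator

lemma integrableOn [NormedAddCommGroup E] {F : ℂ → E} (hF : VanishesOffCompact D F)
    (hD : IsOpen D) (hc : ContinuousOn F D) : IntegrableOn F D :=
  (integrable_indicator_iff hD.measurableSet).1 (hF.integrable_indicator hD hc)

lemma wirtingerDeriv {F a b : ℂ → ℂ} (h : VanishesOffCompact D F) (hD : IsOpen D)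
    (hF : ∀ w ∈ D, HasWirtingerDerivAt F (a w) (b w) w) :
    VanishesOffCompact D a ∧ VanishesOffCompact D b := by
  obtain ⟨K, hKD, hK, h0⟩ := h
  have hab (w) (hw : w ∈ D \ K) : a w = 0 ∧ b w = 0 :=
    (hF w hw.1).unique <| (HasWirtingerDerivAt.const 0 w).congr_of_eventuallyEq <|
      mem_of_superset ((hD.sdiff hK.isClosed).mem_nhds hw) h0
  exact ⟨⟨K, hKD, hK, fun w hw => (hab w hw).1⟩, ⟨K, hKD, hK, fun w hw => (hab w hw).2⟩⟩

lemma hasWirtingerDerivAt_indicator {F a b : ℂ → ℂ} (h : VanishesOffCompact D F) (hD : IsOpen D)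
    (hF : ∀ w ∈ D, HasWirtingerDerivAt F (a w) (b w) w) (w : ℂ) :
    HasWirtingerDerivAt (D.indicator F) (D.indicator a w) (D.indicator b w) w := by
  by_cases hw : w ∈ D
  · rw [indicator_of_mem hw, indicator_of_mem hw]
    exact (hF w hw).congr_of_eventuallyEq
      (mem_of_superset (hD.mem_nhds hw) fun x hx => indicator_of_mem hx F)
  · rw [indicator_of_notMem hw, indicator_of_notMem hw]
    exact (HasWirtingerDerivAt.const 0 w).congr_of_eventuallyEq (h.indicator_eventuallyEq_zero hw)

end VanishesOffCompact

lemma integral_fderiv_apply_eq_zero {F : ℂ → ℂ} {F' : ℂ → ℂ →L[ℝ] ℂ}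
    (hF : ∀ w, HasFDerivAt F (F' w) w) (hFi : Integrable F) (v : ℂ)
    (hFv : Integrable fun w => F' w v) : ∫ w, F' w v = 0 := by
  simpa using integral_bilinear_hasFDerivAt_right_eq_neg_left_of_integrable
    (f := fun _ : ℂ => (1 : ℂ)) (f' := fun _ => 0) (g := F) (g' := F') (v := v)
    (B := ContinuousLinearMap.mul ℝ ℂ) (μ := volume) (by simp) (by simpa using hFv)
    (by simpa using hFi) (fun x _ => hasFDerivAt_const _ _) (fun x _ => hF x)

lemma setIntegral_wirtingerDeriv_eq_zero {D : Set ℂ} (hD : IsOpen D) {F a b : ℂ → ℂ}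
    (hF : ∀ w ∈ D, HasWirtingerDerivAt F (a w) (b w) w) (ha : ContinuousOn a D)
    (hb : ContinuousOn b D) (h0 : VanishesOffCompact D F) :
    ∫ w in D, a w = 0 ∧ ∫ w in D, b w = 0 := by
  obtain ⟨ha0, hb0⟩ := h0.wirtingerDeriv hD hF
  have hFi := h0.integrable_indicator hD fun w hw => (hF w hw).continuousAt.continuousWithinAt
  have hai := ha0.integrable_indicator hD ha
  have hbi := hb0.integrable_indicator hD hb
  have hdir (v : ℂ) : (∫ w in D, a w) * v + (∫ w in D, b w) * conj v = 0 := by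
    rw [← integral_indicator hD.measurableSet, ← integral_indicator hD.measurableSet,
      ← integral_mul_const, ← integral_mul_const,
      ← integral_add (hai.mul_const v) (hbi.mul_const _)]
    simp only [← wirtingerCLM_apply]
    refine integral_fderiv_apply_eq_zero (h0.hasWirtingerDerivAt_indicator hD hF) hFi v ?_
    simp only [wirtingerCLM_apply]
    exact (hai.mul_const v).add (hbi.mul_const (conj v))
  have h1 := hdir 1
  have hI : (∫ w in D, a w) - ∫ w in D, b w = 0 := mul_left_cancel₀ I_ne_zero (by
    have := hdir I
    simp only [conj_I] at this
    linear_combination this)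
  simp only [map_one, mul_one] at h1
  exact ⟨by linear_combination (h1 + hI) / 2, by linear_combination (h1 - hI) / 2⟩

/-- The smooth approximation `c² z̄ / (1 + c² |z|²)` of the Cauchy kernel `1 / z` as `c → ∞`. -/
def regularizedCauchyKernel (c : ℝ) (z : ℂ) : ℂ :=
  c ^ 2 * conj z * (1 + c ^ 2 * (z * conj z))⁻¹

/-- The density `c² / (π (1 + c² |z|²)²)`, a Dirac approximation as `c → ∞`; it is `1 / π` times
the `z̄`-derivative of `regularizedCauchyKernel c`. -/
def cauchyBump (c : ℝ) (z : ℂ) : ℝ :=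
  Real.pi⁻¹ * (c ^ 2 * ((1 + c ^ 2 * ‖z‖ ^ 2) ^ 2)⁻¹)

lemma one_add_sq_mul_conj_ne_zero (c : ℝ) (z : ℂ) : (1 + c ^ 2 * (z * conj z) : ℂ) ≠ 0 := by
  rw [mul_conj, normSq_eq_norm_sq]
  norm_cast
  positivity

lemma continuous_regularizedCauchyKernel (c : ℝ) : Continuous (regularizedCauchyKernel c) :=
  (by fun_prop : Continuous fun z : ℂ => (c ^ 2 * conj z : ℂ)).mul
    ((by fun_prop : Continuous fun z : ℂ => (1 + c ^ 2 * (z * conj z) : ℂ)).inv₀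
      (one_add_sq_mul_conj_ne_zero c))

lemma continuous_cauchyBump (c : ℝ) : Continuous (cauchyBump c) :=
  continuous_const.mul <| continuous_const.mul <|
    Continuous.inv₀ (by fun_prop) fun z => by positivity

lemma hasWirtingerDerivAt_regularizedCauchyKernel (c : ℝ) (z : ℂ) :
    HasWirtingerDerivAt (regularizedCauchyKernel c) (-(regularizedCauchyKernel c z) ^ 2)
      (Real.pi * cauchyBump c z) z := by
  have hne := one_add_sq_mul_conj_ne_zero c z
  have hid : HasWirtingerDerivAt (fun x => x) 1 0 z := .of_hasDerivAt (hasDerivAt_id z)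
  have hden := (HasWirtingerDerivAt.const 1 z).add
    ((HasWirtingerDerivAt.const ((c : ℂ) ^ 2) z).mul (hid.mul hid.conj_comp))
  have hnum := (HasWirtingerDerivAt.const ((c : ℂ) ^ 2) z).mul hid.conj_comp
  refine (hnum.mul (hden.comp_hasDerivAt (hasDerivAt_inv hne))).congr_deriv ?_ ?_
  · simp only [regularizedCauchyKernel, map_zero]
    field_simp
    ring
  · have hπ : (Real.pi : ℂ) ≠ 0 := by exact_mod_cast Real.pi_ne_zero
    have hbump : (cauchyBump c z : ℂ)
        = (Real.pi : ℂ)⁻¹ * (c ^ 2 * ((1 + c ^ 2 * (z * conj z)) ^ 2)⁻¹) := by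
      rw [mul_conj, normSq_eq_norm_sq, cauchyBump]
      push_cast
      ring
    rw [hbump]
    simp only [map_one]
    field_simp
    ring

lemma norm_mul_regularizedCauchyKernel_le_one (c : ℝ) (z : ℂ) :
    ‖z * regularizedCauchyKernel c z‖ ≤ 1 := by
  have h : z * regularizedCauchyKernel c z
      = ((c ^ 2 * ‖z‖ ^ 2 / (1 + c ^ 2 * ‖z‖ ^ 2) : ℝ) : ℂ) := by
    rw [regularizedCauchyKernel, mul_conj, normSq_eq_norm_sq]
    push_cast
    rw [← mul_conj']
    ring
  rw [h, norm_real, Real.norm_of_nonneg (by positivity), div_le_one (by positivity)]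
  linarith

lemma tendsto_mul_regularizedCauchyKernel {z : ℂ} (hz : z ≠ 0) :
    Tendsto (fun c => z * regularizedCauchyKernel c z) atTop (𝓝 1) := by
  have hpos : 0 < ‖z‖ ^ 2 := by positivity
  have hden : Tendsto (fun c : ℝ => 1 + c ^ 2 * ‖z‖ ^ 2) atTop atTop :=
    tendsto_atTop_add_const_left _ _ ((tendsto_pow_atTop two_ne_zero).atTop_mul_const hpos)
  have hlim := (continuous_ofReal.tendsto _).comp
    ((tendsto_const_nhds (x := (1 : ℝ))).sub hden.inv_tendsto_atTop)
  rw [sub_zero, ofReal_one] at hlim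
  refine hlim.congr fun c => ?_
  have hne := one_add_sq_mul_conj_ne_zero c z
  have hcast : ((1 + c ^ 2 * ‖z‖ ^ 2 : ℝ) : ℂ) = 1 + c ^ 2 * (z * conj z) := by
    rw [mul_conj, normSq_eq_norm_sq]
    push_cast
    ring
  simp only [Function.comp_apply, Pi.inv_apply, ofReal_sub, ofReal_inv, ofReal_one, hcast,
    regularizedCauchyKernel]
  linear_combination -mul_inv_cancel₀ hne

lemma integral_cauchyBump_one : ∫ z, cauchyBump 1 z = 1 := by
  have hderiv (x : ℝ) : HasDerivAt (fun y : ℝ => -(Real.pi⁻¹ / 2) * (1 + y ^ 2)⁻¹)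
      (x ^ (2 - 1) • (Real.pi⁻¹ * ((1 + x ^ 2) ^ 2)⁻¹)) x := by
    have hden := ((hasDerivAt_pow 2 x).const_add 1).inv (by positivity)
    refine (hden.const_mul (-(Real.pi⁻¹ / 2))).congr_deriv ?_
    simp only [smul_eq_mul]
    norm_num
    field_simp
  have hlim : Tendsto (fun y : ℝ => -(Real.pi⁻¹ / 2) * (1 + y ^ 2)⁻¹) atTop (𝓝 0) := by
    simpa using (tendsto_atTop_add_const_left atTop (1 : ℝ)
      (tendsto_pow_atTop two_ne_zero)).inv_tendsto_atTop.const_mul (-(Real.pi⁻¹ / 2))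
  have hradial : ∫ y in Ioi (0 : ℝ), y ^ (2 - 1) • (Real.pi⁻¹ * ((1 + y ^ 2) ^ 2)⁻¹)
      = Real.pi⁻¹ / 2 := by
    rw [integral_Ioi_of_hasDerivAt_of_nonneg' (fun x _ => hderiv x) (fun x hx => ?_) hlim]
    · simp
    · have : (0 : ℝ) < x := hx
      simp only [smul_eq_mul]
      positivity
  have hvol : (volume : Measure ℂ).real (ball 0 1) = Real.pi := by
    simp [Measure.real, Complex.volume_ball]
  have h := integral_fun_norm_addHaar (volume : Measure ℂ)
    (fun y : ℝ => Real.pi⁻¹ * ((1 + y ^ 2) ^ 2)⁻¹)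
  rw [finrank_real_complex, hvol, hradial] at h
  simp only [cauchyBump, one_pow, one_mul]
  rw [h]
  simp only [nsmul_eq_mul, smul_eq_mul]
  field_simp
  norm_num

lemma tendsto_integral_cauchyBump_mul {F : ℂ → ℂ} (hF : Continuous F) (hFs : HasCompactSupport F)
    (p : ℂ) : Tendsto (fun c => ∫ w, cauchyBump c (w - p) * F w) atTop (𝓝 (F p)) := by
  have hdecay : Tendsto (fun y : ℝ => y ^ 2 * (Real.pi⁻¹ * ((1 + y ^ 2) ^ 2)⁻¹)) atTop (𝓝 0) := by
    have hinv : Tendsto (fun y : ℝ => Real.pi⁻¹ * (1 + y ^ 2)⁻¹) atTop (𝓝 0) := by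
      simpa using (tendsto_atTop_add_const_left atTop (1 : ℝ)
        (tendsto_pow_atTop two_ne_zero)).inv_tendsto_atTop.const_mul Real.pi⁻¹
    refine squeeze_zero (fun y => by positivity) (fun y => ?_) hinv
    rw [mul_left_comm, ← div_eq_mul_inv (y ^ 2), ← one_div (1 + y ^ 2)]
    refine mul_le_mul_of_nonneg_left ?_ (by positivity)
    rw [div_le_div_iff₀ (by positivity) (by positivity)]
    nlinarith [sq_nonneg y]
  have h := tendsto_integral_comp_smul_smul_of_integrable (μ := (volume : Measure ℂ))
    (φ := cauchyBump 1) (fun z => by unfold cauchyBump; positivity) integral_cauchyBump_one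
    (by
      rw [finrank_real_complex]
      simp only [cauchyBump, one_pow, one_mul]
      exact hdecay.comp tendsto_norm_cobounded_atTop)
    (g := fun x => F (x + p)) ((hF.integrable_of_hasCompactSupport hFs).comp_add_right p)
    (hF.comp (continuous_add_const p)).continuousAt
  rw [zero_add] at h
  refine h.congr fun c => ?_
  rw [← integral_add_right_eq_self (fun w => (cauchyBump c (w - p) : ℂ) * F w) p]
  congr 1 with x
  have hscale : c ^ 2 * cauchyBump 1 (c • x) = cauchyBump c x := by
    simp only [cauchyBump, norm_smul, mul_pow, Real.norm_eq_abs, sq_abs, one_pow, one_mul]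
    ring
  rw [finrank_real_complex, add_sub_cancel_right, hscale, real_smul]

section Pompeiu

variable {D : Set ℂ} {F a R : ℂ → ℂ} {p : ℂ}

lemma VanishesOffCompact.of_sub_mul {F a R : ℂ → ℂ} (h0 : VanishesOffCompact D F) (hD : IsOpen D)
    (hp : p ∈ D) (hF : ∀ w ∈ D, HasWirtingerDerivAt F (a w) ((w - p) * R w) w) :
    VanishesOffCompact D R := by
  obtain ⟨K, hKD, hK, hR⟩ := (h0.wirtingerDeriv hD hF).2
  refine ⟨insert p K, insert_subset hp hKD, hK.insert p, fun w hw => ?_⟩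
  rw [Set.mem_sdiff, mem_insert_iff, not_or] at hw
  exact (mul_eq_zero.1 (hR w ⟨hw.1, hw.2.2⟩)).resolve_left (sub_ne_zero.2 hw.2.1)

lemma regularized_pompeiu (hD : IsOpen D)
    (hF : ∀ w ∈ D, HasWirtingerDerivAt F (a w) ((w - p) * R w) w) (ha : ContinuousOn a D)
    (hR : ContinuousOn R D) (h0 : VanishesOffCompact D F) (c : ℝ) :
    ∫ w in D, R w * ((w - p) * regularizedCauchyKernel c (w - p))
      = -(Real.pi * ∫ w in D, cauchyBump c (w - p) * F w) := by
  have hFc : ContinuousOn F D := fun w hw => (hF w hw).continuousAt.continuousWithinAt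
  have hsub : Continuous fun w : ℂ => w - p := continuous_sub_right p
  have hk : Continuous fun w => regularizedCauchyKernel c (w - p) :=
    (continuous_regularizedCauchyKernel c).comp hsub
  have hbump : Continuous fun w => (Real.pi * cauchyBump c (w - p) : ℂ) :=
    continuous_const.mul (continuous_ofReal.comp ((continuous_cauchyBump c).comp hsub))
  have hprod (w) (hw : w ∈ D) := (hF w hw).mul
    ((hasWirtingerDerivAt_regularizedCauchyKernel c (w - p)).comp_sub_const p)
  have hR0 : VanishesOffCompact D fun w => (w - p) * R w := (h0.wirtingerDeriv hD hF).2
  have hzero := (setIntegral_wirtingerDeriv_eq_zero hD hprod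
    ((ha.mul hk.continuousOn).add (hFc.mul (hk.pow 2).neg.continuousOn))
    (((hsub.continuousOn.mul hR).mul hk.continuousOn).add (hFc.mul hbump.continuousOn))
    (h0.mul_right _)).2
  rw [integral_add
    ((hR0.mul_right _).integrableOn hD ((hsub.continuousOn.mul hR).mul hk.continuousOn))
    ((h0.mul_right _).integrableOn hD (hFc.mul hbump.continuousOn))] at hzero
  rw [← integral_const_mul, eq_neg_iff_add_eq_zero, ← hzero]
  congr 2 <;> ext w <;> ring

theorem setIntegral_eq_neg_pi_mul_of_hasWirtingerDerivAt (hD : IsOpen D) (hp : p ∈ D)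
    (hF : ∀ w ∈ D, HasWirtingerDerivAt F (a w) ((w - p) * R w) w) (ha : ContinuousOn a D)
    (hR : ContinuousOn R D) (h0 : VanishesOffCompact D F) :
    ∫ w in D, R w = -(Real.pi * F p) := by
  have hFc : ContinuousOn F D := fun w hw => (hF w hw).continuousAt.continuousWithinAt
  have hRi : IntegrableOn R D := (h0.of_sub_mul hD hp hF).integrableOn hD hR
  have hlimR : Tendsto (fun c => ∫ w in D, R w * ((w - p) * regularizedCauchyKernel c (w - p)))
      atTop (𝓝 (∫ w in D, R w)) := by
    refine tendsto_integral_filter_of_dominated_convergence (fun w => ‖R w‖)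
      (.of_forall fun c => hRi.aestronglyMeasurable.mul ?_)
      (.of_forall fun c => .of_forall fun w => ?_) hRi.norm ?_
    · exact Continuous.aestronglyMeasurable <| (continuous_sub_right p).mul <|
        (continuous_regularizedCauchyKernel c).comp (continuous_sub_right p)
    · rw [norm_mul]
      exact mul_le_of_le_one_right (norm_nonneg _) (norm_mul_regularizedCauchyKernel_le_one c _)
    · filter_upwards [ae_restrict_of_ae (compl_mem_ae_iff.2 (measure_singleton p))] with w hw
      simpa using (tendsto_mul_regularizedCauchyKernel (sub_ne_zero.2 hw)).const_mul (R w)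
  have hlimF : Tendsto (fun c => ∫ w in D, cauchyBump c (w - p) * F w) atTop (𝓝 (F p)) := by
    have h := tendsto_integral_cauchyBump_mul (h0.continuous_indicator hD hFc)
      h0.hasCompactSupport_indicator p
    rw [indicator_of_mem hp] at h
    refine h.congr fun c => ?_
    rw [← integral_indicator hD.measurableSet]
    simp only [indicator_mul_right]
  refine tendsto_nhds_unique hlimR ?_
  simpa only [regularized_pompeiu hD hF ha hR h0] using (hlimF.const_mul (Real.pi : ℂ)).neg

lemma setIntegral_eq_zero_of_hasWirtingerDerivAt (hD : IsOpen D) (hp : p ∉ D)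
    (hF : ∀ w ∈ D, HasWirtingerDerivAt F (a w) ((w - p) * R w) w) (ha : ContinuousOn a D)
    (hR : ContinuousOn R D) (h0 : VanishesOffCompact D F) :
    ∫ w in D, R w = 0 := by
  have hFc : ContinuousOn F D := fun w hw => (hF w hw).continuousAt.continuousWithinAt
  have hne (w) (hw : w ∈ D) : w - p ≠ 0 := sub_ne_zero.2 fun h => hp (h ▸ hw)
  have hinv (w) (hw : w ∈ D) :
      HasWirtingerDerivAt (fun w => (w - p)⁻¹) (-((w - p) ^ 2)⁻¹) 0 w := .of_hasDerivAt <|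
    ((hasDerivAt_inv (hne w hw)).comp w ((hasDerivAt_id w).sub_const p)).congr_deriv (mul_one _)
  have hsub : ContinuousOn (fun w : ℂ => w - p) D := (continuous_sub_right p).continuousOn
  refine (setIntegral_wirtingerDeriv_eq_zero hD
    (fun w hw => ((hF w hw).mul (hinv w hw)).congr_deriv rfl ?_)
    ((ha.mul (hsub.inv₀ hne)).add (hFc.mul
      ((hsub.pow 2).inv₀ fun w hw => pow_ne_zero 2 (hne w hw)).neg))
    hR (h0.mul_right _)).2
  have := hne w hw
  field_simp
  ring

end Pompeiu

/-! ### Integral identities for the exhaustion by a Green function -/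

@[fun_prop]
lemma continuousOn_ofReal_comp {X : Type*} [TopologicalSpace X] {s : Set X} {f : X → ℝ}
    (hf : ContinuousOn f s) : ContinuousOn (fun x => (f x : ℂ)) s :=
  continuous_ofReal.comp_continuousOn hf

@[fun_prop]
lemma continuousOn_conj_comp {X : Type*} [TopologicalSpace X] {s : Set X} {f : X → ℂ}
    (hf : ContinuousOn f s) : ContinuousOn (fun x => conj (f x)) s :=
  continuous_conj.comp_continuousOn hf

/-- A `C¹` function on `ℝ` vanishing near `1`. Composed with `greenSq`, which tends to `1` at the
boundary, it cuts integrals over the domain off to a compact set. -/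
def IsCutoff (θ : ℝ → ℝ) : Prop :=
  ContDiff ℝ 1 θ ∧ ∃ a < 1, ∀ x ≥ a, θ x = 0

/-- The primitive `x ↦ ∫ₓ¹ θ` of `-θ` vanishing at `1`. -/
def tailIntegral (θ : ℝ → ℝ) (x : ℝ) : ℝ := ∫ s in x..1, θ s

namespace IsCutoff

variable {θ : ℝ → ℝ}

lemma continuous (hθ : IsCutoff θ) : Continuous θ := hθ.1.continuous

lemma continuous_deriv (hθ : IsCutoff θ) : Continuous (deriv θ) := hθ.1.continuous_deriv le_rfl

lemma hasDerivAt (hθ : IsCutoff θ) (x : ℝ) : HasDerivAt θ (deriv θ x) x :=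
  (hθ.1.differentiable one_ne_zero x).hasDerivAt

lemma hasDerivAt_tailIntegral (hθ : IsCutoff θ) (x : ℝ) :
    HasDerivAt (tailIntegral θ) (-θ x) x :=
  intervalIntegral.integral_hasDerivAt_left (hθ.continuous.intervalIntegrable _ _)
    (hθ.continuous.stronglyMeasurableAtFilter _ _) hθ.continuous.continuousAt

lemma continuous_tailIntegral (hθ : IsCutoff θ) : Continuous (tailIntegral θ) :=
  continuous_iff_continuousAt.2 fun x => (hθ.hasDerivAt_tailIntegral x).continuousAt

lemma exists_forall_ge_eq_zero (hθ : IsCutoff θ) :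
    ∃ a < 1, ∀ x ≥ a, θ x = 0 ∧ deriv θ x = 0 ∧ tailIntegral θ x = 0 := by
  obtain ⟨a, ha, h0⟩ := hθ.2
  refine ⟨(a + 1) / 2, by linarith, fun x hx => ⟨h0 x (by linarith), ?_, ?_⟩⟩
  · have h : θ =ᶠ[𝓝 x] fun _ => 0 :=
      mem_of_superset (Ioi_mem_nhds (by linarith : a < x)) fun y hy => h0 y (le_of_lt hy)
    rw [h.deriv_eq, deriv_const]
  · refine intervalIntegral.integral_zero_ae (.of_forall fun s hs => h0 s ?_)
    have : min x 1 ≤ s := hs.1.le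
    rcases min_cases x 1 with h | h <;> linarith

end IsCutoff

/-- The weight `e^{2h}`, where `h` is the regular part of a Green function. -/
def expWt (h : ℂ → ℝ) (w : ℂ) : ℝ := Real.exp (2 * h w)

/-- The function `e^{2G}` for the Green function `G = log |w - t| + h` with pole `t`. -/
def greenSq (t : ℂ) (h : ℂ → ℝ) (w : ℂ) : ℝ := ‖w - t‖ ^ 2 * expWt h w

/-- The holomorphic function `2 (w - t) ∂G/∂w = 1 + (w - t) P`, where `P = 2 ∂h/∂w`. -/
def greenNum (t : ℂ) (P : ℂ → ℂ) (w : ℂ) : ℂ := 1 + (w - t) * P w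

/-- `G = log |w - t| + h` is the Green function of the domain `D` with pole `t`, in the form used by
the integral identities: `h` is harmonic with `P = 2 ∂h/∂w`, and `e^{2G} < 1` exhausts `D`. -/
structure IsGreenPotential (D : Set ℂ) (t : ℂ) (h : ℂ → ℝ) (P : ℂ → ℂ) : Prop where
  isOpen : IsOpen D
  isConnected : IsConnected D
  isBounded : Bornology.IsBounded D
  pole_mem : t ∈ D
  differentiableOn : DifferentiableOn ℂ P D
  hasWirtingerDerivAt : ∀ w ∈ D,
    HasWirtingerDerivAt (fun x => (h x : ℂ)) (P w / 2) (conj (P w) / 2) w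
  greenSq_lt_one : ∀ w ∈ D, greenSq t h w < 1
  isCompact_greenSq_le : ∀ a < 1, IsCompact {w | w ∈ D ∧ greenSq t h w ≤ a}

lemma expWt_pos (h : ℂ → ℝ) (w : ℂ) : 0 < expWt h w := Real.exp_pos _

lemma greenSq_self (t : ℂ) (h : ℂ → ℝ) : greenSq t h t = 0 := by simp [greenSq]

lemma ofReal_greenSq (t : ℂ) (h : ℂ → ℝ) (w : ℂ) :
    (greenSq t h w : ℂ) = (w - t) * conj (w - t) * expWt h w := by
  rw [greenSq, mul_conj']
  push_cast
  rfl

lemma HasWirtingerDerivAt.of_differentiableOn {D : Set ℂ} (hD : IsOpen D) {f : ℂ → ℂ}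
    (hf : DifferentiableOn ℂ f D) {w : ℂ} (hw : w ∈ D) :
    HasWirtingerDerivAt f (deriv f w) 0 w :=
  .of_hasDerivAt (hf.differentiableAt (hD.mem_nhds hw)).hasDerivAt

lemma hasWirtingerDerivAt_sub_const (t w : ℂ) : HasWirtingerDerivAt (fun x => x - t) 1 0 w :=
  .of_hasDerivAt ((hasDerivAt_id w).sub_const t)

namespace IsGreenPotential

variable {D : Set ℂ} {t : ℂ} {h : ℂ → ℝ} {P : ℂ → ℂ}

lemma hasWirtingerDerivAt_expWt (S : IsGreenPotential D t h P) {w : ℂ} (hw : w ∈ D) :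
    HasWirtingerDerivAt (fun x => (expWt h x : ℂ)) (P w * expWt h w)
      (conj (P w) * expWt h w) w := by
  have hexp := ((hasDerivAt_id (h w)).const_mul 2).exp
  refine ((S.hasWirtingerDerivAt w hw).ofReal_comp_hasDerivAt hexp).congr_deriv ?_ ?_ <;>
  · simp only [expWt, id]
    push_cast
    ring

lemma hasWirtingerDerivAt_greenSq (S : IsGreenPotential D t h P) {w : ℂ} (hw : w ∈ D) :
    HasWirtingerDerivAt (fun x => (greenSq t h x : ℂ)) (conj (w - t) * greenNum t P w * expWt h w)
      ((w - t) * conj (greenNum t P w) * expWt h w) w := by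
  have hsub := hasWirtingerDerivAt_sub_const t w
  simp only [ofReal_greenSq]
  refine ((hsub.mul hsub.conj_comp).mul (S.hasWirtingerDerivAt_expWt hw)).congr_deriv ?_ ?_ <;>
  · simp only [greenNum, map_sub, map_add, map_mul, map_one, map_zero]
    ring

lemma hasWirtingerDerivAt_comp_greenSq (S : IsGreenPotential D t h P) {φ : ℝ → ℝ} {φ' : ℝ} {w : ℂ}
    (hφ : HasDerivAt φ φ' (greenSq t h w)) (hw : w ∈ D) :
    HasWirtingerDerivAt (fun x => (φ (greenSq t h x) : ℂ))
      (φ' * (conj (w - t) * greenNum t P w * expWt h w))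
      (φ' * ((w - t) * conj (greenNum t P w) * expWt h w)) w :=
  (S.hasWirtingerDerivAt_greenSq hw).ofReal_comp_hasDerivAt hφ

lemma differentiableOn_greenNum (S : IsGreenPotential D t h P) :
    DifferentiableOn ℂ (greenNum t P) D :=
  ((differentiableOn_id.sub_const t).mul S.differentiableOn).const_add 1

lemma hasWirtingerDerivAt_greenNum (S : IsGreenPotential D t h P) {w : ℂ} (hw : w ∈ D) :
    HasWirtingerDerivAt (greenNum t P) (P w + (w - t) * deriv P w) 0 w :=
  ((HasWirtingerDerivAt.const 1 w).add ((hasWirtingerDerivAt_sub_const t w).mul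
    (.of_differentiableOn S.isOpen S.differentiableOn hw))).congr_deriv (by ring) (by ring)

lemma continuousOn_expWt (S : IsGreenPotential D t h P) : ContinuousOn (expWt h) D := fun _ hw =>
  (continuous_re.continuousAt.comp
    (S.hasWirtingerDerivAt_expWt hw).continuousAt).continuousWithinAt

lemma continuousOn_greenSq (S : IsGreenPotential D t h P) : ContinuousOn (greenSq t h) D :=
  ((continuous_sub_right t).norm.pow 2).continuousOn.mul S.continuousOn_expWt

lemma vanishesOffCompact_comp_greenSq (S : IsGreenPotential D t h P) {φ : ℝ → ℝ} {a : ℝ}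
    (ha : a < 1) (hφ : ∀ x ≥ a, φ x = 0) :
    VanishesOffCompact D fun w => (φ (greenSq t h w) : ℂ) :=
  ⟨{w | w ∈ D ∧ greenSq t h w ≤ a}, fun _ hw => hw.1, S.isCompact_greenSq_le a ha,
    fun _ hw => ofReal_eq_zero.2 <| hφ _ <| le_of_not_ge fun hle => hw.2 ⟨hw.1, hle⟩⟩

section Cutoff

variable {θ : ℝ → ℝ}

lemma vanishesOffCompact_cutoff (S : IsGreenPotential D t h P) (hθ : IsCutoff θ) :
    VanishesOffCompact D (fun w => (θ (greenSq t h w) : ℂ)) ∧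
    VanishesOffCompact D (fun w => ((deriv θ (greenSq t h w) : ℝ) : ℂ)) ∧
    VanishesOffCompact D (fun w => (tailIntegral θ (greenSq t h w) : ℂ)) := by
  obtain ⟨a, ha, h0⟩ := hθ.exists_forall_ge_eq_zero
  exact ⟨S.vanishesOffCompact_comp_greenSq ha fun x hx => (h0 x hx).1,
    S.vanishesOffCompact_comp_greenSq ha fun x hx => (h0 x hx).2.1,
    S.vanishesOffCompact_comp_greenSq ha fun x hx => (h0 x hx).2.2⟩

lemma differentiableOn_deriv_add_mul (S : IsGreenPotential D t h P) {c : ℂ → ℂ}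
    (hc : DifferentiableOn ℂ c D) : DifferentiableOn ℂ (fun w => deriv c w + P w * c w) D :=
  (hc.deriv S.isOpen).add (S.differentiableOn.mul hc)

lemma ofReal_integral_tailIntegral_mul (S : IsGreenPotential D t h P) (hθ : IsCutoff θ)
    {c : ℂ → ℂ} (hc : DifferentiableOn ℂ c D) :
    ((∫ w in D, tailIntegral θ (greenSq t h w) *
        (expWt h w * ‖deriv c w + P w * c w‖ ^ 2) : ℝ) : ℂ)
      = ∫ w in D, θ (greenSq t h w) * ((w - t) * conj (greenNum t P w) * expWt h w ^ 2 *
          (conj (c w) * (deriv c w + P w * c w))) := by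
  have hq := S.differentiableOn_deriv_add_mul hc
  set q : ℂ → ℂ := fun w => deriv c w + P w * c w
  have hcθ := hθ.continuous
  have hcΨ := hθ.continuous_tailIntegral
  have hcu := S.continuousOn_greenSq
  have hcv := S.continuousOn_expWt
  have hcc := hc.continuousOn
  have hcq := hq.continuousOn
  have hck := S.differentiableOn_greenNum.continuousOn
  have hcP := S.differentiableOn.continuousOn
  have hcq' := (hq.deriv S.isOpen).continuousOn
  obtain ⟨hθ0, -, hΨ0⟩ := S.vanishesOffCompact_cutoff hθ
  have hW (w) (hw : w ∈ D) :=
    (S.hasWirtingerDerivAt_comp_greenSq (hθ.hasDerivAt_tailIntegral _) hw).mul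
      ((S.hasWirtingerDerivAt_expWt hw).mul
        ((HasWirtingerDerivAt.of_differentiableOn S.isOpen hc hw).conj_comp.mul
          (.of_differentiableOn S.isOpen hq hw)))
  have hzero := (setIntegral_wirtingerDeriv_eq_zero S.isOpen
    (b := fun w => (tailIntegral θ (greenSq t h w) : ℂ) * (expWt h w * ‖q w‖ ^ 2) -
      θ (greenSq t h w) * ((w - t) * conj (greenNum t P w) * expWt h w ^ 2 * (conj (c w) * q w)))
    (fun w hw => (hW w hw).congr_deriv rfl ?_) (by fun_prop) (by fun_prop) (hΨ0.mul_right _)).2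
  · rw [integral_sub ((hΨ0.mul_right _).integrableOn S.isOpen (by fun_prop))
      ((hθ0.mul_right _).integrableOn S.isOpen (by fun_prop)), sub_eq_zero] at hzero
    rw [← hzero, ← integral_complex_ofReal]
    push_cast
    rfl
  · rw [← mul_conj']
    simp only [q, map_add, map_mul, ofReal_neg]
    ring

lemma integral_cutoff_mul_eq (S : IsGreenPotential D t h P) (hθ : IsCutoff θ)
    {c : ℂ → ℂ} (hc : DifferentiableOn ℂ c D) :
    ∫ w in D, θ (greenSq t h w) * ((w - t) * conj (greenNum t P w) * expWt h w ^ 2 *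
        (conj (c w) * (deriv c w + P w * c w))) =
      ((∫ w in D, -deriv θ (greenSq t h w) *
          (greenSq t h w * ‖c w‖ ^ 2 * ‖greenNum t P w‖ ^ 2 * expWt h w ^ 2)) -
        ∫ w in D, θ (greenSq t h w) *
          (‖c w‖ ^ 2 * ‖greenNum t P w‖ ^ 2 * expWt h w ^ 2) : ℝ) := by
  have hcθ := hθ.continuous
  have hcθ' := hθ.continuous_deriv
  have hcv := S.continuousOn_expWt
  have hcu := S.continuousOn_greenSq
  have hcc := hc.continuousOn
  have hcc' := (hc.deriv S.isOpen).continuousOn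
  have hck := S.differentiableOn_greenNum.continuousOn
  have hcP := S.differentiableOn.continuousOn
  have hcP' := (S.differentiableOn.deriv S.isOpen).continuousOn
  obtain ⟨hθ0, hθ'0, -⟩ := S.vanishesOffCompact_cutoff hθ
  have hWc (w) (hw : w ∈ D) := HasWirtingerDerivAt.of_differentiableOn S.isOpen hc hw
  have hW (w) (hw : w ∈ D) := (S.hasWirtingerDerivAt_comp_greenSq (hθ.hasDerivAt _) hw).mul
    (((hWc w hw).mul ((hWc w hw).conj_comp.mul (S.hasWirtingerDerivAt_expWt hw))).mul
      ((hasWirtingerDerivAt_sub_const t w).mul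
        ((S.hasWirtingerDerivAt_greenNum hw).conj_comp.mul (S.hasWirtingerDerivAt_expWt hw))))
  have hzero := (setIntegral_wirtingerDeriv_eq_zero S.isOpen
    (a := fun w => (θ (greenSq t h w) : ℂ) * ((w - t) * conj (greenNum t P w) * expWt h w ^ 2 *
        (conj (c w) * (deriv c w + P w * c w))) -
      (((-deriv θ (greenSq t h w) : ℝ) : ℂ) *
          (greenSq t h w * ‖c w‖ ^ 2 * ‖greenNum t P w‖ ^ 2 * expWt h w ^ 2) -
        θ (greenSq t h w) * (‖c w‖ ^ 2 * ‖greenNum t P w‖ ^ 2 * expWt h w ^ 2)))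
    (fun w hw => (hW w hw).congr_deriv ?_ rfl) (by fun_prop) (by fun_prop) (hθ0.mul_right _)).1
  · have hθ'i := ((hθ'0.of_imp fun w _ hw => by rw [ofReal_neg, hw, neg_zero]).mul_right
      fun w => (greenSq t h w * ‖c w‖ ^ 2 * ‖greenNum t P w‖ ^ 2 * expWt h w ^ 2 : ℂ)).integrableOn
      (F := fun w => ((-deriv θ (greenSq t h w) : ℝ) : ℂ) *
        (greenSq t h w * ‖c w‖ ^ 2 * ‖greenNum t P w‖ ^ 2 * expWt h w ^ 2)) S.isOpen (by fun_prop)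
    have hθi := (hθ0.mul_right fun w =>
      (‖c w‖ ^ 2 * ‖greenNum t P w‖ ^ 2 * expWt h w ^ 2 : ℂ)).integrableOn S.isOpen (by fun_prop)
    rw [integral_sub ((hθ0.mul_right _).integrableOn S.isOpen (by fun_prop))
      (by exact hθ'i.sub hθi),
      integral_sub hθ'i hθi, sub_eq_zero] at hzero
    rw [hzero, ofReal_sub, ← integral_complex_ofReal, ← integral_complex_ofReal]
    push_cast
    rfl
  · rw [← mul_conj', ← mul_conj', ofReal_greenSq]
    simp only [greenNum, map_add, map_mul, map_zero, map_one, ofReal_neg]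
    ring

theorem integral_tailIntegral_add_integral_cutoff (S : IsGreenPotential D t h P) (hθ : IsCutoff θ)
    {c : ℂ → ℂ} (hc : DifferentiableOn ℂ c D) :
    (∫ w in D, tailIntegral θ (greenSq t h w) * (expWt h w * ‖deriv c w + P w * c w‖ ^ 2)) +
      ∫ w in D, θ (greenSq t h w) * (‖c w‖ ^ 2 * ‖greenNum t P w‖ ^ 2 * expWt h w ^ 2) =
    ∫ w in D, -deriv θ (greenSq t h w) *
      (greenSq t h w * ‖c w‖ ^ 2 * ‖greenNum t P w‖ ^ 2 * expWt h w ^ 2) :=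
  eq_sub_iff_add_eq.1 <| ofReal_injective <|
    (S.ofReal_integral_tailIntegral_mul hθ hc).trans (S.integral_cutoff_mul_eq hθ hc)

lemma integral_mul_conj_greenNum (S : IsGreenPotential D t h P) (hθ : IsCutoff θ) {f : ℂ → ℂ}
    (hf : DifferentiableOn ℂ f D) :
    ∫ w in D, θ (greenSq t h w) * (f w * (conj (greenNum t P w) * expWt h w)) =
      Real.pi * (tailIntegral θ 0 * f t) := by
  have hcθ := hθ.continuous
  have hcΨ := hθ.continuous_tailIntegral
  have hcu := S.continuousOn_greenSq
  have hcv := S.continuousOn_expWt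
  have hcf := hf.continuousOn
  have hcf' := (hf.deriv S.isOpen).continuousOn
  have hck := S.differentiableOn_greenNum.continuousOn
  obtain ⟨-, -, hΨ0⟩ := S.vanishesOffCompact_cutoff hθ
  have hW (w) (hw : w ∈ D) :=
    (S.hasWirtingerDerivAt_comp_greenSq (hθ.hasDerivAt_tailIntegral _) hw).mul
      (.of_differentiableOn S.isOpen hf hw)
  have hpompeiu := setIntegral_eq_neg_pi_mul_of_hasWirtingerDerivAt S.isOpen S.pole_mem
    (R := fun w => -(θ (greenSq t h w) * (f w * (conj (greenNum t P w) * expWt h w))))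
    (fun w hw => (hW w hw).congr_deriv rfl (by push_cast; ring)) (by fun_prop) (by fun_prop)
    (hΨ0.mul_right _)
  rwa [integral_neg, neg_inj, greenSq_self] at hpompeiu

lemma integral_deriv_cutoff_div_sub (S : IsGreenPotential D t h P) (hθ : IsCutoff θ) {p : ℂ}
    (hp : ∀ᶠ w in 𝓝 p, w ∈ D → deriv θ (greenSq t h w) = 0) :
    ∫ w in D, -deriv θ (greenSq t h w) *
        ((w - t) * conj (greenNum t P w) * expWt h w) / (w - p) =
      D.indicator (fun p => (Real.pi * θ (greenSq t h p) : ℂ)) p := by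
  have hcθ' := hθ.continuous_deriv
  have hcu := S.continuousOn_greenSq
  have hcv := S.continuousOn_expWt
  have hck := S.differentiableOn_greenNum.continuousOn
  set R : ℂ → ℂ := fun w => -deriv θ (greenSq t h w) *
    ((w - t) * conj (greenNum t P w) * expWt h w) / (w - p) with hR
  have hcR : ContinuousOn R D := fun w hw => by
    refine ContinuousAt.continuousWithinAt ?_
    rcases eq_or_ne w p with rfl | hwp
    · refine (continuousAt_const (y := (0 : ℂ))).congr ?_
      filter_upwards [hp, S.isOpen.mem_nhds hw] with x hx hxD
      simp [hR, hx hxD]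
    · refine ContinuousAt.div ?_ (by fun_prop) (sub_ne_zero.2 hwp)
      exact ContinuousOn.continuousAt (s := D) (by fun_prop) (S.isOpen.mem_nhds hw)
  have hW (w) (hw : w ∈ D) : HasWirtingerDerivAt (fun x => -(θ (greenSq t h x) : ℂ))
      (-deriv θ (greenSq t h w) * (conj (w - t) * greenNum t P w * expWt h w))
      ((w - p) * R w) w := by
    have h := S.hasWirtingerDerivAt_comp_greenSq (hθ.hasDerivAt (greenSq t h w)).neg hw
    simp only [Pi.neg_apply, ofReal_neg] at h
    refine h.congr_deriv rfl ?_
    rcases eq_or_ne w p with rfl | hwp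
    · simp [hp.self_of_nhds hw]
    · have := sub_ne_zero.2 hwp
      simp only [hR]
      field_simp
  have hca : ContinuousOn (fun w => (-deriv θ (greenSq t h w) *
      (conj (w - t) * greenNum t P w * expWt h w) : ℂ)) D := by fun_prop
  have hθ0 : VanishesOffCompact D fun w => -(θ (greenSq t h w) : ℂ) :=
    (S.vanishesOffCompact_cutoff hθ).1.of_imp fun w _ hw => by rw [hw, neg_zero]
  by_cases hpD : p ∈ D
  · rw [indicator_of_mem hpD,
      setIntegral_eq_neg_pi_mul_of_hasWirtingerDerivAt S.isOpen hpD hW hca hcR hθ0]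
    ring
  · rw [indicator_of_notMem hpD,
      setIntegral_eq_zero_of_hasWirtingerDerivAt S.isOpen hpD hW hca hcR hθ0]

end Cutoff

end IsGreenPotential

/-! ### Arclength of parametrized curves -/

section Arclength

section Metric

variable {E : Type*} [MetricSpace E] [MeasurableSpace E] [BorelSpace E] {σ : ℝ → E}
  {K : NNReal} {A : Set ℝ}

lemma hausdorffMeasure_image_le_mul_volume (h : LipschitzOnWith K σ A) :
    Measure.hausdorffMeasure 1 (σ '' A) ≤ K * volume A := by
  simpa [hausdorffMeasure_real] using h.hausdorffMeasure_image_le (d := 1) zero_le_one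

lemma volume_le_mul_hausdorffMeasure_image (h : AntilipschitzWith K fun a : A => σ a) :
    volume A ≤ K * Measure.hausdorffMeasure 1 (σ '' A) := by
  have hA := (isometry_subtype_coe (s := A)).hausdorffMeasure_image (.inl zero_le_one) univ
  rw [image_univ, Subtype.range_coe, hausdorffMeasure_real] at hA
  have himage : (fun a : A => σ a) '' univ = σ '' A := by rw [image_univ, image_eq_range]
  simpa [hA, himage] using h.le_hausdorffMeasure_image zero_le_one univ

variable {l : E → ℝ} {J : Set ℝ}

lemma map_hausdorffMeasure_restrict_image_apply (hl : Measurable l) (hlσ : LeftInvOn l σ J)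
    {A : Set ℝ} (hA : MeasurableSet A) :
    Measure.map l ((Measure.hausdorffMeasure 1).restrict (σ '' J)) A =
      Measure.hausdorffMeasure 1 (σ '' (A ∩ J)) := by
  rw [Measure.map_apply hl hA, Measure.restrict_apply (hl hA), hlσ.image_inter']

lemma map_hausdorffMeasure_restrict_image_le (hl : Measurable l) (hlσ : LeftInvOn l σ J)
    {L : NNReal} (hL : LipschitzOnWith L σ J) :
    Measure.map l ((Measure.hausdorffMeasure 1).restrict (σ '' J)) ≤
      (L : ENNReal) • volume.restrict J := by
  refine Measure.le_iff.2 fun A hA => ?_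
  rw [map_hausdorffMeasure_restrict_image_apply hl hlσ hA, Measure.smul_apply,
    Measure.restrict_apply hA]
  exact hausdorffMeasure_image_le_mul_volume (hL.mono inter_subset_right)

end Metric

lemma eventually_abs_norm_sub_sub_le {E : Type*} [NormedAddCommGroup E] [NormedSpace ℝ E]
    {σ : ℝ → E} {v : E} {y η : ℝ} (hσ : HasStrictDerivAt σ v y)
    (hη : 0 < η) : ∀ᶠ r in 𝓝[>] (0 : ℝ), ∀ a ∈ closedBall y r, ∀ b ∈ closedBall y r,
      |‖σ a - σ b‖ - ‖v‖ * dist a b| ≤ η * dist a b := by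
  have h := hσ.hasStrictFDerivAt.isLittleO.def hη
  rw [nhds_prod_eq] at h
  obtain ⟨N, hN, hNsub⟩ := mem_prod_self_iff.1 h
  obtain ⟨r₀, hr₀, hball⟩ := Metric.nhds_basis_closedBall.mem_iff.1 hN
  filter_upwards [Ioc_mem_nhdsGT hr₀] with r hr a ha b hb
  have hsub : closedBall y r ⊆ N := (closedBall_subset_closedBall hr.2).trans hball
  have hab : ‖σ a - σ b - (a - b) • v‖ ≤ η * ‖a - b‖ := by
    simpa using hNsub (mk_mem_prod (hsub ha) (hsub hb))
  have hsmul : ‖v‖ * dist a b = ‖(a - b) • v‖ := by rw [norm_smul, dist_eq_norm, mul_comm]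
  rw [hsmul, dist_eq_norm]
  exact (abs_norm_sub_norm_le _ _).trans hab

variable {E : Type*} [NormedAddCommGroup E] [NormedSpace ℝ E] [MeasurableSpace E] [BorelSpace E]
  {σ : ℝ → E}

lemma eventually_hausdorffMeasure_image_closedBall_le {v : E} {y η : ℝ}
    (hσ : HasStrictDerivAt σ v y) (hη : 0 < η) : ∀ᶠ r in 𝓝[>] (0 : ℝ),
      Measure.hausdorffMeasure 1 (σ '' closedBall y r) ≤
        ENNReal.ofReal (‖v‖ + η) * volume (closedBall y r) := by
  filter_upwards [eventually_abs_norm_sub_sub_le hσ hη] with r hr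
  refine hausdorffMeasure_image_le_mul_volume
    (LipschitzOnWith.of_dist_le_mul fun a ha b hb => ?_)
  rw [dist_eq_norm (σ a), Real.coe_toNNReal _ (by positivity)]
  linarith [(abs_le.1 (hr a ha b hb)).2]

lemma eventually_le_hausdorffMeasure_image_closedBall {v : E} {y η : ℝ}
    (hσ : HasStrictDerivAt σ v y) (hη : 0 < η) : ∀ᶠ r in 𝓝[>] (0 : ℝ),
      ENNReal.ofReal (‖v‖ - η) * volume (closedBall y r) ≤
        Measure.hausdorffMeasure 1 (σ '' closedBall y r) := by
  rcases le_or_gt (‖v‖ - η) 0 with hle | hpos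
  · simp [ENNReal.ofReal_of_nonpos hle]
  filter_upwards [eventually_abs_norm_sub_sub_le hσ hη] with r hr
  have hanti : AntilipschitzWith (‖v‖ - η).toNNReal⁻¹ fun a : closedBall y r => σ a := by
    refine AntilipschitzWith.of_le_mul_dist fun a b => ?_
    rw [NNReal.coe_inv, Real.coe_toNNReal _ hpos.le, ← div_eq_inv_mul, le_div_iff₀ hpos,
      dist_eq_norm (σ a), Subtype.dist_eq]
    linarith [(abs_le.1 (hr a a.2 b b.2)).1]
  have hle := volume_le_mul_hausdorffMeasure_image hanti
  rw [ENNReal.coe_inv (Real.toNNReal_pos.2 hpos).ne', ← ENNReal.div_eq_inv_mul] at hle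
  exact ENNReal.mul_le_of_le_div' hle

lemma tendsto_hausdorffMeasure_image_closedBall_div {v : E} {y : ℝ} (hσ : HasStrictDerivAt σ v y) :
    Tendsto (fun r => Measure.hausdorffMeasure 1 (σ '' closedBall y r) / volume (closedBall y r))
      (𝓝[>] 0) (𝓝 (ENNReal.ofReal ‖v‖)) := by
  have h0 : Tendsto (fun η : ℝ => η) (𝓝[>] 0) (𝓝 0) := tendsto_id.mono_left nhdsWithin_le_nhds
  have hvol {r : ℝ} (hr : r ∈ Ioi (0 : ℝ)) :
      volume (closedBall y r) ≠ 0 ∧ volume (closedBall y r) ≠ ⊤ := by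
    rw [Real.volume_closedBall]
    exact ⟨(ENNReal.ofReal_pos.2 (mul_pos two_pos hr)).ne', ENNReal.ofReal_ne_top⟩
  refine tendsto_order.2 ⟨fun a ha => ?_, fun a ha => ?_⟩
  · have hlim : Tendsto (fun η => ENNReal.ofReal (‖v‖ - η)) (𝓝[>] 0) (𝓝 (ENNReal.ofReal ‖v‖)) := by
      simpa only [sub_zero] using ENNReal.tendsto_ofReal (tendsto_const_nhds.sub h0)
    obtain ⟨η, haη, hη⟩ := ((hlim.eventually (lt_mem_nhds ha)).and self_mem_nhdsWithin).exists
    filter_upwards [eventually_le_hausdorffMeasure_image_closedBall hσ hη,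
      self_mem_nhdsWithin] with r hr hr0
    exact haη.trans_le
      ((ENNReal.le_div_iff_mul_le (.inl (hvol hr0).1) (.inl (hvol hr0).2)).2 hr)
  · have hlim : Tendsto (fun η => ENNReal.ofReal (‖v‖ + η)) (𝓝[>] 0) (𝓝 (ENNReal.ofReal ‖v‖)) := by
      simpa only [add_zero] using ENNReal.tendsto_ofReal (tendsto_const_nhds.add h0)
    obtain ⟨η, haη, hη⟩ := ((hlim.eventually (gt_mem_nhds ha)).and self_mem_nhdsWithin).exists
    filter_upwards [eventually_hausdorffMeasure_image_closedBall_le hσ hη] with r hr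
    exact (ENNReal.div_le_of_le_mul hr).trans_lt haη

theorem map_hausdorffMeasure_restrict_image_eq_withDensity {σ' : ℝ → E} {l : E → ℝ}
    {J : Set ℝ} (hJ : IsOpen J)
    (hl : Measurable l) (hlσ : LeftInvOn l σ J) (hσ : ∀ y ∈ J, HasStrictDerivAt σ (σ' y) y)
    {L : NNReal} (hL : LipschitzOnWith L σ J) :
    Measure.map l ((Measure.hausdorffMeasure 1).restrict (σ '' J)) =
      (volume.restrict J).withDensity fun y => ENNReal.ofReal ‖σ' y‖ := by
  set ρ := Measure.map l ((Measure.hausdorffMeasure 1).restrict (σ '' J)) with hρ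
  have hle : ρ ≤ (L : ENNReal) • volume.restrict J :=
    map_hausdorffMeasure_restrict_image_le hl hlσ hL
  have hac : ρ ≪ volume.restrict J :=
    (Measure.absolutelyContinuous_of_le hle).trans Measure.smul_absolutelyContinuous
  have : IsLocallyFiniteMeasure ρ := by
    refine ⟨fun x => ⟨closedBall x 1, closedBall_mem_nhds x one_pos, (hle _).trans_lt ?_⟩⟩
    exact ENNReal.mul_lt_top ENNReal.coe_lt_top (isCompact_closedBall x 1).measure_lt_top
  rw [← Measure.withDensity_rnDeriv_eq ρ (volume.restrict J) hac]
  refine withDensity_congr_ae ?_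
  filter_upwards [Besicovitch.ae_tendsto_rnDeriv ρ (volume.restrict J),
    ae_restrict_mem hJ.measurableSet] with y hy hyJ
  refine tendsto_nhds_unique hy
    ((tendsto_hausdorffMeasure_image_closedBall_div (hσ y hyJ)).congr' ?_)
  obtain ⟨r₀, hr₀, hball⟩ := Metric.nhds_basis_closedBall.mem_iff.1 (hJ.mem_nhds hyJ)
  filter_upwards [Ioc_mem_nhdsGT hr₀] with r hr
  rw [hρ, map_hausdorffMeasure_restrict_image_apply hl hlσ measurableSet_closedBall,
    Measure.restrict_apply measurableSet_closedBall,
    inter_eq_left.2 ((closedBall_subset_closedBall hr.2).trans hball)]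

end Arclength

/-! ### Boundary charts -/

/-- `Γ` is a `C¹` defining function, with gradient `g`, of the bounded open set `D` near its
boundary: on the neighbourhood `U` of `∂D`, `Γ` vanishes on `∂D` and is negative in `D`. -/
structure IsC1DefiningFunction (D U : Set ℂ) (Γ : ℂ → ℝ) (g : ℂ → ℂ) : Prop where
  isOpen : IsOpen D
  isBounded : Bornology.IsBounded D
  isOpen_nhd : IsOpen U
  frontier_subset : frontier D ⊆ U
  continuousOn_grad : ContinuousOn g U
  hasStrictFDerivAt : ∀ w ∈ U, HasStrictFDerivAt Γ (innerSL ℝ (g w)) w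
  eq_zero : ∀ w ∈ frontier D, Γ w = 0
  lt_zero : ∀ w ∈ D, w ∈ U → Γ w < 0
  grad_ne_zero : ∀ w ∈ frontier D, g w ≠ 0

/-- The map with real part `Γ` and imaginary part the coordinate orthogonal to `e`; it straightens
`Γ = 0` near points where the gradient of `Γ` is close to `e`. -/
def flatten (Γ : ℂ → ℝ) (e w : ℂ) : ℂ := ⟨Γ w, (conj e * w).im⟩

/-- The derivative of `flatten Γ e` at a point where `Γ` has gradient `g`. -/
def flattenDeriv (g e : ℂ) : ℂ →L[ℝ] ℂ :=
  ofRealCLM.comp (innerSL ℝ g) + I • ofRealCLM.comp (innerSL ℝ (I * e))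

lemma flattenDeriv_apply (g e x : ℂ) :
    flattenDeriv g e x = ⟨(conj g * x).re, (conj e * x).im⟩ := by
  apply Complex.ext
  · simp [flattenDeriv, Complex.inner, mul_comm]
  · simp [flattenDeriv, Complex.inner]
    ring

lemma flattenDeriv_self (e : ℂ) : flattenDeriv e e = ContinuousLinearMap.mul ℝ ℂ (conj e) := by
  ext x
  rw [flattenDeriv_apply]
  rfl

lemma det_flattenDeriv (g e : ℂ) : (flattenDeriv g e).det = (conj e * g).re := by
  rw [ContinuousLinearMap.det, ← LinearMap.det_toMatrix Complex.basisOneI, Matrix.det_fin_two]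
  simp [LinearMap.toMatrix_apply, flattenDeriv_apply]
  ring

lemma flattenDeriv_I_mul (g e : ℂ) : flattenDeriv g e (I * g) = I * ((conj e * g).re : ℂ) := by
  rw [flattenDeriv_apply]
  apply Complex.ext <;> simp
  ring

lemma hasStrictFDerivAt_flatten {Γ : ℂ → ℝ} {g w : ℂ} (h : HasStrictFDerivAt Γ (innerSL ℝ g) w)
    (e : ℂ) : HasStrictFDerivAt (flatten Γ e) (flattenDeriv g e) w := by
  have hre := ofRealCLM.hasStrictFDerivAt.comp w h
  have him := (ofRealCLM.hasStrictFDerivAt.comp w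
    (innerSL ℝ (I * e)).hasStrictFDerivAt).const_smul I
  refine (hre.add him).congr_of_eventuallyEq (.of_forall fun z => ?_)
  apply Complex.ext
  · simp [flatten]
  · simp [flatten, Complex.inner]
    ring

/-- A chart flattening the boundary: a restriction of `flatten Γ dir` which is a homeomorphism onto
the box `{|re| < radius, |im - base| < radius}`, carries `D` to `{re < 0}` and `∂D` to `{re = 0}`,
and is close in `C¹` to multiplication by `conj dir`. -/
structure BoundaryChart (D U : Set ℂ) (Γ : ℂ → ℝ) (g : ℂ → ℂ) where
  isDefining : IsC1DefiningFunction D U Γ g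
  map : OpenPartialHomeomorph ℂ ℂ
  dir : ℂ
  base : ℝ
  radius : ℝ
  radius_pos : 0 < radius
  dir_ne_zero : dir ≠ 0
  coe_map : ⇑map = flatten Γ dir
  source_subset : map.source ⊆ U
  target_eq : map.target = ball 0 radius ×ℂ ball base radius
  norm_grad_sub_le : ∀ w ∈ map.source, ‖g w - dir‖ ≤ ‖dir‖ / 4
  mem_iff : ∀ w ∈ map.source, (w ∈ D ↔ Γ w < 0)
  mem_frontier_iff : ∀ w ∈ map.source, (w ∈ frontier D ↔ Γ w = 0)
  norm_map_sub_sub_le : ∀ a ∈ map.source, ∀ b ∈ map.source,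
    ‖map a - map b - conj dir * (a - b)‖ ≤ ‖dir‖ / 4 * ‖a - b‖

lemma convex_reProdIm {s t : Set ℝ} (hs : Convex ℝ s) (ht : Convex ℝ t) : Convex ℝ (s ×ℂ t) :=
  (hs.linear_preimage reLm).inter (ht.linear_preimage imLm)

lemma inter_frontier_nonempty_of_isPreconnected {X : Type*} [TopologicalSpace X] {Q D : Set X}
    (hQ : IsPreconnected Q) (hD : IsOpen D) (h1 : (Q ∩ D).Nonempty) (h2 : (Q ∩ Dᶜ).Nonempty) :
    (Q ∩ frontier D).Nonempty := by
  by_contra! hempty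
  have hclosure : ∀ w ∈ Q, w ∉ D → w ∉ closure D := fun w hw hwD hwc => by
    have : w ∈ Q ∩ frontier D := ⟨hw, hD.frontier_eq ▸ ⟨hwc, hwD⟩⟩
    simp [hempty] at this
  obtain ⟨w, hwQ, hwD⟩ := h2
  obtain ⟨x, -, hxD, hxc⟩ := hQ D (closure D)ᶜ hD isClosed_closure.isOpen_compl
    (fun w hw => or_iff_not_imp_left.2 (hclosure w hw)) h1 ⟨w, hwQ, hclosure w hwQ hwD⟩
  exact hxc (subset_closure hxD)

lemma exists_openPartialHomeomorph_reProdIm {f : ℂ → ℂ} {f' : ℂ ≃L[ℝ] ℂ} {p : ℂ}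
    (hf : HasStrictFDerivAt f (f' : ℂ →L[ℝ] ℂ) p) {N : Set ℂ} (hN : N ∈ 𝓝 p) :
    ∃ (R : OpenPartialHomeomorph ℂ ℂ) (δ : ℝ), 0 < δ ∧ ⇑R = f ∧ p ∈ R.source ∧ R.source ⊆ N ∧
      R.target = ball (f p).re δ ×ℂ ball (f p).im δ := by
  obtain ⟨V, hVN, hV, hpV⟩ := _root_.mem_nhds_iff.1 hN
  set R₁ := (hf.toOpenPartialHomeomorph f).restrOpen V hV
  have hp₁ : p ∈ R₁.source := ⟨hf.mem_toOpenPartialHomeomorph_source, hpV⟩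
  obtain ⟨δ, hδ, hball⟩ := Metric.isOpen_iff.1 R₁.open_target _ (R₁.map_source hp₁)
  set Q := ball (f p).re (δ / 2) ×ℂ ball (f p).im (δ / 2)
  have hQ : Q ⊆ R₁.target := by
    rintro z ⟨hre, him⟩
    refine hball (mem_ball_iff_norm.2 ((norm_le_abs_re_add_abs_im _).trans_lt ?_))
    have hre' : |(z - f p).re| < δ / 2 := hre
    have him' : |(z - f p).im| < δ / 2 := him
    exact (add_lt_add hre' him').trans_eq (add_halves δ)
  set R := (R₁.symm.restrOpen Q (isOpen_ball.reProdIm isOpen_ball)).symm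
  have hsource : R.source = R₁.source ∩ f ⁻¹' Q := by simp [R, R₁]
  refine ⟨R, δ / 2, half_pos hδ, rfl, ?_, fun w hw => hVN ?_, inter_eq_right.2 hQ⟩
  · rw [hsource]
    exact ⟨hp₁, mem_ball_self (half_pos hδ), mem_ball_self (half_pos hδ)⟩
  · rw [hsource] at hw
    exact hw.1.2

namespace IsC1DefiningFunction

variable {D U : Set ℂ} {Γ : ℂ → ℝ} {g : ℂ → ℂ} {R : OpenPartialHomeomorph ℂ ℂ} {p w : ℂ}

/-- The part `{re < 0}` of the target is convex, so its preimage is connected; it meets `D` near `p`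
and avoids `∂D`, hence lies in `D`. -/
lemma mem_of_lt_zero (B : IsC1DefiningFunction D U Γ g) (hre : ∀ w, (R w).re = Γ w)
    (hRU : R.source ⊆ U) (hconv : Convex ℝ R.target) (hp : p ∈ frontier D) (hpR : p ∈ R.source)
    (hw : w ∈ R.source) (hneg : Γ w < 0) : w ∈ D := by
  have hQ : IsPreconnected (R.symm '' (R.target ∩ {z | z.re < 0})) :=
    (hconv.inter (convex_halfSpace_re_lt 0)).isPreconnected.image _
      (R.continuousOn_symm.mono inter_subset_left)
  have hmem : ∀ w ∈ R.source, Γ w < 0 → w ∈ R.symm '' (R.target ∩ {z | z.re < 0}) :=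
    fun w hw hneg => ⟨R w, ⟨R.map_source hw, (hre w).trans_lt hneg⟩, R.left_inv hw⟩
  by_contra hwD
  obtain ⟨a, haR, haD⟩ :=
    mem_closure_iff.1 (frontier_subset_closure hp) R.source R.open_source hpR
  obtain ⟨b, ⟨z, ⟨hzt, hz⟩, rfl⟩, hbF⟩ := inter_frontier_nonempty_of_isPreconnected hQ B.isOpen
    ⟨a, hmem a haR (B.lt_zero a haD (hRU haR)), haD⟩ ⟨w, hmem w hw hneg, hwD⟩
  have := B.eq_zero _ hbF
  rw [← hre, R.right_inv hzt] at this
  exact hz.ne this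

lemma mem_frontier_of_eq_zero (B : IsC1DefiningFunction D U Γ g) (hre : ∀ w, (R w).re = Γ w)
    (hRU : R.source ⊆ U) (hconv : Convex ℝ R.target) (hp : p ∈ frontier D) (hpR : p ∈ R.source)
    (hw : w ∈ R.source) (h0 : Γ w = 0) : w ∈ frontier D := by
  rw [B.isOpen.frontier_eq]
  refine ⟨?_, fun hwD => (B.lt_zero w hwD (hRU hw)).ne h0⟩
  have hshift : Tendsto (fun s : ℝ => R w - (s : ℂ)) (𝓝[>] 0) (𝓝 (R w)) := by
    have : Continuous fun s : ℝ => R w - (s : ℂ) := by fun_prop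
    simpa using (this.tendsto 0).mono_left nhdsWithin_le_nhds
  have hlim := (R.continuousAt_symm (R.map_source hw)).tendsto.comp hshift
  rw [R.left_inv hw] at hlim
  refine mem_closure_of_tendsto hlim ?_
  filter_upwards [hshift (R.open_target.mem_nhds (R.map_source hw)), self_mem_nhdsWithin]
    with s hs (hs0 : 0 < s)
  refine B.mem_of_lt_zero hre hRU hconv hp hpR (R.map_target hs) ?_
  rw [← hre, Function.comp_apply, R.right_inv hs, sub_re, hre, h0, ofReal_re]
  linarith

lemma eventually_norm_grad_sub_le (B : IsC1DefiningFunction D U Γ g) (hp : p ∈ frontier D) :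
    ∀ᶠ w in 𝓝 p, ‖g w - g p‖ ≤ ‖g p‖ / 4 := by
  have hcont := B.continuousOn_grad.continuousAt (B.isOpen_nhd.mem_nhds (B.frontier_subset hp))
  have hpos : 0 < ‖g p‖ / 4 := div_pos (norm_pos_iff.2 (B.grad_ne_zero p hp)) four_pos
  filter_upwards [hcont.eventually (closedBall_mem_nhds _ hpos)] with w hw
  simpa [dist_eq_norm] using hw

lemma exists_boundaryChart (B : IsC1DefiningFunction D U Γ g) (hp : p ∈ frontier D) :
    ∃ C : BoundaryChart D U Γ g, p ∈ C.map.source ∧ C.dir = g p := by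
  have hpU := B.frontier_subset hp
  have he := B.grad_ne_zero p hp
  have hdet : (flattenDeriv (g p) (g p)).det ≠ 0 := by
    rw [det_flattenDeriv, mul_comm, mul_conj, ofReal_re]
    exact normSq_eq_zero.not.2 he
  have hderiv := hasStrictFDerivAt_flatten (B.hasStrictFDerivAt p hpU) (g p)
  have hlittle := hderiv.isLittleO.def (div_pos (norm_pos_iff.2 he) four_pos)
  rw [nhds_prod_eq] at hlittle
  obtain ⟨N, hN, hNN⟩ := mem_prod_self_iff.1 hlittle
  obtain ⟨R, δ, hδ, hRcoe, hpR, hRN, htarget⟩ := exists_openPartialHomeomorph_reProdIm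
    (f' := (flattenDeriv (g p) (g p)).toContinuousLinearEquivOfDetNeZero hdet) hderiv
    (inter_mem (inter_mem hN (B.eventually_norm_grad_sub_le hp)) (B.isOpen_nhd.mem_nhds hpU))
  have hre : ∀ w, (R w).re = Γ w := fun w => by rw [hRcoe]; rfl
  have hRU : R.source ⊆ U := fun w hw => (hRN hw).2
  have hconv : Convex ℝ R.target := by
    rw [htarget]
    exact convex_reProdIm (convex_ball _ _) (convex_ball _ _)
  refine ⟨⟨B, R, g p, (flatten Γ (g p) p).im, δ, hδ, he, hRcoe, hRU, ?_, fun w hw => (hRN hw).1.2,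
    fun w hw => ⟨fun h => B.lt_zero w h (hRU hw), B.mem_of_lt_zero hre hRU hconv hp hpR hw⟩,
    fun w hw => ⟨B.eq_zero w, B.mem_frontier_of_eq_zero hre hRU hconv hp hpR hw⟩, ?_⟩, hpR, rfl⟩
  · rw [htarget, ← B.eq_zero p hp]
    rfl
  · intro a ha b hb
    have := hNN (mk_mem_prod (hRN ha).1.1 (hRN hb).1.1)
    simpa only [mem_ofPred_eq, flattenDeriv_self, ContinuousLinearMap.mul_apply', hRcoe] using this

end IsC1DefiningFunction

namespace BoundaryChart

variable {D U : Set ℂ} {Γ : ℂ → ℝ} {g : ℂ → ℂ} (C : BoundaryChart D U Γ g)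

/-- The parametrization of `∂D` inside the chart by the tangential coordinate. -/
def curve (y : ℝ) : ℂ := C.map.symm (I * y)

lemma norm_dir_pos : 0 < ‖C.dir‖ := norm_pos_iff.2 C.dir_ne_zero

lemma re_map (w : ℂ) : (C.map w).re = Γ w := by rw [C.coe_map]; rfl

lemma im_map (w : ℂ) : (C.map w).im = (conj C.dir * w).im := by rw [C.coe_map]; rfl

lemma le_norm_map_sub {a b : ℂ} (ha : a ∈ C.map.source) (hb : b ∈ C.map.source) :
    3 / 4 * ‖C.dir‖ * ‖a - b‖ ≤ ‖C.map a - C.map b‖ := by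
  have hclose := C.norm_map_sub_sub_le a ha b hb
  have htri := norm_sub_norm_le (conj C.dir * (a - b)) (C.map a - C.map b)
  rw [norm_sub_rev (conj C.dir * (a - b)), norm_mul, RCLike.norm_conj] at htri
  linarith

lemma le_re_conj_dir_mul_grad {w : ℂ} (hw : w ∈ C.map.source) :
    3 / 4 * ‖C.dir‖ ^ 2 ≤ (conj C.dir * g w).re := by
  have hself : (conj C.dir * C.dir).re = ‖C.dir‖ ^ 2 := by
    rw [mul_comm, mul_conj, normSq_eq_norm_sq, ofReal_re]
  have hsplit : (conj C.dir * g w).re = ‖C.dir‖ ^ 2 + (conj C.dir * (g w - C.dir)).re := by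
    rw [← hself, ← add_re, ← mul_add, add_sub_cancel]
  have herr : |(conj C.dir * (g w - C.dir)).re| ≤ ‖C.dir‖ * (‖C.dir‖ / 4) := by
    refine (abs_re_le_norm _).trans ?_
    rw [norm_mul, RCLike.norm_conj]
    gcongr
    exact C.norm_grad_sub_le w hw
  linarith [neg_le_of_abs_le herr]

lemma re_conj_dir_mul_grad_pos {w : ℂ} (hw : w ∈ C.map.source) : 0 < (conj C.dir * g w).re :=
  lt_of_lt_of_le (by have := C.norm_dir_pos; positivity) (C.le_re_conj_dir_mul_grad hw)

lemma norm_grad_le {w : ℂ} (hw : w ∈ C.map.source) : ‖g w‖ ≤ 5 / 4 * ‖C.dir‖ := by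
  linarith [C.norm_grad_sub_le w hw, norm_sub_norm_le (g w) C.dir]

lemma hasStrictFDerivAt_map {w : ℂ} (hw : w ∈ C.map.source) :
    HasStrictFDerivAt C.map (flattenDeriv (g w) C.dir) w := by
  rw [C.coe_map]
  exact hasStrictFDerivAt_flatten (C.isDefining.hasStrictFDerivAt w (C.source_subset hw)) C.dir

section Curve

variable {y : ℝ}

lemma I_mul_mem_target (hy : y ∈ ball C.base C.radius) : I * (y : ℂ) ∈ C.map.target := by
  rw [C.target_eq]
  exact ⟨by simpa using C.radius_pos, by simpa using hy⟩

lemma curve_mem_source (hy : y ∈ ball C.base C.radius) : C.curve y ∈ C.map.source :=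
  C.map.map_target (C.I_mul_mem_target hy)

lemma map_curve (hy : y ∈ ball C.base C.radius) : C.map (C.curve y) = I * y :=
  C.map.right_inv (C.I_mul_mem_target hy)

lemma im_conj_dir_mul_curve (hy : y ∈ ball C.base C.radius) :
    (conj C.dir * C.curve y).im = y := by
  rw [← C.im_map, C.map_curve hy]
  simp

lemma image_curve : C.curve '' ball C.base C.radius = frontier D ∩ C.map.source := by
  ext w
  constructor
  · rintro ⟨y, hy, rfl⟩
    refine ⟨(C.mem_frontier_iff _ (C.curve_mem_source hy)).2 ?_, C.curve_mem_source hy⟩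
    rw [← C.re_map, C.map_curve hy]
    simp
  · rintro ⟨hwF, hw⟩
    have hmap : I * ((C.map w).im : ℂ) = C.map w := by
      apply Complex.ext <;> simp [C.re_map, (C.mem_frontier_iff w hw).1 hwF]
    have htarget := C.map.map_source hw
    rw [C.target_eq] at htarget
    exact ⟨(C.map w).im, htarget.2, by rw [curve, hmap, C.map.left_inv hw]⟩

lemma lipschitzOnWith_curve :
    LipschitzOnWith (Real.toNNReal (4 / 3 * ‖C.dir‖⁻¹)) C.curve (ball C.base C.radius) := by
  refine LipschitzOnWith.of_dist_le_mul fun a ha b hb => ?_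
  have hlow := C.le_norm_map_sub (C.curve_mem_source ha) (C.curve_mem_source hb)
  rw [C.map_curve ha, C.map_curve hb, ← mul_sub, norm_mul, norm_I, one_mul, ← ofReal_sub,
    norm_real, ← dist_eq_norm a] at hlow
  have := C.norm_dir_pos
  rw [dist_eq_norm (C.curve a), Real.coe_toNNReal _ (by positivity)]
  field_simp
  linarith

lemma abs_sub_le_norm_curve_sub {a b : ℝ} (ha : a ∈ ball C.base C.radius)
    (hb : b ∈ ball C.base C.radius) : |a - b| ≤ ‖C.dir‖ * ‖C.curve a - C.curve b‖ := by
  rw [← C.im_conj_dir_mul_curve ha, ← C.im_conj_dir_mul_curve hb, ← sub_im, ← mul_sub,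
    ← RCLike.norm_conj C.dir, ← norm_mul, C.im_conj_dir_mul_curve ha, C.im_conj_dir_mul_curve hb]
  exact abs_im_le_norm _

lemma hasStrictDerivAt_curve (hy : y ∈ ball C.base C.radius) :
    HasStrictDerivAt C.curve
      (((conj C.dir * g (C.curve y)).re : ℂ)⁻¹ * (I * g (C.curve y))) y := by
  have hs := C.curve_mem_source hy
  have hdet : (flattenDeriv (g (C.curve y)) C.dir).det ≠ 0 := by
    rw [det_flattenDeriv]
    exact (C.re_conj_dir_mul_grad_pos hs).ne'
  set A := (flattenDeriv (g (C.curve y)) C.dir).toContinuousLinearEquivOfDetNeZero hdet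
  have hsymm : HasStrictFDerivAt C.map.symm (A.symm : ℂ →L[ℝ] ℂ) (I * y) :=
    C.map.hasStrictFDerivAt_symm (C.I_mul_mem_target hy) (C.hasStrictFDerivAt_map hs)
  have hline : HasStrictDerivAt (fun y : ℝ => I * (y : ℂ)) I y := by
    simpa using (ofRealCLM.hasStrictDerivAt (x := y)).const_mul I
  refine (hsymm.comp_hasStrictDerivAt y hline).congr_deriv (A.injective ?_)
  have hA : A (I * g (C.curve y)) = I * ((conj C.dir * g (C.curve y)).re : ℂ) :=
    flattenDeriv_I_mul _ _
  rw [← ofReal_inv, ← real_smul, map_smul, hA, real_smul, ofReal_inv]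
  rw [det_flattenDeriv] at hdet
  have hdet' := ofReal_ne_zero.2 hdet
  rw [ContinuousLinearEquiv.coe_coe, A.apply_symm_apply]
  field_simp

lemma continuousOn_curve : ContinuousOn C.curve (ball C.base C.radius) :=
  C.map.continuousOn_symm.comp (by fun_prop) fun _ => C.I_mul_mem_target

end Curve

/-- The density of arclength on `∂D` with respect to the tangential coordinate. -/
def arcDensity (y : ℝ) : ℝ := ‖g (C.curve y)‖ / (conj C.dir * g (C.curve y)).re

/-- Arclength on `∂D` inside the chart, transported to the tangential coordinate. -/
def arcMeasure : Measure ℝ :=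
  (volume.restrict (ball C.base C.radius)).withDensity fun y => ENNReal.ofReal (C.arcDensity y)

lemma map_hausdorffMeasure_restrict_frontier_inter_source :
    Measure.map (fun w => (conj C.dir * w).im) ((μH[1]).restrict (frontier D ∩ C.map.source)) =
      C.arcMeasure := by
  rw [← C.image_curve, map_hausdorffMeasure_restrict_image_eq_withDensity
    (l := fun w => (conj C.dir * w).im) isOpen_ball (by fun_prop)
    (fun y => C.im_conj_dir_mul_curve) (fun y => C.hasStrictDerivAt_curve)
    C.lipschitzOnWith_curve]
  refine withDensity_congr_ae ?_
  filter_upwards [ae_restrict_mem measurableSet_ball] with y hy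
  have := C.re_conj_dir_mul_grad_pos (C.curve_mem_source hy)
  rw [norm_mul, norm_mul, norm_I, one_mul, norm_inv, norm_real, Real.norm_of_nonneg this.le,
    inv_mul_eq_div, arcDensity]

lemma aemeasurable_curve : AEMeasurable C.curve C.arcMeasure :=
  (C.continuousOn_curve.aemeasurable measurableSet_ball).mono_ac
    (withDensity_absolutelyContinuous _ _)

lemma measurableSet_frontier_inter_source : MeasurableSet (frontier D ∩ C.map.source) :=
  isClosed_frontier.measurableSet.inter C.map.open_source.measurableSet

lemma hausdorffMeasure_restrict_frontier_inter_source :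
    (μH[1]).restrict (frontier D ∩ C.map.source) = Measure.map C.curve C.arcMeasure := by
  have hcurve := C.aemeasurable_curve
  rw [← C.map_hausdorffMeasure_restrict_frontier_inter_source] at hcurve ⊢
  rw [AEMeasurable.map_map_of_aemeasurable hcurve (by fun_prop)]
  conv_lhs => rw [← Measure.map_id (μ := (μH[1]).restrict (frontier D ∩ C.map.source))]
  refine Measure.map_congr ?_
  filter_upwards [ae_restrict_mem C.measurableSet_frontier_inter_source] with w hw
  rw [← C.image_curve] at hw
  obtain ⟨y, hy, rfl⟩ := hw
  rw [id, Function.comp_apply, C.im_conj_dir_mul_curve hy]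

lemma arcDensity_nonneg {y : ℝ} (hy : y ∈ ball C.base C.radius) : 0 ≤ C.arcDensity y :=
  div_nonneg (norm_nonneg _) (C.re_conj_dir_mul_grad_pos (C.curve_mem_source hy)).le

lemma arcDensity_le {y : ℝ} (hy : y ∈ ball C.base C.radius) :
    C.arcDensity y ≤ 5 / 3 * ‖C.dir‖⁻¹ := by
  have hs := C.curve_mem_source hy
  have := C.norm_dir_pos
  rw [arcDensity, div_le_iff₀ (C.re_conj_dir_mul_grad_pos hs)]
  calc _ ≤ 5 / 4 * ‖C.dir‖ := C.norm_grad_le hs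
    _ = 5 / 3 * ‖C.dir‖⁻¹ * (3 / 4 * ‖C.dir‖ ^ 2) := by field_simp
    _ ≤ _ := by
      gcongr
      exact C.le_re_conj_dir_mul_grad hs

lemma continuousOn_arcDensity : ContinuousOn C.arcDensity (ball C.base C.radius) := by
  have hg : ContinuousOn (fun y => g (C.curve y)) (ball C.base C.radius) :=
    (C.isDefining.continuousOn_grad.mono C.source_subset).comp C.continuousOn_curve
      fun y => C.curve_mem_source
  refine hg.norm.div (continuous_re.comp_continuousOn (continuousOn_const.mul hg)) fun y hy => ?_
  exact (C.re_conj_dir_mul_grad_pos (C.curve_mem_source hy)).ne'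

lemma hausdorffMeasure_frontier_inter_source_lt_top : μH[1] (frontier D ∩ C.map.source) < ⊤ := by
  rw [← Measure.restrict_apply_univ, C.hausdorffMeasure_restrict_frontier_inter_source,
    Measure.map_apply_of_aemeasurable C.aemeasurable_curve .univ]
  have hle : C.arcMeasure ≤
      ENNReal.ofReal (5 / 3 * ‖C.dir‖⁻¹) • volume.restrict (ball C.base C.radius) := by
    rw [← withDensity_const]
    refine withDensity_mono ?_
    filter_upwards [ae_restrict_mem measurableSet_ball] with y hy
    exact ENNReal.ofReal_le_ofReal (C.arcDensity_le hy)
  refine (hle _).trans_lt ?_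
  simp only [preimage_univ, Measure.smul_apply, Measure.restrict_apply_univ, smul_eq_mul]
  exact ENNReal.mul_lt_top ENNReal.ofReal_lt_top measure_ball_lt_top

lemma integral_bdryArc {E : Type*} [NormedAddCommGroup E] [NormedSpace ℝ E] {ψ : ℂ → E}
    (hψ : ContinuousOn ψ (frontier D ∩ C.map.source))
    (h0 : ∀ w ∈ frontier D, w ∉ C.map.source → ψ w = 0) :
    ∫ w, ψ w ∂bdryArc D = ∫ y in ball C.base C.radius, C.arcDensity y • ψ (C.curve y) := by
  rw [bdryArc, setIntegral_eq_of_subset_of_forall_sdiff_eq_zero (s := frontier D ∩ C.map.source)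
    isClosed_frontier.measurableSet inter_subset_left
    (fun w hw => h0 w hw.1 fun h => hw.2 ⟨hw.1, h⟩)]
  have hae := hψ.aestronglyMeasurable (μ := μH[1]) C.measurableSet_frontier_inter_source
  rw [C.hausdorffMeasure_restrict_frontier_inter_source] at hae ⊢
  rw [integral_map C.aemeasurable_curve hae, arcMeasure,
    integral_withDensity_eq_integral_toReal_smul₀
      (C.continuousOn_arcDensity.aemeasurable measurableSet_ball).ennreal_ofReal
      (.of_forall fun y => ENNReal.ofReal_lt_top)]
  refine setIntegral_congr_fun measurableSet_ball fun y hy => ?_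
  rw [ENNReal.toReal_ofReal (C.arcDensity_nonneg hy)]

end BoundaryChart

namespace IsC1DefiningFunction

variable {D U : Set ℂ} {Γ : ℂ → ℝ} {g : ℂ → ℂ}

lemma isCompact_frontier (B : IsC1DefiningFunction D U Γ g) : IsCompact (frontier D) :=
  isCompact_of_isClosed_isBounded isClosed_frontier
    (B.isBounded.closure.subset frontier_subset_closure)

lemma isFiniteMeasure_bdryArc (B : IsC1DefiningFunction D U Γ g) :
    IsFiniteMeasure (bdryArc D) := by
  constructor
  rw [bdryArc, Measure.restrict_apply_univ]
  refine B.isCompact_frontier.induction_on (p := fun s => μH[1] s < ⊤) (by simp)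
    (fun s t hst ht => (measure_mono hst).trans_lt ht)
    (fun s t hs ht => (measure_union_le _ _).trans_lt (ENNReal.add_lt_top.2 ⟨hs, ht⟩)) ?_
  intro p hp
  obtain ⟨C, hpC, -⟩ := B.exists_boundaryChart hp
  exact ⟨_, inter_mem_nhdsWithin _ (C.map.open_source.mem_nhds hpC),
    C.hausdorffMeasure_frontier_inter_source_lt_top⟩

lemma integrable_bdryArc (B : IsC1DefiningFunction D U Γ g) {E : Type*} [NormedAddCommGroup E]
    {f : ℂ → E} (hf : ContinuousOn f (frontier D)) : Integrable f (bdryArc D) := by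
  have := B.isFiniteMeasure_bdryArc
  obtain ⟨M, hM⟩ := B.isCompact_frontier.exists_bound_of_continuousOn hf
  exact Integrable.of_bound (hf.aestronglyMeasurable isClosed_frontier.measurableSet) M
    ((ae_restrict_mem isClosed_frontier.measurableSet).mono hM)

end IsC1DefiningFunction

/-! ### Collar integrals -/

/-- A family of nonnegative continuous kernels of mass one on the line concentrating at `0` from the
left, as the parameter tends along `l`. -/
structure IsLeftApproxIdentity {ι : Type*} (l : Filter ι) (κ : ι → ℝ → ℝ) : Prop where
  continuous : ∀ᶠ i in l, Continuous (κ i)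
  nonneg : ∀ᶠ i in l, ∀ x, 0 ≤ κ i x
  eq_zero : ∀ η > 0, ∀ᶠ i in l, ∀ x ∉ Ioo (-η) 0, κ i x = 0
  integral_eq_one : ∀ᶠ i in l, ∫ x, κ i x = 1

section

variable {ι : Type*} {l : Filter ι} {κ : ι → ℝ → ℝ}
  {E : Type*} [NormedAddCommGroup E] [NormedSpace ℝ E]

lemma IsLeftApproxIdentity.tendsto_integral_smul [CompleteSpace E] (hκ : IsLeftApproxIdentity l κ)
    {f : ℝ → E} (hf : Integrable f) (h0 : ContinuousAt f 0) :
    Tendsto (fun i => ∫ x, κ i x • f x) l (𝓝 (f 0)) := by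
  have hunif (u : Set ℝ) (hu : IsOpen u) (h0u : (0 : ℝ) ∈ u) :
      TendstoUniformlyOn κ 0 l (univ \ u) := by
    obtain ⟨η, hη, hηu⟩ := Metric.isOpen_iff.1 hu 0 h0u
    rw [Metric.tendstoUniformlyOn_iff]
    intro δ hδ
    filter_upwards [hκ.eq_zero η hη] with i hi x hx
    have hx0 : κ i x = 0 := hi x fun h => hx.2 <| hηu <| by
      rw [mem_ball_zero_iff, Real.norm_eq_abs, abs_lt]
      exact ⟨h.1, h.2.trans hη⟩
    simpa [hx0] using hδ
  have hmass : Tendsto (fun i => ∫ x in Ioo (-1) 1, κ i x) l (𝓝 1) := by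
    refine tendsto_const_nhds.congr' ?_
    filter_upwards [hκ.eq_zero 1 one_pos, hκ.integral_eq_one] with i hi h1
    rw [setIntegral_eq_integral_of_forall_compl_eq_zero, h1]
    exact fun x hx => hi x fun h => hx ⟨h.1, h.2.trans one_pos⟩
  simpa using tendsto_setIntegral_peak_smul_of_integrableOn_of_tendsto (μ := volume)
    MeasurableSet.univ measurableSet_Ioo (subset_univ (Ioo (-1) 1))
    (mem_nhdsWithin_of_mem_nhds (Ioo_mem_nhds (by simp) one_pos)) measure_Ioo_lt_top.ne
    (hκ.nonneg.mono fun i hi x _ => hi x) hunif hmass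
    (hκ.continuous.mono fun i hi => hi.aestronglyMeasurable) hf.integrableOn
    (h0.tendsto.mono_left nhdsWithin_le_nhds)

lemma integral_complex_eq_integral_integral {f : ℂ → E} (hf : Integrable f) :
    ∫ z, f z = ∫ x : ℝ, ∫ y : ℝ, f (x + y * I) := by
  have hvol := Complex.volume_preserving_equiv_real_prod.symm
  have hemb := Complex.measurableEquivRealProd.symm.measurableEmbedding
  have hval (p : ℝ × ℝ) : Complex.measurableEquivRealProd.symm p = p.1 + p.2 * I := by
    rw [Complex.measurableEquivRealProd_symm_apply, Complex.mk_eq_add_mul_I]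
  rw [← hvol.integral_comp hemb, Measure.volume_eq_prod,
    integral_prod (fun p => f (Complex.measurableEquivRealProd.symm p))
      ((hvol.integrable_comp_emb hemb).2 hf)]
  simp only [hval]

lemma continuous_integral_add_mul_I {f : ℂ → E} (hf : Continuous f) (hc : HasCompactSupport f) :
    Continuous fun x : ℝ => ∫ y : ℝ, f (x + y * I) := by
  have him : IsCompact (im '' tsupport f) := hc.isCompact.image continuous_im
  rw [← continuousOn_univ]
  refine continuousOn_integral_of_compact_support him (by fun_prop) fun x y _ hy => ?_
  by_contra hne
  exact hy ⟨_, subset_tsupport _ hne, by simp⟩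

lemma hasCompactSupport_integral_add_mul_I {f : ℂ → E} (hc : HasCompactSupport f) :
    HasCompactSupport fun x : ℝ => ∫ y : ℝ, f (x + y * I) := by
  refine HasCompactSupport.intro (hc.isCompact.image continuous_re) fun x hx => ?_
  have hzero (y : ℝ) : f (x + y * I) = 0 := by
    by_contra hne
    exact hx ⟨_, subset_tsupport _ hne, by simp⟩
  simp [hzero]

lemma IsLeftApproxIdentity.tendsto_integral_re_smul [CompleteSpace E]
    (hκ : IsLeftApproxIdentity l κ) {f : ℂ → E} (hf : Continuous f) (hc : HasCompactSupport f) :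
    Tendsto (fun i => ∫ z : ℂ, κ i z.re • f z) l (𝓝 (∫ y : ℝ, f (I * y))) := by
  have hcont := continuous_integral_add_mul_I hf hc
  have hlim := hκ.tendsto_integral_smul (hcont.integrable_of_hasCompactSupport
    (hasCompactSupport_integral_add_mul_I hc)) hcont.continuousAt
  simp only [ofReal_zero, zero_add, mul_comm _ I] at hlim
  refine hlim.congr' ?_
  filter_upwards [hκ.continuous] with i hi
  rw [integral_complex_eq_integral_integral (f := fun z => κ i z.re • f z)
    (Continuous.integrable_of_hasCompactSupport (by fun_prop) hc.smul_left)]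
  simp [integral_smul, mul_comm I]

end

namespace BoundaryChart

variable {D U : Set ℂ} {Γ : ℂ → ℝ} {g : ℂ → ℂ} (C : BoundaryChart D U Γ g)
  {E : Type*} [NormedAddCommGroup E] [NormedSpace ℝ E] {ψ : ℂ → E}

/-- The density of `‖g‖² • ψ`, transported to the flat coordinates of the chart. -/
def flatDensity (ψ : ℂ → E) : ℂ → E :=
  C.map.target.indicator fun z =>
    (‖g (C.map.symm z)‖ ^ 2 / (conj C.dir * g (C.map.symm z)).re) • ψ (C.map.symm z)

lemma flatDensity_map {w : ℂ} (hw : w ∈ C.map.source) :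
    C.flatDensity ψ (C.map w) = (‖g w‖ ^ 2 / (conj C.dir * g w).re) • ψ w := by
  rw [flatDensity, indicator_of_mem (C.map.map_source hw), C.map.left_inv hw]

lemma flatDensity_apply_of_notMem {z : ℂ} (hz : z ∉ C.map.target) : C.flatDensity ψ z = 0 :=
  indicator_of_notMem hz _

lemma vanishesOffCompact_flatDensity (hc : HasCompactSupport ψ) (hs : tsupport ψ ⊆ C.map.source) :
    VanishesOffCompact C.map.target fun z =>
      (‖g (C.map.symm z)‖ ^ 2 / (conj C.dir * g (C.map.symm z)).re) • ψ (C.map.symm z) := by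
  refine ⟨C.map '' tsupport ψ, ?_, hc.isCompact.image_of_continuousOn (C.map.continuousOn.mono hs),
    fun z hz => ?_⟩
  · rintro _ ⟨w, hw, rfl⟩
    exact C.map.map_source (hs hw)
  · dsimp only
    rw [image_eq_zero_of_notMem_tsupport fun h => hz.2 ⟨_, h, C.map.right_inv hz.1⟩, smul_zero]

lemma hasCompactSupport_flatDensity (hc : HasCompactSupport ψ) (hs : tsupport ψ ⊆ C.map.source) :
    HasCompactSupport (C.flatDensity ψ) :=
  (C.vanishesOffCompact_flatDensity hc hs).hasCompactSupport_indicator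

lemma continuous_flatDensity (hψ : Continuous ψ) (hc : HasCompactSupport ψ)
    (hs : tsupport ψ ⊆ C.map.source) : Continuous (C.flatDensity ψ) := by
  have hsymm := C.map.continuousOn_symm
  have hg : ContinuousOn (fun z => g (C.map.symm z)) C.map.target :=
    (C.isDefining.continuousOn_grad.mono C.source_subset).comp hsymm C.map.symm.mapsTo
  refine (C.vanishesOffCompact_flatDensity hc hs).continuous_indicator C.map.open_target
    (.smul (.div (hg.norm.pow 2) ?_ fun z hz =>
      (C.re_conj_dir_mul_grad_pos (C.map.map_target hz)).ne') (hψ.comp_continuousOn hsymm))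
  exact continuous_re.comp_continuousOn (continuousOn_const.mul hg)

lemma abs_det_smul_flatDensity (k : ℝ → ℝ) {w : ℂ} (hw : w ∈ C.map.source) :
    |(flattenDeriv (g w) C.dir).det| • k (C.map w).re • C.flatDensity ψ (C.map w) =
      (k (Γ w) * ‖g w‖ ^ 2) • ψ w := by
  have hpos := C.re_conj_dir_mul_grad_pos hw
  rw [det_flattenDeriv, abs_of_pos hpos, C.flatDensity_map hw, C.re_map, smul_smul, smul_smul]
  congr 1
  field_simp

lemma measurableSet_inter_source : MeasurableSet (D ∩ C.map.source) :=
  (C.isDefining.isOpen.inter C.map.open_source).measurableSet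

lemma hasFDerivWithinAt_map {w : ℂ} (hw : w ∈ D ∩ C.map.source) :
    HasFDerivWithinAt C.map (flattenDeriv (g w) C.dir) (D ∩ C.map.source) w :=
  (C.hasStrictFDerivAt_map hw.2).hasFDerivAt.hasFDerivWithinAt

lemma integrableOn_collar {k : ℝ → ℝ} (hk : Continuous k) (hψ : Continuous ψ)
    (hc : HasCompactSupport ψ) (hs : tsupport ψ ⊆ C.map.source) :
    IntegrableOn (fun w => (k (Γ w) * ‖g w‖ ^ 2) • ψ w) D := by
  have hflat : Integrable fun z : ℂ => k z.re • C.flatDensity ψ z :=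
    Continuous.integrable_of_hasCompactSupport
      ((hk.comp continuous_re).smul (C.continuous_flatDensity hψ hc hs))
      (C.hasCompactSupport_flatDensity hc hs).smul_left
  have hsource := (integrableOn_image_iff_integrableOn_abs_det_fderiv_smul volume
    C.measurableSet_inter_source (fun w => C.hasFDerivWithinAt_map)
    (C.map.injOn.mono inter_subset_right) _).1 hflat.integrableOn
  refine (hsource.congr_fun (fun w hw => C.abs_det_smul_flatDensity k hw.2)
    C.measurableSet_inter_source).of_forall_sdiff_eq_zero C.isDefining.isOpen.measurableSet
    fun w hw => ?_
  rw [image_eq_zero_of_notMem_tsupport fun h => hw.2 ⟨hw.1, hs h⟩, smul_zero]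

lemma setIntegral_collar {k : ℝ → ℝ} (hk : ∀ x, 0 ≤ x → k x = 0)
    (hs : tsupport ψ ⊆ C.map.source) :
    ∫ w in D, (k (Γ w) * ‖g w‖ ^ 2) • ψ w = ∫ z : ℂ, k z.re • C.flatDensity ψ z := by
  have hoff (w : ℂ) (hw : w ∈ D \ (D ∩ C.map.source)) : (k (Γ w) * ‖g w‖ ^ 2) • ψ w = 0 := by
    rw [image_eq_zero_of_notMem_tsupport fun h => hw.2 ⟨hw.1, hs h⟩, smul_zero]
  have hzero (z : ℂ) (hz : z ∉ C.map '' (D ∩ C.map.source)) :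
      k z.re • C.flatDensity ψ z = 0 := by
    by_cases hzt : z ∈ C.map.target
    · have hw := C.map.map_target hzt
      rw [hk, zero_smul]
      contrapose! hz
      refine ⟨C.map.symm z, ⟨(C.mem_iff _ hw).2 ?_, hw⟩, C.map.right_inv hzt⟩
      rwa [← C.re_map, C.map.right_inv hzt]
    · rw [C.flatDensity_apply_of_notMem hzt, smul_zero]
  rw [setIntegral_eq_of_subset_of_forall_sdiff_eq_zero
      C.isDefining.isOpen.measurableSet inter_subset_left hoff,
    ← setIntegral_eq_integral_of_forall_compl_eq_zero hzero,
    integral_image_eq_integral_abs_det_fderiv_smul volume C.measurableSet_inter_source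
      (fun w => C.hasFDerivWithinAt_map) (C.map.injOn.mono inter_subset_right)]
  exact setIntegral_congr_fun C.measurableSet_inter_source fun w hw =>
    (C.abs_det_smul_flatDensity k hw.2).symm

lemma integral_flatDensity_I_mul (hψ : Continuous ψ) (hs : tsupport ψ ⊆ C.map.source) :
    ∫ y : ℝ, C.flatDensity ψ (I * y) = ∫ w, ‖g w‖ • ψ w ∂bdryArc D := by
  have hcont : ContinuousOn (fun w => ‖g w‖ • ψ w) (frontier D ∩ C.map.source) :=
    (C.isDefining.continuousOn_grad.norm.mono
      (inter_subset_right.trans C.source_subset)).smul hψ.continuousOn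
  have hzero (w : ℂ) (hw : w ∉ C.map.source) : ‖g w‖ • ψ w = 0 := by
    rw [image_eq_zero_of_notMem_tsupport fun h => hw (hs h), smul_zero]
  rw [C.integral_bdryArc hcont fun w _ => hzero w,
    ← setIntegral_eq_integral_of_forall_compl_eq_zero (s := ball C.base C.radius)]
  · refine setIntegral_congr_fun measurableSet_ball fun y hy => ?_
    rw [← C.map_curve hy, C.flatDensity_map (C.curve_mem_source hy), arcDensity, smul_smul]
    congr 1
    ring
  · refine fun y hy => C.flatDensity_apply_of_notMem fun h => hy ?_
    rw [C.target_eq, mem_reProdIm] at h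
    simpa using h.2

lemma tendsto_setIntegral_collar [CompleteSpace E] {ι : Type*} {l : Filter ι} {κ : ι → ℝ → ℝ}
    (hκ : IsLeftApproxIdentity l κ) (hψ : Continuous ψ) (hc : HasCompactSupport ψ)
    (hs : tsupport ψ ⊆ C.map.source) :
    Tendsto (fun i => ∫ w in D, (κ i (Γ w) * ‖g w‖ ^ 2) • ψ w) l
      (𝓝 (∫ w, ‖g w‖ • ψ w ∂bdryArc D)) := by
  rw [← C.integral_flatDensity_I_mul hψ hs]
  refine (hκ.tendsto_integral_re_smul (C.continuous_flatDensity hψ hc hs)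
    (C.hasCompactSupport_flatDensity hc hs)).congr' ?_
  filter_upwards [hκ.eq_zero 1 one_pos] with i hi
  exact (C.setIntegral_collar (fun x hx => hi x fun h => h.2.not_ge hx) hs).symm

end BoundaryChart

namespace IsC1DefiningFunction

variable {D U : Set ℂ} {Γ : ℂ → ℝ} {g : ℂ → ℂ}

lemma exists_finite_cover_boundaryChart (B : IsC1DefiningFunction D U Γ g) :
    ∃ (n : ℕ) (C : Fin n → BoundaryChart D U Γ g), frontier D ⊆ ⋃ i, (C i).map.source := by
  choose C hC using fun p : frontier D => B.exists_boundaryChart p.2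
  obtain ⟨T, hT⟩ := B.isCompact_frontier.elim_finite_subcover (fun p => (C p).map.source)
    (fun p => (C p).map.open_source) fun p hp => mem_iUnion.2 ⟨⟨p, hp⟩, (hC _).1⟩
  refine ⟨T.card, fun i => C (T.equivFin.symm i), fun w hw => ?_⟩
  obtain ⟨p, hp, hwp⟩ := mem_iUnion₂.1 (hT hw)
  exact mem_iUnion.2 ⟨T.equivFin ⟨p, hp⟩, by simpa using hwp⟩

lemma exists_chart_decomposition (B : IsC1DefiningFunction D U Γ g) {N : Set ℂ}
    (hN : IsOpen N) (hDN : frontier D ⊆ N) {φ : ℂ → ℂ} (hφ : ContinuousOn φ (closure D ∩ N)) :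
    ∃ (n : ℕ) (C : Fin n → BoundaryChart D U Γ g) (ψ : Fin n → ℂ → ℂ) (V : Set ℂ),
      (∀ i, Continuous (ψ i) ∧ HasCompactSupport (ψ i) ∧ tsupport (ψ i) ⊆ (C i).map.source) ∧
      IsOpen V ∧ frontier D ⊆ V ∧ ∀ w ∈ closure D ∩ V, ∑ i, ψ i w = φ w := by
  obtain ⟨n, C, hC⟩ := B.exists_finite_cover_boundaryChart
  obtain ⟨η, hη, hηV⟩ := B.isCompact_frontier.exists_cthickening_subset_open
    (hN.inter (isOpen_iUnion fun i => (C i).map.open_source)) fun w hw => ⟨hDN hw, hC hw⟩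
  set A := closure D ∩ cthickening η (frontier D)
  have hφA : ContinuousOn φ A := hφ.mono fun w hw => ⟨hw.1, (hηV hw.2).1⟩
  obtain ⟨f, hf⟩ := ContinuousMap.exists_restrict_eq
    (isClosed_closure.inter isClosed_cthickening) ⟨fun w : A => φ w, hφA.domRestrict⟩
  obtain ⟨χ, hχC, hχsum, -, hχc⟩ := exists_continuous_sum_one_of_isOpen_isCompact
    (fun i => (C i).map.open_source) B.isCompact_frontier.cthickening fun w hw => (hηV hw).2
  refine ⟨n, C, fun i w => χ i w * f w, thickening η (frontier D), fun i => ⟨by fun_prop, ?_, ?_⟩,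
    isOpen_thickening, self_subset_thickening hη _, fun w hw => ?_⟩
  · exact (hχc i).mono' ((Function.support_subset_iff'.2 fun w hw => by simp_all).trans
      (subset_tsupport _))
  · refine (closure_mono (Function.support_subset_iff'.2 fun w hw => ?_)).trans (hχC i)
    simp_all
  · have hwA : w ∈ A := ⟨hw.1, thickening_subset_cthickening _ _ hw.2⟩
    have hsum : ∑ i, χ i w = 1 := by simpa using hχsum hwA.2
    rw [← Finset.sum_mul, ← ofReal_sum, hsum, ofReal_one, one_mul]
    exact congrArg (fun F : C(A, ℂ) => F ⟨w, hwA⟩) hf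

/-- The coarea formula in the limit: `J i` is the kernel `κ i (Γ w) * ‖g w‖ ^ 2` near the boundary
and negligible away from it. -/
lemma tendsto_setIntegral_collar (B : IsC1DefiningFunction D U Γ g) {ι : Type*} {l : Filter ι}
    {κ : ι → ℝ → ℝ} (hκ : IsLeftApproxIdentity l κ) {J : ι → ℂ → ℝ}
    (hJ : ∀ i, ∀ w ∈ D ∩ U, J i w = κ i (Γ w) * ‖g w‖ ^ 2)
    (hJ0 : ∀ N, IsOpen N → frontier D ⊆ N → ∀ᶠ i in l, ∀ w ∈ D \ N, J i w = 0)
    {φ : ℂ → ℂ} {N : Set ℂ} (hN : IsOpen N) (hDN : frontier D ⊆ N)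
    (hφ : ContinuousOn φ (closure D ∩ N)) :
    Tendsto (fun i => ∫ w in D, J i w • φ w) l (𝓝 (∫ w, ‖g w‖ • φ w ∂bdryArc D)) := by
  obtain ⟨n, C, ψ, V, hψ, hV, hDV, hsum⟩ := B.exists_chart_decomposition hN hDN hφ
  have hint (j : Fin n) : Integrable (fun w => ‖g w‖ • ψ j w) (bdryArc D) :=
    B.integrable_bdryArc
      ((B.continuousOn_grad.norm.mono B.frontier_subset).smul (hψ j).1.continuousOn)
  have hbdry : ∑ j, ∫ w, ‖g w‖ • ψ j w ∂bdryArc D = ∫ w, ‖g w‖ • φ w ∂bdryArc D := by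
    rw [← integral_finsetSum _ fun j _ => hint j]
    refine setIntegral_congr_fun isClosed_frontier.measurableSet fun w hw => ?_
    rw [← Finset.smul_sum, hsum w ⟨frontier_subset_closure hw, hDV hw⟩]
  have hlim := tendsto_finsetSum Finset.univ fun j _ =>
    (C j).tendsto_setIntegral_collar hκ (hψ j).1 (hψ j).2.1 (hψ j).2.2
  rw [hbdry] at hlim
  refine hlim.congr' ?_
  filter_upwards [hκ.continuous, hJ0 V hV hDV] with i hi hJi
  rw [← integral_finsetSum _ fun j _ =>
    (C j).integrableOn_collar hi (hψ j).1 (hψ j).2.1 (hψ j).2.2]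
  refine setIntegral_congr_fun B.isOpen.measurableSet fun w hw => ?_
  have hterm (j : Fin n) : (κ i (Γ w) * ‖g w‖ ^ 2) • ψ j w = J i w • ψ j w := by
    by_cases hwj : w ∈ tsupport (ψ j)
    · rw [hJ i w ⟨hw, (C j).source_subset ((hψ j).2.2 hwj)⟩]
    · rw [image_eq_zero_of_notMem_tsupport hwj, smul_zero, smul_zero]
  simp only [hterm, ← Finset.smul_sum]
  by_cases hwV : w ∈ V
  · rw [hsum w ⟨subset_closure hw, hwV⟩]
  · rw [hJi w ⟨hw, hwV⟩, zero_smul, zero_smul]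

end IsC1DefiningFunction

/-! ### Boundary limits of the cut-off integrals -/

/-- A `C¹` step equal to `1` on `(-∞, 1 - 2ε]` and to `0` on `[1 - ε, ∞)`. -/
def stepCutoff (ε x : ℝ) : ℝ := Real.smoothTransition ((1 - ε - x) / ε)

section

variable {ε x : ℝ}

lemma contDiff_stepCutoff (ε : ℝ) : ContDiff ℝ 1 (stepCutoff ε) :=
  Real.smoothTransition.contDiff.comp (by fun_prop)

lemma stepCutoff_eq_one (hε : 0 < ε) (hx : x ≤ 1 - 2 * ε) : stepCutoff ε x = 1 :=
  Real.smoothTransition.one_of_one_le <| (one_le_div₀ hε).2 (by linarith)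

lemma stepCutoff_eq_zero (hε : 0 < ε) (hx : 1 - ε ≤ x) : stepCutoff ε x = 0 :=
  Real.smoothTransition.zero_of_nonpos <|
    div_nonpos_of_nonpos_of_nonneg (by linarith) hε.le

lemma stepCutoff_nonneg (ε x : ℝ) : 0 ≤ stepCutoff ε x := Real.smoothTransition.nonneg _

lemma stepCutoff_le_one (ε x : ℝ) : stepCutoff ε x ≤ 1 := Real.smoothTransition.le_one _

lemma isCutoff_stepCutoff (hε : 0 < ε) : IsCutoff (stepCutoff ε) :=
  ⟨contDiff_stepCutoff ε, 1 - ε, by linarith, fun _ hx => stepCutoff_eq_zero hε hx⟩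

lemma deriv_stepCutoff_eq_zero_of_le (hε : 0 < ε) (hx : x ≤ 1 - 2 * ε) :
    deriv (stepCutoff ε) x = 0 :=
  IsLocalMax.deriv_eq_zero <| .of_forall fun y => by
    rw [stepCutoff_eq_one hε hx]
    exact stepCutoff_le_one ε y

lemma deriv_stepCutoff_eq_zero_of_ge (hε : 0 < ε) (hx : 1 - ε ≤ x) :
    deriv (stepCutoff ε) x = 0 :=
  IsLocalMin.deriv_eq_zero <| .of_forall fun y => by
    rw [stepCutoff_eq_zero hε hx]
    exact stepCutoff_nonneg ε y

lemma antitone_stepCutoff (hε : 0 ≤ ε) : Antitone (stepCutoff ε) := fun a b hab =>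
  Real.smoothTransition.monotone (by gcongr)

lemma tailIntegral_stepCutoff_nonneg (hx : x ≤ 1) : 0 ≤ tailIntegral (stepCutoff ε) x :=
  intervalIntegral.integral_nonneg hx fun s _ => stepCutoff_nonneg ε s

lemma le_tailIntegral_stepCutoff (hε : 0 < ε) (hx : x ≤ 1) :
    1 - 2 * ε - x ≤ tailIntegral (stepCutoff ε) x := by
  rcases le_total x (1 - 2 * ε) with hle | hge
  · have hint (a b : ℝ) := (contDiff_stepCutoff ε).continuous.intervalIntegrable a b (μ := volume)
    have hleft : ∫ s in x..(1 - 2 * ε), stepCutoff ε s = 1 - 2 * ε - x := by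
      rw [intervalIntegral.integral_congr (g := fun _ => (1 : ℝ))]
      · simp
      · intro s hs
        rw [uIcc_of_le hle] at hs
        exact stepCutoff_eq_one hε hs.2
    rw [tailIntegral, ← intervalIntegral.integral_add_adjacent_intervals
      (hint x (1 - 2 * ε)) (hint _ 1), hleft]
    exact le_add_of_nonneg_right (tailIntegral_stepCutoff_nonneg (by linarith))
  · exact (by linarith : 1 - 2 * ε - x ≤ 0).trans (tailIntegral_stepCutoff_nonneg hx)

lemma eventually_lt_one_sub_two_mul {a : ℝ} (ha : a < 1) :
    ∀ᶠ ε in 𝓝[>] (0 : ℝ), 0 < ε ∧ a < 1 - 2 * ε := by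
  filter_upwards [self_mem_nhdsWithin,
    nhdsWithin_le_nhds (Iio_mem_nhds (by linarith : 0 < (1 - a) / 2))] with ε hε hlt
  exact ⟨hε, by linarith [mem_Iio.1 hlt]⟩

/-- The mass `-θ'(u) du` of the step `θ = stepCutoff ε` in the variable `x` with `u = e^{2x}`. -/
def stepKernel (ε x : ℝ) : ℝ :=
  2 * (-deriv (stepCutoff ε) (Real.exp (2 * x)) * Real.exp (2 * x))

lemma continuous_stepKernel (ε : ℝ) : Continuous (stepKernel ε) := by
  have := (contDiff_stepCutoff ε).continuous_deriv le_rfl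
  unfold stepKernel
  fun_prop

lemma eventually_stepKernel_eq_zero {η : ℝ} (hη : 0 < η) :
    ∀ᶠ ε in 𝓝[>] (0 : ℝ), ∀ x ∉ Ioo (-η) 0, stepKernel ε x = 0 := by
  have hexp : Real.exp (2 * -η) < 1 := Real.exp_lt_one_iff.2 (by linarith)
  filter_upwards [eventually_lt_one_sub_two_mul hexp] with ε ⟨hε, hlt⟩ x hx
  suffices deriv (stepCutoff ε) (Real.exp (2 * x)) = 0 by simp [stepKernel, this]
  rcases le_or_gt x (-η) with hle | hgt
  · refine deriv_stepCutoff_eq_zero_of_le hε (le_trans ?_ hlt.le)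
    gcongr
  · have hx0 : 0 ≤ x := not_lt.1 fun h => hx ⟨hgt, h⟩
    have : 1 ≤ Real.exp (2 * x) := Real.one_le_exp (by linarith)
    exact deriv_stepCutoff_eq_zero_of_ge hε (by linarith)

lemma hasDerivAt_neg_stepCutoff_exp (ε x : ℝ) :
    HasDerivAt (fun x => -stepCutoff ε (Real.exp (2 * x))) (stepKernel ε x) x := by
  have hexp : HasDerivAt (fun x : ℝ => Real.exp (2 * x)) (Real.exp (2 * x) * (2 * 1)) x :=
    ((hasDerivAt_id x).const_mul 2).exp
  have hstep := ((contDiff_stepCutoff ε).differentiable one_ne_zero (Real.exp (2 * x))).hasDerivAt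
  refine (hstep.comp x hexp).neg.congr_deriv ?_
  rw [stepKernel]
  ring

lemma isLeftApproxIdentity_stepKernel : IsLeftApproxIdentity (𝓝[>] 0) stepKernel where
  continuous := .of_forall continuous_stepKernel
  nonneg := by
    filter_upwards [self_mem_nhdsWithin] with ε hε x
    have := (antitone_stepCutoff (le_of_lt hε)).deriv_nonpos (x := Real.exp (2 * x))
    exact mul_nonneg zero_le_two (mul_nonneg (neg_nonneg.2 this) (Real.exp_pos _).le)
  eq_zero := fun η hη => eventually_stepKernel_eq_zero hη
  integral_eq_one := by
    have hexp : Real.exp (2 * (-1)) < 1 := Real.exp_lt_one_iff.2 (by norm_num)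
    filter_upwards [eventually_stepKernel_eq_zero one_pos, eventually_lt_one_sub_two_mul hexp]
      with ε hsupp ⟨hε, hlt⟩
    rw [← setIntegral_eq_integral_of_forall_compl_eq_zero (s := Ioc (-1) 0)
        fun x hx => hsupp x fun h => hx (Ioo_subset_Ioc_self h),
      ← intervalIntegral.integral_of_le (by norm_num),
      intervalIntegral.integral_eq_sub_of_hasDerivAt
        (fun x _ => hasDerivAt_neg_stepCutoff_exp ε x)
        ((continuous_stepKernel ε).intervalIntegrable _ _),
      stepCutoff_eq_one hε hlt.le, stepCutoff_eq_zero hε (by simp [hε.le])]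
    norm_num

end

/-- The Green function `log |w - t| + h` of `D` extends across `∂D` to a `C¹` defining function `Γ`
with gradient `g`. -/
structure IsGreenExtension (D : Set ℂ) (t : ℂ) (h : ℂ → ℝ) (P : ℂ → ℂ) (U : Set ℂ) (Γ : ℂ → ℝ)
    (g : ℂ → ℂ) : Prop where
  isGreenPotential : IsGreenPotential D t h P
  isC1DefiningFunction : IsC1DefiningFunction D U Γ g
  greenSq_eq : ∀ w ∈ D ∩ U, greenSq t h w = Real.exp (2 * Γ w)
  conj_grad_mul : ∀ w ∈ D ∩ U, conj (g w) * (w - t) = greenNum t P w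

/-- The unit vector field in the direction of the gradient `g` of a defining function. -/
def unitNormal (g : ℂ → ℂ) (w : ℂ) : ℂ := g w / ‖g w‖

lemma IsC1DefiningFunction.exists_isOpen_compl_mem_nhds {D U : Set ℂ} {Γ : ℂ → ℝ} {g : ℂ → ℂ}
    (B : IsC1DefiningFunction D U Γ g) {p : ℂ} (hp : p ∉ frontier D) :
    ∃ N ⊆ U, IsOpen N ∧ frontier D ⊆ N ∧ Nᶜ ∈ 𝓝 p ∧ ∀ w ∈ N, g w ≠ 0 := by
  obtain ⟨r, hr, hrp⟩ := Metric.nhds_basis_closedBall.mem_iff.1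
    (isClosed_frontier.isOpen_compl.mem_nhds hp)
  refine ⟨(U ∩ g ⁻¹' {0}ᶜ) ∩ (closedBall p r)ᶜ, fun w hw => hw.1.1, ?_, fun w hw => ?_, ?_,
    fun w hw => hw.1.2⟩
  · exact (B.continuousOn_grad.isOpen_inter_preimage B.isOpen_nhd isOpen_compl_singleton).inter
      isClosed_closedBall.isOpen_compl
  · exact ⟨⟨B.frontier_subset hw, B.grad_ne_zero w hw⟩, fun h => hrp h hw⟩
  · exact mem_of_superset (closedBall_mem_nhds p hr) fun w hw h => h.2 hw

namespace IsGreenExtension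

variable {D : Set ℂ} {t : ℂ} {h : ℂ → ℝ} {P : ℂ → ℂ} {U : Set ℂ} {Γ : ℂ → ℝ} {g : ℂ → ℂ}

lemma norm_greenNum_sq_mul_expWt (F : IsGreenExtension D t h P U Γ g) {w : ℂ} (hw : w ∈ D ∩ U) :
    ‖greenNum t P w‖ ^ 2 * expWt h w = greenSq t h w * ‖g w‖ ^ 2 := by
  rw [← F.conj_grad_mul w hw, norm_mul, RCLike.norm_conj, greenSq]
  ring

lemma exists_greenSq_le (F : IsGreenExtension D t h P U Γ g) {N : Set ℂ} (hN : IsOpen N)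
    (hDN : frontier D ⊆ N) : ∃ a < 1, ∀ w ∈ D \ N, greenSq t h w ≤ a := by
  have S := F.isGreenPotential
  have hsub : closure D \ N ⊆ D := fun w hw => by
    by_contra hwD
    exact hw.2 (hDN (S.isOpen.frontier_eq ▸ ⟨hw.1, hwD⟩))
  rcases (closure D \ N).eq_empty_or_nonempty with hempty | hne
  · refine ⟨0, one_pos, fun w hw => ?_⟩
    exact absurd (hempty ▸ ⟨subset_closure hw.1, hw.2⟩ : w ∈ (∅ : Set ℂ)) (notMem_empty w)
  · obtain ⟨x, hx, hmax⟩ := (S.isBounded.isCompact_closure.diff hN).exists_isMaxOn hne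
      (S.continuousOn_greenSq.mono hsub)
    exact ⟨_, S.greenSq_lt_one x (hsub hx), fun w hw => hmax ⟨subset_closure hw.1, hw.2⟩⟩

lemma eventually_deriv_stepCutoff_eq_zero (F : IsGreenExtension D t h P U Γ g) {N : Set ℂ}
    (hN : IsOpen N) (hDN : frontier D ⊆ N) :
    ∀ᶠ ε in 𝓝[>] (0 : ℝ), ∀ w ∈ D \ N, deriv (stepCutoff ε) (greenSq t h w) = 0 := by
  obtain ⟨a, ha, hle⟩ := F.exists_greenSq_le hN hDN
  filter_upwards [eventually_lt_one_sub_two_mul ha] with ε ⟨hε, hlt⟩ w hw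
  exact deriv_stepCutoff_eq_zero_of_le hε ((hle w hw).trans hlt.le)

lemma tendsto_setIntegral_deriv_stepCutoff (F : IsGreenExtension D t h P U Γ g) {φ : ℂ → ℂ}
    {N : Set ℂ} (hN : IsOpen N) (hDN : frontier D ⊆ N) (hφ : ContinuousOn φ (closure D ∩ N)) :
    Tendsto (fun ε => ∫ w in D, (-deriv (stepCutoff ε) (greenSq t h w) *
        (‖greenNum t P w‖ ^ 2 * expWt h w)) • φ w)
      (𝓝[>] 0) (𝓝 ((1 / 2 : ℝ) • ∫ w, ‖g w‖ • φ w ∂bdryArc D)) := by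
  have hlim := F.isC1DefiningFunction.tendsto_setIntegral_collar isLeftApproxIdentity_stepKernel
    (J := fun ε w => 2 * (-deriv (stepCutoff ε) (greenSq t h w) *
        (‖greenNum t P w‖ ^ 2 * expWt h w))) (fun ε w hw => ?_) (fun N hN hDN => ?_) hN hDN hφ
  · refine (hlim.const_smul (1 / 2 : ℝ)).congr fun ε => ?_
    rw [← integral_smul]
    simp [mul_smul]
  · rw [F.norm_greenNum_sq_mul_expWt hw, F.greenSq_eq w hw, stepKernel]
    ring
  · filter_upwards [F.eventually_deriv_stepCutoff_eq_zero hN hDN] with ε hε w hw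
    simp [hε w hw]

lemma setIntegral_deriv_stepCutoff_smul_inv (F : IsGreenExtension D t h P U Γ g) {ε : ℝ}
    (hε : 0 < ε) {p : ℂ} {N : Set ℂ} (hNU : N ⊆ U) (hNp : Nᶜ ∈ 𝓝 p) (hg : ∀ w ∈ N, g w ≠ 0)
    (hzero : ∀ w ∈ D \ N, deriv (stepCutoff ε) (greenSq t h w) = 0) :
    ∫ w in D, (-deriv (stepCutoff ε) (greenSq t h w) *
        (‖greenNum t P w‖ ^ 2 * expWt h w)) • (conj (g w) * (w - p))⁻¹ =
      D.indicator (fun p => (Real.pi * stepCutoff ε (greenSq t h p) : ℂ)) p := by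
  rw [← F.isGreenPotential.integral_deriv_cutoff_div_sub (isCutoff_stepCutoff hε)
    (mem_of_superset hNp fun w hwN hwD => hzero w ⟨hwD, hwN⟩)]
  refine setIntegral_congr_fun F.isGreenPotential.isOpen.measurableSet fun w hw => ?_
  by_cases hwN : w ∈ N
  · have hconj : conj (g w) ≠ 0 := (map_ne_zero _).2 (hg w hwN)
    have hwp : w - p ≠ 0 := sub_ne_zero.2 fun h => mem_of_mem_nhds hNp (h ▸ hwN)
    have hk := F.conj_grad_mul w ⟨hw, hNU hwN⟩
    simp only [real_smul, ofReal_mul, ofReal_neg, ofReal_pow, ← mul_conj']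
    rw [mul_inv]
    field_simp
    rw [← hk]
    ring
  · simp [hzero w ⟨hw, hwN⟩]

lemma norm_smul_inv_conj_mul (F : IsGreenExtension D t h P U Γ g) {w : ℂ} (hw : w ∈ frontier D)
    (p : ℂ) : ‖g w‖ • (conj (g w) * (w - p))⁻¹ = unitNormal g w / (w - p) := by
  have hg := F.isC1DefiningFunction.grad_ne_zero w hw
  have hconj : conj (g w) ≠ 0 := (map_ne_zero _).2 hg
  have hnorm : (‖g w‖ : ℂ) ≠ 0 := ofReal_ne_zero.2 (norm_ne_zero_iff.2 hg)
  rw [unitNormal, real_smul, mul_inv, div_eq_mul_inv, ← mul_assoc]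
  congr 1
  field_simp
  rw [conj_mul']

/-- Cauchy's formula for the constant `1`: `unitNormal g w * |dw|` is `dw / i` on `∂D`. -/
lemma integral_unitNormal_div_sub (F : IsGreenExtension D t h P U Γ g) {p : ℂ}
    (hp : p ∉ frontier D) :
    ∫ w, unitNormal g w / (w - p) ∂bdryArc D = D.indicator (fun _ => (2 * Real.pi : ℂ)) p := by
  obtain ⟨N, hNU, hN, hDN, hNp, hg⟩ := F.isC1DefiningFunction.exists_isOpen_compl_mem_nhds hp
  have hcont : ContinuousOn (fun w => (conj (g w) * (w - p))⁻¹) N := by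
    have hcg := F.isC1DefiningFunction.continuousOn_grad.mono hNU
    refine ContinuousOn.inv₀ (by fun_prop) fun w hw => mul_ne_zero ((map_ne_zero _).2 (hg w hw)) ?_
    exact sub_ne_zero.2 fun h => mem_of_mem_nhds hNp (h ▸ hw)
  have hbdry := F.tendsto_setIntegral_deriv_stepCutoff hN hDN (hcont.mono inter_subset_right)
  have hstep : ∀ᶠ ε in 𝓝[>] (0 : ℝ), p ∈ D → stepCutoff ε (greenSq t h p) = 1 := by
    by_cases hpD : p ∈ D
    · filter_upwards [eventually_lt_one_sub_two_mul (F.isGreenPotential.greenSq_lt_one p hpD)]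
        with ε ⟨hε, hlt⟩ _ using stepCutoff_eq_one hε hlt.le
    · exact .of_forall fun ε h => absurd h hpD
  have hdisc : ∀ᶠ ε in 𝓝[>] (0 : ℝ), D.indicator (fun _ => (Real.pi : ℂ)) p =
      ∫ w in D, (-deriv (stepCutoff ε) (greenSq t h w) *
        (‖greenNum t P w‖ ^ 2 * expWt h w)) • (conj (g w) * (w - p))⁻¹ := by
    filter_upwards [F.eventually_deriv_stepCutoff_eq_zero hN hDN, self_mem_nhdsWithin, hstep]
      with ε hzero hε hone
    rw [F.setIntegral_deriv_stepCutoff_smul_inv hε hNU hNp hg hzero]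
    by_cases hpD : p ∈ D <;> simp [hpD, hone]
  have hlim := tendsto_nhds_unique hbdry (tendsto_const_nhds.congr' hdisc)
  have hnormal : ∫ w, ‖g w‖ • (conj (g w) * (w - p))⁻¹ ∂bdryArc D =
      ∫ w, unitNormal g w / (w - p) ∂bdryArc D :=
    setIntegral_congr_fun isClosed_frontier.measurableSet fun w hw =>
      F.norm_smul_inv_conj_mul hw p
  rw [hnormal, one_div, inv_smul_eq_iff₀ two_ne_zero] at hlim
  rw [hlim]
  by_cases hpD : p ∈ D <;> simp [hpD]

end IsGreenExtension

/-! ### Jump of the Cauchy integral across the boundary -/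

section Poisson

variable {m s : ℝ}

lemma div_sq_add_mul_sq_eq (hs : 0 < s) (a : ℝ) :
    (fun y : ℝ => s / (s ^ 2 + m ^ 2 * (y - a) ^ 2)) =
      fun y => s⁻¹ * (1 + (m / s * (y - a)) ^ 2)⁻¹ := by
  funext y
  have : 0 < s ^ 2 + m ^ 2 * (y - a) ^ 2 := by positivity
  field_simp

lemma integrable_div_sq_add_mul_sq (hm : m ≠ 0) (hs : 0 < s) (a : ℝ) :
    Integrable fun y : ℝ => s / (s ^ 2 + m ^ 2 * (y - a) ^ 2) := by
  rw [div_sq_add_mul_sq_eq hs]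
  exact ((integrable_inv_one_add_sq.comp_mul_left' (div_ne_zero hm hs.ne')).comp_sub_right
    a).const_mul _

lemma integral_div_sq_add_mul_sq (hm : 0 < m) (hs : 0 < s) (a : ℝ) :
    ∫ y : ℝ, s / (s ^ 2 + m ^ 2 * (y - a) ^ 2) = Real.pi / m := by
  rw [div_sq_add_mul_sq_eq hs, integral_const_mul,
    integral_sub_right_eq_self (fun y : ℝ => (1 + (m / s * y) ^ 2)⁻¹) a,
    Measure.integral_comp_mul_left (fun y : ℝ => (1 + y ^ 2)⁻¹), integral_univ_inv_one_add_sq,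
    abs_of_pos (by positivity), smul_eq_mul]
  field_simp

end Poisson

lemma norm_inv_sub_inv_sub {ζ w w' : ℂ} (hw : ζ ≠ w) (hw' : ζ ≠ w') :
    ‖(ζ - w)⁻¹ - (ζ - w')⁻¹‖ = dist w w' / (dist ζ w * dist ζ w') := by
  rw [← dist_eq_norm, dist_inv_inv₀ (sub_ne_zero.2 hw) (sub_ne_zero.2 hw'), dist_sub_left,
    dist_eq_norm ζ, dist_eq_norm ζ]

/-- `w'` is obtained from `w ∈ D` by reflection across `∂D`, up to bounded factors. -/
structure BoundaryChart.IsReflection {D U : Set ℂ} {Γ : ℂ → ℝ} {g : ℂ → ℂ}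
    (C : BoundaryChart D U Γ g) (w w' : ℂ) : Prop where
  infDist_pos : 0 < infDist w (frontier D)
  exists_infDist_eq_dist : ∃ p ∈ frontier D ∩ C.map.source, infDist w (frontier D) = dist w p
  notMem_closure : w' ∉ closure D
  dist_le : dist w w' ≤ 2 * infDist w (frontier D)
  le_dist : ∀ ζ ∈ frontier D ∩ C.map.source, 3 / 5 * infDist w (frontier D) ≤ dist ζ w'

namespace BoundaryChart

variable {D U : Set ℂ} {Γ : ℂ → ℝ} {g : ℂ → ℂ} (C : BoundaryChart D U Γ g) {w w' p : ℂ} {s : ℝ}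

lemma div_dist_curve_sq_le {y a : ℝ} (hy : y ∈ ball C.base C.radius)
    (ha : a ∈ ball C.base C.radius) (hs : 0 < s) (hy_le : s ≤ dist (C.curve y) w)
    (ha_eq : dist w (C.curve a) = s) :
    s / dist (C.curve y) w ^ 2 ≤ 2 * (s / (s ^ 2 + (2 * ‖C.dir‖)⁻¹ ^ 2 * (y - a) ^ 2)) := by
  have hdir := C.norm_dir_pos
  have hpos : 0 < dist (C.curve y) w := hs.trans_le hy_le
  have hchord : ‖C.curve y - C.curve a‖ ≤ 2 * dist (C.curve y) w := by
    rw [← dist_eq_norm]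
    linarith [dist_triangle (C.curve y) w (C.curve a)]
  have hlin : (2 * ‖C.dir‖)⁻¹ * |y - a| ≤ dist (C.curve y) w := by
    rw [inv_mul_le_iff₀ (by positivity)]
    nlinarith [C.abs_sub_le_norm_curve_sub hy ha]
  have hsq : s ^ 2 + (2 * ‖C.dir‖)⁻¹ ^ 2 * (y - a) ^ 2 ≤ 2 * dist (C.curve y) w ^ 2 := by
    rw [← sq_abs (y - a), ← mul_pow, two_mul (dist _ _ ^ 2)]
    exact add_le_add (pow_le_pow_left₀ hs.le hy_le 2) (pow_le_pow_left₀ (by positivity) hlin 2)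
  rw [← mul_div_assoc, div_le_div_iff₀ (by positivity) (by positivity)]
  nlinarith

lemma integral_div_dist_sq_le (hs : 0 < s) (hp : p ∈ frontier D ∩ C.map.source)
    (hwp : dist w p = s) (hmin : ∀ ζ ∈ frontier D, s ≤ dist ζ w) :
    ∫ ζ, C.map.source.indicator (fun ζ => s / dist ζ w ^ 2) ζ ∂bdryArc D ≤ 20 / 3 * Real.pi := by
  have hdir := C.norm_dir_pos
  have hcont : ContinuousOn (C.map.source.indicator fun ζ => s / dist ζ w ^ 2)
      (frontier D ∩ C.map.source) := by
    refine ContinuousOn.congr (f := fun ζ => s / dist ζ w ^ 2) ?_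
      fun ζ hζ => indicator_of_mem hζ.2 _
    exact continuousOn_const.div (by fun_prop) fun ζ hζ =>
      pow_ne_zero 2 (hs.trans_le (hmin ζ hζ.1)).ne'
  rw [C.integral_bdryArc hcont fun ζ _ hζ => indicator_of_notMem hζ _]
  obtain ⟨a, ha, rfl⟩ := C.image_curve.symm ▸ hp
  have hint := (integrable_div_sq_add_mul_sq (m := (2 * ‖C.dir‖)⁻¹) (by positivity) hs a).const_mul
    (10 / 3 * ‖C.dir‖⁻¹)
  have hle : ∀ y ∈ ball C.base C.radius,
      C.arcDensity y • C.map.source.indicator (fun ζ => s / dist ζ w ^ 2) (C.curve y) ≤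
        10 / 3 * ‖C.dir‖⁻¹ * (s / (s ^ 2 + (2 * ‖C.dir‖)⁻¹ ^ 2 * (y - a) ^ 2)) := fun y hy => by
    have hyF : C.curve y ∈ frontier D := (C.image_curve.subset (mem_image_of_mem _ hy)).1
    have hmul := mul_le_mul (C.arcDensity_le hy)
      (C.div_dist_curve_sq_le hy ha hs (hmin _ hyF) hwp) (by positivity) (by positivity)
    rw [indicator_of_mem (C.curve_mem_source hy), smul_eq_mul]
    linarith
  calc _ ≤ ∫ y in ball C.base C.radius,
          10 / 3 * ‖C.dir‖⁻¹ * (s / (s ^ 2 + (2 * ‖C.dir‖)⁻¹ ^ 2 * (y - a) ^ 2)) := by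
        refine integral_mono_of_nonneg ?_ hint.integrableOn ?_
        · filter_upwards [ae_restrict_mem measurableSet_ball] with y hy
          exact smul_nonneg (C.arcDensity_nonneg hy) (indicator_nonneg (fun _ _ => by positivity) _)
        · filter_upwards [ae_restrict_mem measurableSet_ball] with y hy using hle y hy
    _ ≤ ∫ y, 10 / 3 * ‖C.dir‖⁻¹ * (s / (s ^ 2 + (2 * ‖C.dir‖)⁻¹ ^ 2 * (y - a) ^ 2)) :=
        setIntegral_le_integral hint (.of_forall fun y => by positivity)
    _ = 20 / 3 * Real.pi := by
        rw [integral_const_mul, integral_div_sq_add_mul_sq (by positivity) hs]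
        field_simp
        norm_num

lemma conj_dir_mul_smul_dir (s : ℝ) :
    conj C.dir * (s * (C.dir / ‖C.dir‖)) = ((s * ‖C.dir‖ : ℝ) : ℂ) := by
  have : (‖C.dir‖ : ℂ) ≠ 0 := ofReal_ne_zero.2 C.norm_dir_pos.ne'
  calc conj C.dir * (s * (C.dir / ‖C.dir‖)) = s * (conj C.dir * C.dir) / ‖C.dir‖ := by ring
    _ = ((s * ‖C.dir‖ : ℝ) : ℂ) := by
      rw [conj_mul']
      push_cast
      field_simp

lemma norm_smul_dir (hs : 0 ≤ s) : ‖(s : ℂ) * (C.dir / ‖C.dir‖)‖ = s := by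
  rw [norm_mul, norm_div, norm_real, norm_real, norm_norm, div_self C.norm_dir_pos.ne', mul_one,
    Real.norm_of_nonneg hs]

lemma le_of_add_smul_dir_mem_source (hs : 0 ≤ s) (hp : p ∈ frontier D ∩ C.map.source)
    (hps : p + s * (C.dir / ‖C.dir‖) ∈ C.map.source) :
    3 / 4 * s * ‖C.dir‖ ≤ Γ (p + s * (C.dir / ‖C.dir‖)) := by
  have hlin := C.norm_map_sub_sub_le _ hps p hp.2
  rw [add_sub_cancel_left, C.conj_dir_mul_smul_dir, C.norm_smul_dir hs] at hlin
  have hre := (abs_le.1 ((abs_re_le_norm _).trans hlin)).1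
  rw [sub_re, sub_re, C.re_map, C.re_map, ofReal_re, (C.mem_frontier_iff p hp.2).1 hp.1] at hre
  linarith

lemma add_smul_dir_notMem_closure (hs : 0 < s) (hp : p ∈ frontier D ∩ C.map.source)
    (hps : p + s * (C.dir / ‖C.dir‖) ∈ C.map.source) :
    p + s * (C.dir / ‖C.dir‖) ∉ closure D := fun hcl => by
  have hdir := C.norm_dir_pos
  have hpos := (by positivity : 0 < 3 / 4 * s * ‖C.dir‖).trans_le
    (C.le_of_add_smul_dir_mem_source hs.le hp hps)
  have hD := mt (C.mem_iff _ hps).1 hpos.not_gt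
  exact hpos.ne' ((C.mem_frontier_iff _ hps).1 (C.isDefining.isOpen.frontier_eq ▸ ⟨hcl, hD⟩))

lemma le_dist_add_smul_dir (hs : 0 ≤ s) (hp : p ∈ frontier D ∩ C.map.source)
    (hps : p + s * (C.dir / ‖C.dir‖) ∈ C.map.source) {ζ : ℂ} (hζ : ζ ∈ frontier D ∩ C.map.source) :
    3 / 5 * s ≤ dist ζ (p + s * (C.dir / ‖C.dir‖)) := by
  have hΓ := C.le_of_add_smul_dir_mem_source hs hp hps
  set w' := p + s * (C.dir / ‖C.dir‖)
  have hmap : ‖C.map w' - C.map ζ‖ ≤ 5 / 4 * ‖C.dir‖ * ‖w' - ζ‖ := by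
    have hlin := C.norm_map_sub_sub_le w' hps ζ hζ.2
    have := norm_le_norm_sub_add (C.map w' - C.map ζ) (conj C.dir * (w' - ζ))
    rw [norm_mul, RCLike.norm_conj] at this
    linarith
  have hre := (le_abs_self _).trans ((abs_re_le_norm _).trans hmap)
  rw [sub_re, C.re_map, C.re_map, (C.mem_frontier_iff ζ hζ.2).1 hζ.1, sub_zero] at hre
  rw [dist_comm, dist_eq_norm]
  refine le_of_mul_le_mul_left ?_ C.norm_dir_pos
  linarith

lemma eventually_exists_isReflection {p₀ : ℂ} (hp₀ : p₀ ∈ frontier D ∩ C.map.source) :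
    ∀ᶠ w in 𝓝[D] p₀, ∃ w', C.IsReflection w w' := by
  obtain ⟨r, hr, hball⟩ := Metric.isOpen_iff.1 C.map.open_source p₀ hp₀.2
  filter_upwards [inter_mem_nhdsWithin D (ball_mem_nhds p₀ (by positivity : 0 < r / 3))]
    with w ⟨hwD, hw⟩
  have hwF : w ∉ frontier D := fun h => (C.isDefining.isOpen.frontier_eq ▸ h).2 hwD
  obtain ⟨p, hpF, hpw⟩ := C.isDefining.isCompact_frontier.exists_infDist_eq_dist ⟨p₀, hp₀.1⟩ w
  have hpos : 0 < infDist w (frontier D) :=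
    (isClosed_frontier.notMem_iff_infDist_pos ⟨p₀, hp₀.1⟩).1 hwF
  have hle := infDist_le_dist_of_mem (x := w) hp₀.1
  set s := infDist w (frontier D)
  rw [mem_ball] at hw
  have hpp₀ : dist p p₀ < 2 / 3 * r := by linarith [dist_triangle_left p p₀ w]
  have hp : p ∈ frontier D ∩ C.map.source := ⟨hpF, hball (mem_ball.2 (by linarith))⟩
  have hdist : dist (p + s * (C.dir / ‖C.dir‖)) p = s := by
    rw [dist_eq_norm, add_sub_cancel_left, C.norm_smul_dir hpos.le]
  have hps : p + s * (C.dir / ‖C.dir‖) ∈ C.map.source := hball <| mem_ball.2 <| by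
    linarith [dist_triangle (p + s * (C.dir / ‖C.dir‖)) p p₀]
  refine ⟨p + s * (C.dir / ‖C.dir‖), hpos, ⟨p, hp, hpw⟩, C.add_smul_dir_notMem_closure hpos hp hps,
    ?_, fun ζ => C.le_dist_add_smul_dir hpos.le hp hps⟩
  linarith [dist_triangle_right w (p + s * (C.dir / ‖C.dir‖)) p]

namespace IsReflection

variable {C} {ζ : ℂ} {r : ℝ}

lemma infDist_le_dist (hζ : ζ ∈ frontier D) : infDist w (frontier D) ≤ dist ζ w :=
  dist_comm w ζ ▸ infDist_le_dist_of_mem hζ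

lemma ne_of_mem_frontier (H : C.IsReflection w w') (hζ : ζ ∈ frontier D) : ζ ≠ w ∧ ζ ≠ w' :=
  ⟨dist_pos.1 (H.infDist_pos.trans_le (infDist_le_dist hζ)),
    fun h => H.notMem_closure (h ▸ frontier_subset_closure hζ)⟩

lemma norm_inv_sub_inv_le_of_mem_source (H : C.IsReflection w w')
    (hζ : ζ ∈ frontier D ∩ C.map.source) :
    ‖(ζ - w)⁻¹ - (ζ - w')⁻¹‖ ≤ 9 * (infDist w (frontier D) / dist ζ w ^ 2) := by
  obtain ⟨hw, hw'⟩ := H.ne_of_mem_frontier hζ.1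
  have hpos := H.infDist_pos
  have hζw := dist_pos.2 hw
  have hζw' := dist_pos.2 hw'
  have hratio : dist ζ w ≤ 9 / 2 * dist ζ w' := by
    linarith [dist_triangle_right ζ w w', H.dist_le, H.le_dist ζ hζ]
  rw [norm_inv_sub_inv_sub hw hw', ← mul_div_assoc, div_le_div_iff₀ (by positivity) (by positivity)]
  calc dist w w' * dist ζ w ^ 2
      ≤ 2 * infDist w (frontier D) * (dist ζ w * (9 / 2 * dist ζ w')) := by
        rw [sq]
        gcongr
        exact H.dist_le
    _ = 9 * infDist w (frontier D) * (dist ζ w * dist ζ w') := by ring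

lemma dist_le_three_mul (H : C.IsReflection w w') {p₀ : ℂ} (hp₀ : p₀ ∈ frontier D) :
    dist w' p₀ ≤ 3 * dist w p₀ := by
  linarith [dist_triangle_left w' p₀ w, H.dist_le, infDist_le_dist_of_mem (x := w) hp₀]

lemma norm_inv_sub_inv_le_of_le_dist (H : C.IsReflection w w') {p₀ : ℂ} (hp₀ : p₀ ∈ frontier D)
    (hr : 0 < r) (hw : dist w p₀ ≤ r / 6) (hζ : ζ ∈ frontier D) (hζr : r ≤ dist ζ p₀) :
    ‖(ζ - w)⁻¹ - (ζ - w')⁻¹‖ ≤ 8 / r ^ 2 * dist w p₀ := by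
  obtain ⟨hw₁, hw₂⟩ := H.ne_of_mem_frontier hζ
  have hw' := H.dist_le_three_mul hp₀
  have hfar : r / 2 ≤ dist ζ w := by linarith [dist_triangle ζ w p₀]
  have hfar' : r / 2 ≤ dist ζ w' := by linarith [dist_triangle ζ w' p₀]
  rw [norm_inv_sub_inv_sub hw₁ hw₂]
  calc dist w w' / (dist ζ w * dist ζ w') ≤ 2 * dist w p₀ / (r / 2 * (r / 2)) := by
        gcongr
        exact H.dist_le.trans (by linarith [infDist_le_dist_of_mem (x := w) hp₀])
    _ = 8 / r ^ 2 * dist w p₀ := by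
        field_simp
        ring

lemma continuousOn_inv_sub_inv (H : C.IsReflection w w') :
    ContinuousOn (fun ζ => (ζ - w)⁻¹ - (ζ - w')⁻¹) (frontier D) := by
  refine ContinuousOn.sub ?_ ?_ <;> refine ContinuousOn.inv₀ (by fun_prop) fun ζ hζ => ?_
  · exact sub_ne_zero.2 (H.ne_of_mem_frontier hζ).1
  · exact sub_ne_zero.2 (H.ne_of_mem_frontier hζ).2

lemma integrable_indicator_norm_inv_sub_inv (H : C.IsReflection w w') :
    Integrable (C.map.source.indicator fun ζ => ‖(ζ - w)⁻¹ - (ζ - w')⁻¹‖) (bdryArc D) :=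
  (C.isDefining.integrable_bdryArc H.continuousOn_inv_sub_inv.norm).indicator
    C.map.open_source.measurableSet

lemma integral_indicator_norm_inv_sub_inv_le (H : C.IsReflection w w') :
    ∫ ζ, C.map.source.indicator (fun ζ => ‖(ζ - w)⁻¹ - (ζ - w')⁻¹‖) ζ ∂bdryArc D ≤
      60 * Real.pi := by
  obtain ⟨p, hp, hwp⟩ := H.exists_infDist_eq_dist
  have hcont : ContinuousOn (fun ζ => infDist w (frontier D) / dist ζ w ^ 2) (frontier D) :=
    continuousOn_const.div (by fun_prop) fun ζ hζ =>
      pow_ne_zero 2 (dist_pos.2 (H.ne_of_mem_frontier hζ).1).ne'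
  have hint := (C.isDefining.integrable_bdryArc hcont).indicator C.map.open_source.measurableSet
  calc _ ≤ ∫ ζ, 9 * C.map.source.indicator
        (fun ζ => infDist w (frontier D) / dist ζ w ^ 2) ζ ∂bdryArc D := by
        refine setIntegral_mono_on H.integrable_indicator_norm_inv_sub_inv (hint.const_mul 9)
          isClosed_frontier.measurableSet fun ζ hζ => ?_
        by_cases hζs : ζ ∈ C.map.source
        · simpa [hζs] using H.norm_inv_sub_inv_le_of_mem_source ⟨hζ, hζs⟩
        · simp [hζs]
    _ ≤ 60 * Real.pi := by
        rw [integral_const_mul]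
        linarith [C.integral_div_dist_sq_le H.infDist_pos hp hwp.symm fun ζ => infDist_le_dist]

lemma norm_integral_mul_inv_sub_inv_le (H : C.IsReflection w w') {p₀ : ℂ} (hp₀ : p₀ ∈ frontier D)
    {ψ : ℂ → ℂ} {η M : ℝ} (hη : 0 ≤ η) (hM : ∀ ζ ∈ frontier D, ‖ψ ζ‖ ≤ M) (hr : 0 < r)
    (hball : ball p₀ r ⊆ C.map.source) (hψ : ∀ ζ ∈ frontier D ∩ ball p₀ r, ‖ψ ζ‖ ≤ η)
    (hw : dist w p₀ ≤ r / 6) :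
    ‖∫ ζ, ψ ζ * ((ζ - w)⁻¹ - (ζ - w')⁻¹) ∂bdryArc D‖ ≤
      η * (60 * Real.pi) + M * (8 / r ^ 2 * dist w p₀) * (bdryArc D).real univ := by
  have hM0 : 0 ≤ M := (norm_nonneg _).trans (hM p₀ hp₀)
  have := C.isDefining.isFiniteMeasure_bdryArc
  have hint := H.integrable_indicator_norm_inv_sub_inv.const_mul η
  have hle : ∀ ζ ∈ frontier D, ‖ψ ζ * ((ζ - w)⁻¹ - (ζ - w')⁻¹)‖ ≤
      η * C.map.source.indicator (fun ζ => ‖(ζ - w)⁻¹ - (ζ - w')⁻¹‖) ζ +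
        M * (8 / r ^ 2 * dist w p₀) := fun ζ hζ => by
    rw [norm_mul]
    by_cases hζr : ζ ∈ ball p₀ r
    · rw [indicator_of_mem (hball hζr)]
      refine le_add_of_le_of_nonneg ?_ (by positivity)
      gcongr
      exact hψ ζ ⟨hζ, hζr⟩
    · refine le_add_of_nonneg_of_le
        (mul_nonneg hη (indicator_nonneg (fun _ _ => norm_nonneg _) _)) ?_
      gcongr
      · exact hM ζ hζ
      · exact H.norm_inv_sub_inv_le_of_le_dist hp₀ hr hw hζ (not_lt.1 hζr)
  refine (norm_integral_le_of_norm_le (hint.add (integrable_const (M * (8 / r ^ 2 * dist w p₀))))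
    ((ae_restrict_iff' isClosed_frontier.measurableSet).2 (.of_forall hle))).trans ?_
  simp only [Pi.add_apply]
  rw [integral_add hint (integrable_const _), integral_const_mul, integral_const, smul_eq_mul,
    mul_comm _ (M * _)]
  gcongr
  exact H.integral_indicator_norm_inv_sub_inv_le

end IsReflection

lemma eventually_norm_integral_mul_inv_sub_inv_lt {p₀ : ℂ} (hp₀ : p₀ ∈ frontier D ∩ C.map.source)
    {ψ : ℂ → ℂ} (hψ : ContinuousOn ψ (frontier D)) (hψ0 : ψ p₀ = 0) {ε : ℝ} (hε : 0 < ε) :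
    ∀ᶠ w in 𝓝 p₀, ∀ w', C.IsReflection w w' →
      ‖∫ ζ, ψ ζ * ((ζ - w)⁻¹ - (ζ - w')⁻¹) ∂bdryArc D‖ < ε := by
  obtain ⟨M, hM⟩ := C.isDefining.isCompact_frontier.exists_bound_of_continuousOn hψ
  set η := ε / (120 * Real.pi)
  have hη : 0 < η := by positivity
  obtain ⟨r₁, hr₁, hψr⟩ := Metric.continuousWithinAt_iff.1 (hψ p₀ hp₀.1) η hη
  obtain ⟨r₂, hr₂, hball⟩ := Metric.isOpen_iff.1 C.map.open_source p₀ hp₀.2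
  set r := min r₁ r₂
  have hr : 0 < r := lt_min hr₁ hr₂
  have hlim : Tendsto (fun w => η * (60 * Real.pi) + M * (8 / r ^ 2 * dist w p₀) *
      (bdryArc D).real univ) (𝓝 p₀) (𝓝 (ε / 2)) := by
    refine Continuous.tendsto' (by fun_prop) _ _ ?_
    simp only [η, dist_self, mul_zero, zero_mul, add_zero]
    field_simp
    norm_num
  filter_upwards [hlim.eventually_lt_const (half_lt_self hε),
    closedBall_mem_nhds p₀ (by positivity : 0 < r / 6)] with w hlt hw w' H
  refine (H.norm_integral_mul_inv_sub_inv_le hp₀.1 hη.le hM hr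
    ((ball_subset_ball (min_le_right _ _)).trans hball) (fun ζ hζ => ?_) hw).trans_lt hlt
  simpa [hψ0] using (hψr hζ.1 (hζ.2.trans_le (min_le_left _ _))).le

end BoundaryChart

/-- The Cauchy integral `(2πi)⁻¹ ∫ b(ζ) dζ / (ζ - w)` over `∂D`, with `dζ = i * unitNormal g ζ |dζ|`
for the gradient `g` of a defining function of `D`. -/
def cauchyIntegral (D : Set ℂ) (g b : ℂ → ℂ) (w : ℂ) : ℂ :=
  (2 * Real.pi : ℂ)⁻¹ * ∫ ζ, b ζ * unitNormal g ζ / (ζ - w) ∂bdryArc D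

namespace IsC1DefiningFunction

variable {D U : Set ℂ} {Γ : ℂ → ℝ} {g b : ℂ → ℂ} {w : ℂ}

lemma continuousOn_unitNormal (B : IsC1DefiningFunction D U Γ g) :
    ContinuousOn (unitNormal g) (frontier D) := by
  have hg := B.continuousOn_grad.mono B.frontier_subset
  exact hg.div (continuousOn_ofReal_comp hg.norm) fun w hw =>
    ofReal_ne_zero.2 (norm_ne_zero_iff.2 (B.grad_ne_zero w hw))

lemma continuousOn_cauchyKernel (B : IsC1DefiningFunction D U Γ g)
    (hb : ContinuousOn b (frontier D)) (hw : w ∉ frontier D) :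
    ContinuousOn (fun ζ => b ζ * unitNormal g ζ / (ζ - w)) (frontier D) :=
  (hb.mul B.continuousOn_unitNormal).div (by fun_prop) fun _ hζ =>
    sub_ne_zero.2 fun h => hw (h ▸ hζ)

end IsC1DefiningFunction

namespace IsGreenExtension

variable {D : Set ℂ} {t : ℂ} {h : ℂ → ℝ} {P : ℂ → ℂ} {U : Set ℂ} {Γ : ℂ → ℝ} {g b : ℂ → ℂ}

lemma cauchyIntegral_const (F : IsGreenExtension D t h P U Γ g) {w : ℂ} (hw : w ∉ frontier D)
    (β : ℂ) : cauchyIntegral D g (fun _ => β) w = D.indicator (fun _ => β) w := by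
  have hpi : (Real.pi : ℂ) ≠ 0 := ofReal_ne_zero.2 Real.pi_ne_zero
  simp only [cauchyIntegral, mul_div_assoc]
  rw [integral_const_mul, F.integral_unitNormal_div_sub hw]
  by_cases hwD : w ∈ D
  · simp only [indicator_of_mem hwD]
    field_simp
  · simp [hwD]

lemma cauchyIntegral_sub_cauchyIntegral (F : IsGreenExtension D t h P U Γ g)
    (hb : ContinuousOn b (frontier D)) {w w' : ℂ} (hw : w ∈ D) (hw' : w' ∉ closure D) (β : ℂ) :
    cauchyIntegral D g b w - β - cauchyIntegral D g b w' =
      (2 * Real.pi : ℂ)⁻¹ *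
        ∫ ζ, (b ζ - β) * unitNormal g ζ * ((ζ - w)⁻¹ - (ζ - w')⁻¹) ∂bdryArc D := by
  have B := F.isC1DefiningFunction
  have hwF : w ∉ frontier D := fun h => (B.isOpen.frontier_eq ▸ h).2 hw
  have hwF' : w' ∉ frontier D := fun h => hw' (frontier_subset_closure h)
  have hconst := F.cauchyIntegral_const hwF β
  have hconst' := F.cauchyIntegral_const hwF' β
  rw [indicator_of_mem hw] at hconst
  rw [indicator_of_notMem fun h => hw' (subset_closure h)] at hconst'
  have hsub {f₁ f₂ : ℂ → ℂ} (h₁ : ContinuousOn f₁ (frontier D))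
      (h₂ : ContinuousOn f₂ (frontier D)) :
      ∫ ζ, f₁ ζ - f₂ ζ ∂bdryArc D = ∫ ζ, f₁ ζ ∂bdryArc D - ∫ ζ, f₂ ζ ∂bdryArc D :=
    integral_sub (B.integrable_bdryArc h₁) (B.integrable_bdryArc h₂)
  have hdens {x : ℂ} (hx : x ∉ frontier D) : cauchyIntegral D g (fun ζ => b ζ - β) x =
      cauchyIntegral D g b x - cauchyIntegral D g (fun _ => β) x := by
    rw [cauchyIntegral, cauchyIntegral, cauchyIntegral, ← mul_sub,
      ← hsub (B.continuousOn_cauchyKernel hb hx)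
        (B.continuousOn_cauchyKernel continuousOn_const hx)]
    simp only [sub_mul, sub_div]
  have hkernel : cauchyIntegral D g (fun ζ => b ζ - β) w -
      cauchyIntegral D g (fun ζ => b ζ - β) w' = (2 * Real.pi : ℂ)⁻¹ *
        ∫ ζ, (b ζ - β) * unitNormal g ζ * ((ζ - w)⁻¹ - (ζ - w')⁻¹) ∂bdryArc D := by
    have hbβ : ContinuousOn (fun ζ => b ζ - β) (frontier D) := hb.sub continuousOn_const
    rw [cauchyIntegral, cauchyIntegral, ← mul_sub,
      ← hsub (B.continuousOn_cauchyKernel hbβ hwF) (B.continuousOn_cauchyKernel hbβ hwF')]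
    simp only [mul_sub, div_eq_mul_inv]
  rw [← hkernel, hdens hwF, hdens hwF', hconst, hconst', sub_zero]

/-- The Sokhotski–Plemelj jump relation: the difference of the Cauchy integral at `w` and at a
reflected point `w'` is a Poisson type integral. -/
lemma tendsto_cauchyIntegral (F : IsGreenExtension D t h P U Γ g)
    (hb : ContinuousOn b (frontier D)) {f : ℂ → ℂ}
    (hext : ∀ w, w ∉ closure D → cauchyIntegral D g b w = f w) {p₀ : ℂ} (hp₀ : p₀ ∈ frontier D)
    (hf : ContinuousAt f p₀) :
    Tendsto (cauchyIntegral D g b) (𝓝[D] p₀) (𝓝 (f p₀ + b p₀)) := by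
  have B := F.isC1DefiningFunction
  obtain ⟨C, hpC, -⟩ := B.exists_boundaryChart hp₀
  have := mem_closure_iff_nhdsWithin_neBot.1 (frontier_subset_closure hp₀)
  obtain ⟨σ, hσ⟩ := (C.eventually_exists_isReflection ⟨hp₀, hpC⟩).choice
  have hσlim : Tendsto σ (𝓝[D] p₀) (𝓝 p₀) := by
    refine tendsto_iff_dist_tendsto_zero.2 (squeeze_zero' (.of_forall fun _ => dist_nonneg)
      (hσ.mono fun w H => H.dist_le_three_mul hp₀) ?_)
    exact (Continuous.tendsto' (by fun_prop) _ _ (by simp)).mono_left nhdsWithin_le_nhds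
  have hint : Tendsto (fun w => ∫ ζ, (b ζ - b p₀) * unitNormal g ζ *
      ((ζ - w)⁻¹ - (ζ - σ w)⁻¹) ∂bdryArc D) (𝓝[D] p₀) (𝓝 0) := by
    have hψ : ContinuousOn (fun ζ => (b ζ - b p₀) * unitNormal g ζ) (frontier D) :=
      (hb.sub continuousOn_const).mul B.continuousOn_unitNormal
    refine Metric.tendsto_nhds.2 fun ε hε => ?_
    filter_upwards [hσ, nhdsWithin_le_nhds
      (C.eventually_norm_integral_mul_inv_sub_inv_lt ⟨hp₀, hpC⟩ hψ (by simp) hε)] with w H hlt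
    simpa using hlt _ H
  have hsum := (hf.tendsto.comp hσlim).add ((hint.const_mul (2 * Real.pi : ℂ)⁻¹).add_const (b p₀))
  rw [mul_zero, zero_add] at hsum
  refine hsum.congr' ?_
  filter_upwards [hσ, self_mem_nhdsWithin] with w H hwD
  rw [← F.cauchyIntegral_sub_cauchyIntegral hb hwD H.notMem_closure, hext _ H.notMem_closure,
    Function.comp_apply]
  ring

end IsGreenExtension

/-! ### The area estimate -/

lemma differentiableOn_integral_div_sub {μ : Measure ℂ} {s : Set ℂ} {f : ℂ → ℂ} (hs : IsClosed s)
    (hμ : ∀ᵐ ζ ∂μ, ζ ∈ s) (hf : Integrable f μ) :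
    DifferentiableOn ℂ (fun w => ∫ ζ, f ζ / (ζ - w) ∂μ) sᶜ := fun w₀ hw₀ => by
  obtain ⟨r, hr, hrs⟩ := Metric.isOpen_iff.1 hs.isOpen_compl w₀ hw₀
  have hdist (ζ) (hζ : ζ ∈ s) (w) (hw : w ∈ ball w₀ (r / 2)) : r / 2 ≤ ‖ζ - w‖ := by
    have hζ₀ : r ≤ dist ζ w₀ := not_lt.1 fun h => hrs h hζ
    have := dist_triangle ζ w w₀
    rw [← dist_eq_norm]
    linarith [mem_ball.1 hw]
  have hmeas (w) (n : ℕ) : AEStronglyMeasurable (fun ζ => f ζ / (ζ - w) ^ n) μ := by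
    have : Measurable fun ζ => ((ζ - w) ^ n)⁻¹ := by fun_prop
    simpa only [div_eq_mul_inv] using hf.aestronglyMeasurable.fun_mul this.aestronglyMeasurable
  have hw₀r := mem_ball_self (x := w₀) (half_pos hr)
  have hderiv := (hasDerivAt_integral_of_dominated_loc_of_deriv_le (μ := μ) (x₀ := w₀)
    (F := fun w ζ => f ζ / (ζ - w)) (F' := fun w ζ => f ζ / (ζ - w) ^ 2)
    (bound := fun ζ => ‖f ζ‖ / (r / 2) ^ 2) (ball_mem_nhds w₀ (half_pos hr))
    (.of_forall fun w => by simpa using hmeas w 1) ?_ (hmeas w₀ 2) ?_ (hf.norm.div_const _) ?_).2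
  · exact hderiv.differentiableAt.differentiableWithinAt
  · refine (hf.norm.div_const (r / 2)).mono' (by simpa using hmeas w₀ 1) ?_
    filter_upwards [hμ] with ζ hζ
    rw [norm_div]
    gcongr
    exact hdist ζ hζ w₀ hw₀r
  · filter_upwards [hμ] with ζ hζ w hw
    rw [norm_div, norm_pow]
    gcongr
    exact hdist ζ hζ w hw
  · filter_upwards [hμ] with ζ hζ w hw
    have hne : ζ - w ≠ 0 := norm_pos_iff.1 ((half_pos hr).trans_le (hdist ζ hζ w hw))
    refine (((hasDerivAt_id w).const_sub ζ).fun_inv hne |>.const_mul (f ζ)).congr_deriv ?_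
    simp [div_eq_mul_inv]

namespace IsGreenPotential

variable {D : Set ℂ} {t : ℂ} {h : ℂ → ℝ} {P : ℂ → ℂ} {θ : ℝ → ℝ} {c f : ℂ → ℂ}

lemma integrableOn_comp_greenSq_mul (S : IsGreenPotential D t h P) {φ : ℝ → ℝ}
    (hφ : Continuous φ) {a : ℝ} (ha : a < 1) (hφ0 : ∀ x ≥ a, φ x = 0) {m : ℂ → ℝ}
    (hm : ContinuousOn m D) : IntegrableOn (fun w => φ (greenSq t h w) * m w) D := by
  have hcu := S.continuousOn_greenSq
  have hvan : VanishesOffCompact D fun w => φ (greenSq t h w) :=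
    (S.vanishesOffCompact_comp_greenSq ha hφ0).of_imp fun _ _ h => ofReal_eq_zero.1 h
  exact (hvan.mul_right m).integrableOn S.isOpen (by fun_prop)

/-- The Cauchy–Schwarz inequality for the reproducing formula `integral_mul_conj_greenNum`, with the
constant that is optimal for `f` the Bergman kernel. -/
lemma pi_mul_norm_mul_tailIntegral_le (S : IsGreenPotential D t h P) (hθ : IsCutoff θ)
    (hθ0 : ∀ x, 0 ≤ θ x) (hθ1 : ∀ x, θ x ≤ 1) (hf : DifferentiableOn ℂ f D)
    (hfi : IntegrableOn (fun w => ‖f w‖ ^ 2) D) (hc : DifferentiableOn ℂ c D) :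
    Real.pi * (tailIntegral θ 0 * ‖f t * c t‖) ≤ Real.pi / 2 * (∫ w in D, ‖f w‖ ^ 2) +
      (2 * Real.pi)⁻¹ *
        ∫ w in D, θ (greenSq t h w) * (‖c w‖ ^ 2 * ‖greenNum t P w‖ ^ 2 * expWt h w ^ 2) := by
  obtain ⟨a, ha, hθa⟩ := hθ.2
  have hcc := hc.continuousOn
  have hck := S.differentiableOn_greenNum.continuousOn
  have hcv := S.continuousOn_expWt
  have hint := S.integrableOn_comp_greenSq_mul hθ.continuous ha hθa
    (m := fun w => ‖c w‖ ^ 2 * ‖greenNum t P w‖ ^ 2 * expWt h w ^ 2) (by fun_prop)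
  have hnorm : Real.pi * (|tailIntegral θ 0| * ‖f t * c t‖) =
      ‖∫ w in D, (θ (greenSq t h w) : ℂ) *
        (f w * c w * (conj (greenNum t P w) * expWt h w))‖ := by
    rw [S.integral_mul_conj_greenNum hθ (hf.fun_mul hc)]
    simp only [norm_mul, norm_real, Real.norm_eq_abs, abs_of_pos Real.pi_pos]
  calc Real.pi * (tailIntegral θ 0 * ‖f t * c t‖)
      ≤ Real.pi * (|tailIntegral θ 0| * ‖f t * c t‖) := by
        gcongr
        exact le_abs_self _
    _ ≤ ∫ w in D, (Real.pi / 2 * ‖f w‖ ^ 2 + (2 * Real.pi)⁻¹ *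
          (θ (greenSq t h w) * (‖c w‖ ^ 2 * ‖greenNum t P w‖ ^ 2 * expWt h w ^ 2))) := by
        rw [hnorm]
        refine norm_integral_le_of_norm_le ((hfi.const_mul _).add (hint.const_mul _))
          (.of_forall fun w => ?_)
        have hθw := hθ0 (greenSq t h w)
        have hamgm := mul_nonneg hθw (sq_nonneg
          (Real.pi * ‖f w‖ - ‖c w‖ * ‖greenNum t P w‖ * expWt h w))
        have hle := mul_le_of_le_one_left (sq_nonneg (Real.pi * ‖f w‖)) (hθ1 (greenSq t h w))
        simp only [norm_mul, norm_real, RCLike.norm_conj, Real.norm_of_nonneg hθw,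
          Real.norm_of_nonneg (expWt_pos h w).le]
        rw [← mul_le_mul_iff_of_pos_left (mul_pos two_pos Real.pi_pos)]
        field_simp
        linarith
    _ = _ := by
        rw [integral_add (hfi.const_mul _) (hint.const_mul _), integral_const_mul,
          integral_const_mul]

lemma exists_pos_eventually_le_integral_tailIntegral (S : IsGreenPotential D t h P) {m : ℂ → ℝ}
    (hm : ContinuousOn m D) (hm0 : ∀ w ∈ D, 0 ≤ m w) {w₀ : ℂ} (hw₀ : w₀ ∈ D) (hpos : 0 < m w₀) :
    ∃ κ > 0, ∀ᶠ ε in 𝓝[>] (0 : ℝ),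
      κ ≤ ∫ w in D, tailIntegral (stepCutoff ε) (greenSq t h w) * m w := by
  obtain ⟨a, hua, ha⟩ := exists_between (S.greenSq_lt_one w₀ hw₀)
  obtain ⟨δ, hδ, hδm⟩ := exists_between hpos
  have hDw₀ := S.isOpen.mem_nhds hw₀
  have hnear : ∀ᶠ w in 𝓝 w₀, w ∈ D ∧ greenSq t h w < a ∧ δ < m w :=
    Filter.Eventually.and hDw₀
      (((S.continuousOn_greenSq.continuousAt hDw₀).eventually_lt_const hua).and
        ((hm.continuousAt hDw₀).eventually_const_lt hδm))
  obtain ⟨r, hr, hball⟩ := Metric.eventually_nhds_iff_ball.1 hnear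
  have hvol : 0 < (volume : Measure ℂ).real (ball w₀ r) :=
    ENNReal.toReal_pos (measure_ball_pos _ _ hr).ne' measure_ball_lt_top.ne
  refine ⟨(volume : Measure ℂ).real (ball w₀ r) * ((1 - a) / 2 * δ),
    mul_pos hvol (mul_pos (by linarith) hδ), ?_⟩
  filter_upwards [eventually_lt_one_sub_two_mul (by linarith : (1 + a) / 2 < 1)] with ε ⟨hε, hlt⟩
  have hθ := isCutoff_stepCutoff hε
  obtain ⟨a', ha', hzero⟩ := hθ.exists_forall_ge_eq_zero
  have hint := S.integrableOn_comp_greenSq_mul hθ.continuous_tailIntegral ha'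
    (fun x hx => (hzero x hx).2.2) hm
  calc (volume : Measure ℂ).real (ball w₀ r) * ((1 - a) / 2 * δ)
      = ∫ _ in ball w₀ r, (1 - a) / 2 * δ := by rw [setIntegral_const, smul_eq_mul]
    _ ≤ ∫ w in ball w₀ r, tailIntegral (stepCutoff ε) (greenSq t h w) * m w := by
        refine setIntegral_mono_on (integrableOn_const measure_ball_lt_top.ne)
          (hint.mono_set fun w hw => (hball w hw).1) measurableSet_ball fun w hw => ?_
        obtain ⟨hwD, hu, hδw⟩ := hball w hw
        have := le_tailIntegral_stepCutoff hε (S.greenSq_lt_one w hwD).le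
        exact mul_le_mul (by linarith) hδw.le hδ.le
          (tailIntegral_stepCutoff_nonneg (S.greenSq_lt_one w hwD).le)
    _ ≤ _ := setIntegral_mono_set hint
        ((ae_restrict_mem S.isOpen.measurableSet).mono fun w hw => mul_nonneg
          (tailIntegral_stepCutoff_nonneg (S.greenSq_lt_one w hw).le) (hm0 w hw))
        (.of_forall fun w hw => (hball w hw).1)

end IsGreenPotential

namespace IsGreenExtension

variable {D : Set ℂ} {t : ℂ} {h : ℂ → ℝ} {P : ℂ → ℂ} {U : Set ℂ} {Γ : ℂ → ℝ} {g b c f : ℂ → ℂ}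

lemma differentiableOn_cauchyIntegral (F : IsGreenExtension D t h P U Γ g)
    (hb : ContinuousOn b (frontier D)) : DifferentiableOn ℂ (cauchyIntegral D g b) D := by
  have B := F.isC1DefiningFunction
  refine ((differentiableOn_integral_div_sub isClosed_frontier
    (ae_restrict_mem isClosed_frontier.measurableSet)
    (B.integrable_bdryArc (hb.mul B.continuousOn_unitNormal))).const_mul _).mono fun w hw => ?_
  rw [B.isOpen.frontier_eq]
  exact fun h => h.2 hw

/-- By the jump relation, the interior Cauchy integral of `b` extends continuously to `∂D` with
boundary values `b p - (p - t)⁻¹`. -/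
lemma exists_diffContOnCl_eq_sub_mul (F : IsGreenExtension D t h P U Γ g)
    (hb : ContinuousOn b (frontier D))
    (hext : ∀ w ∉ closure D, cauchyIntegral D g b w = -(w - t)⁻¹) :
    ∃ c, DiffContOnCl ℂ c D ∧ c t = 1 ∧ ∀ p ∈ frontier D, c p = (p - t) * b p := by
  have S := F.isGreenPotential
  set c₀ : ℂ → ℂ := fun w => (w - t) * cauchyIntegral D g b w + 1
  have hc₀ : DifferentiableOn ℂ c₀ D := by
    have := F.differentiableOn_cauchyIntegral hb
    fun_prop
  have hbdry (p) (hp : p ∈ frontier D) : Tendsto c₀ (𝓝[D] p) (𝓝 ((p - t) * b p)) := by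
    have hpt : p - t ≠ 0 := sub_ne_zero.2 fun hpt =>
      (S.isOpen.frontier_eq ▸ hp).2 (hpt ▸ S.pole_mem)
    have hjump := F.tendsto_cauchyIntegral hb hext hp
      ((continuousAt_id.sub continuousAt_const).inv₀ hpt).neg
    have hsub : Tendsto (fun w => w - t) (𝓝[D] p) (𝓝 (p - t)) :=
      (continuous_sub_right t).continuousWithinAt
    convert (hsub.mul hjump).add_const 1 using 2
    field_simp
    ring
  have heq (w) (hw : w ∈ D) : extendFrom D c₀ w = c₀ w :=
    extendFrom_eq (subset_closure hw) (hc₀.continuousOn w hw)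
  refine ⟨extendFrom D c₀, ⟨hc₀.congr heq, continuousOn_extendFrom subset_rfl fun p hp => ?_⟩, ?_,
    fun p hp => extendFrom_eq (frontier_subset_closure hp) (hbdry p hp)⟩
  · by_cases hpD : p ∈ D
    · exact ⟨_, hc₀.continuousOn p hpD⟩
    · exact ⟨_, hbdry p (S.isOpen.frontier_eq ▸ ⟨hp, hpD⟩)⟩
  · simp [heq t S.pole_mem, c₀]

lemma tendsto_integral_deriv_stepCutoff_mul_norm_sq (F : IsGreenExtension D t h P U Γ g)
    (hc : ContinuousOn c (closure D)) :
    Tendsto (fun ε => ∫ w in D, -deriv (stepCutoff ε) (greenSq t h w) *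
        (greenSq t h w * ‖c w‖ ^ 2 * ‖greenNum t P w‖ ^ 2 * expWt h w ^ 2)) (𝓝[>] 0)
      (𝓝 (1 / 2 * ∫ w, ‖g w‖ * (‖c w‖ ^ 2 / ‖w - t‖ ^ 2) ∂bdryArc D)) := by
  have S := F.isGreenPotential
  have B := F.isC1DefiningFunction
  set N := U \ {t}
  have hN : IsOpen N := B.isOpen_nhd.sdiff isClosed_singleton
  have hDN : frontier D ⊆ N := fun w hw =>
    ⟨B.frontier_subset hw, fun hwt => (S.isOpen.frontier_eq ▸ hw).2 (hwt ▸ S.pole_mem)⟩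
  set φ : ℂ → ℝ := fun w => ‖c w‖ ^ 2 / ‖w - t‖ ^ 2 * Real.exp (2 * Γ w) ^ 2
  have hφ : ContinuousOn φ (closure D ∩ N) := by
    have hcΓ : ContinuousOn Γ (closure D ∩ N) := fun w hw =>
      (B.hasStrictFDerivAt w hw.2.1).continuousAt.continuousWithinAt
    have hcc : ContinuousOn c (closure D ∩ N) := hc.mono inter_subset_left
    have hne (w) (hw : w ∈ closure D ∩ N) : ‖w - t‖ ^ 2 ≠ 0 :=
      pow_ne_zero 2 (norm_ne_zero_iff.2 (sub_ne_zero.2 hw.2.2))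
    have hquot : ContinuousOn (fun w => ‖c w‖ ^ 2 / ‖w - t‖ ^ 2) (closure D ∩ N) :=
      (hcc.norm.pow 2).div (by fun_prop) hne
    exact hquot.mul (by fun_prop)
  have hlim := F.tendsto_setIntegral_deriv_stepCutoff hN hDN (continuousOn_ofReal_comp hφ)
  simp only [real_smul, ← ofReal_mul, integral_complex_ofReal] at hlim
  have hlim := (continuous_re.tendsto _).comp hlim
  have hfrontier : ∫ w, ‖g w‖ * φ w ∂bdryArc D =
      ∫ w, ‖g w‖ * (‖c w‖ ^ 2 / ‖w - t‖ ^ 2) ∂bdryArc D :=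
    setIntegral_congr_fun isClosed_frontier.measurableSet fun w hw => by simp [φ, B.eq_zero w hw]
  simp only [Function.comp_def, ofReal_re, hfrontier] at hlim
  refine hlim.congr' ?_
  filter_upwards [F.eventually_deriv_stepCutoff_eq_zero hN hDN] with ε hzero
  refine setIntegral_congr_fun S.isOpen.measurableSet fun w hw => ?_
  by_cases hwN : w ∈ N
  · have hne : ‖w - t‖ ≠ 0 := norm_ne_zero_iff.2 (sub_ne_zero.2 hwN.2)
    simp only [φ, ← F.greenSq_eq w ⟨hw, hwN.1⟩]
    simp only [greenSq]
    field_simp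
  · simp [hzero w ⟨hw, hwN⟩]

theorem two_pi_mul_norm_lt (F : IsGreenExtension D t h P U Γ g) (hf : DifferentiableOn ℂ f D)
    (hfi : IntegrableOn (fun w => ‖f w‖ ^ 2) D) (hc : DiffContOnCl ℂ c D) (hct : c t = 1)
    {w₀ : ℂ} (hw₀ : w₀ ∈ D) (hne : deriv c w₀ + P w₀ * c w₀ ≠ 0) :
    2 * Real.pi * ‖f t‖ < Real.pi * (∫ w in D, ‖f w‖ ^ 2) +
      Real.pi⁻¹ * (1 / 2 * ∫ w, ‖g w‖ * (‖c w‖ ^ 2 / ‖w - t‖ ^ 2) ∂bdryArc D) := by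
  have S := F.isGreenPotential
  have hcd := hc.differentiableOn
  have hpi := Real.pi_pos
  obtain ⟨κ, hκ, hle⟩ := S.exists_pos_eventually_le_integral_tailIntegral
    (m := fun w => expWt h w * ‖deriv c w + P w * c w‖ ^ 2)
    (S.continuousOn_expWt.mul ((S.differentiableOn_deriv_add_mul hcd).continuousOn.norm.pow 2))
    (fun w _ => mul_nonneg (expWt_pos h w).le (sq_nonneg _)) hw₀
    (mul_pos (expWt_pos h w₀) (pow_pos (norm_pos_iff.2 hne) 2))
  have hlim := F.tendsto_integral_deriv_stepCutoff_mul_norm_sq hc.continuousOn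
  have hleft : Tendsto (fun ε => 2 * Real.pi * ((1 - 2 * ε) * ‖f t‖)) (𝓝[>] 0)
      (𝓝 (2 * Real.pi * ‖f t‖)) :=
    (Continuous.tendsto' (by fun_prop) _ _ (by simp)).mono_left nhdsWithin_le_nhds
  have hlimit := le_of_tendsto_of_tendsto hleft
    (((hlim.sub_const κ).const_mul Real.pi⁻¹).const_add (Real.pi * ∫ w in D, ‖f w‖ ^ 2)) ?_
  · linarith [mul_pos (inv_pos.2 hpi) hκ]
  filter_upwards [hle, self_mem_nhdsWithin] with ε hle hε
  have hθ := isCutoff_stepCutoff hε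
  have hcs := S.pi_mul_norm_mul_tailIntegral_le hθ (stepCutoff_nonneg ε) (stepCutoff_le_one ε)
    hf hfi hcd
  have hgreen := S.integral_tailIntegral_add_integral_cutoff hθ hcd
  have htail := le_tailIntegral_stepCutoff hε zero_le_one
  rw [hct, mul_one] at hcs
  calc 2 * Real.pi * ((1 - 2 * ε) * ‖f t‖)
      ≤ 2 * (Real.pi * (tailIntegral (stepCutoff ε) 0 * ‖f t‖)) := by
        rw [mul_assoc]
        gcongr
        linarith
    _ ≤ Real.pi * (∫ w in D, ‖f w‖ ^ 2) + Real.pi⁻¹ * ∫ w in D, stepCutoff ε (greenSq t h w) *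
          (‖c w‖ ^ 2 * ‖greenNum t P w‖ ^ 2 * expWt h w ^ 2) := by
        rw [mul_inv] at hcs
        linarith
    _ ≤ _ := by
        gcongr
        linarith

end IsGreenExtension

/-! ### Proper maps to the disc -/

lemma isPreconnected_annulus {r : ℝ} (hr : 0 < r) : IsPreconnected {a : ℂ | r < ‖a‖ ∧ ‖a‖ < 1} := by
  have hstrip : IsPreconnected (re ⁻¹' Ioo (Real.log r) 0) :=
    ((convex_Ioo _ _).is_linear_preimage reLm.isLinear).isPreconnected
  convert hstrip.image exp continuous_exp.continuousOn using 1
  ext a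
  constructor
  · rintro ⟨hra, ha1⟩
    refine ⟨log a, ?_, exp_log (norm_pos_iff.1 (hr.trans hra))⟩
    rw [mem_preimage, log_re]
    exact ⟨Real.log_lt_log hr hra, Real.log_neg (hr.trans hra) ha1⟩
  · rintro ⟨b, ⟨hrb, hb0⟩, rfl⟩
    simp only [mem_ofPred_eq, norm_exp]
    exact ⟨(Real.log_lt_iff_lt_exp hr).1 hrb, Real.exp_lt_one_iff.2 hb0⟩

lemma exists_norm_eq_one_forall_mul_notMem {C : Set ℂ} (hC : C.Countable) :
    ∃ e : ℂ, ‖e‖ = 1 ∧ ∀ s : ℝ, 0 < s → (s : ℂ) * e ∉ C := by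
  obtain ⟨φ, hφ, hφC⟩ : ∃ φ ∈ Ioo (0 : ℝ) 1, φ ∉ arg '' C := by
    by_contra! hsub
    exact zero_lt_one.not_ge (Cardinal.Real.Ioo_countable_iff.1 ((hC.image arg).mono hsub))
  refine ⟨exp (φ * I), norm_exp_ofReal_mul_I φ, fun s hs hsC => hφC ⟨_, hsC, ?_⟩⟩
  have hpi := Real.pi_gt_three
  rw [arg_real_mul _ hs, arg_exp_mul_I, toIocMod_eq_self]
  constructor <;> linarith [hφ.1, hφ.2]

/-- `F` is a proper holomorphic map from the domain `D` to the unit disc, whose only zero is a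
simple zero at `t`. -/
structure IsProperDiscMap (D : Set ℂ) (F : ℂ → ℂ) (t : ℂ) : Prop where
  isOpen : IsOpen D
  isConnected : IsConnected D
  mem : t ∈ D
  differentiableOn : DifferentiableOn ℂ F D
  eq_of_eq_zero : ∀ w ∈ D, F w = 0 → w = t
  deriv_ne_zero : deriv F t ≠ 0
  norm_lt_one : ∀ w ∈ D, ‖F w‖ < 1
  isCompact_norm_le : ∀ r < 1, IsCompact {w | w ∈ D ∧ ‖F w‖ ≤ r}

/-- The set of values that `F` takes at least twice on `D`. -/
def multipleValues (D : Set ℂ) (F : ℂ → ℂ) : Set ℂ :=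
  {a | ∃ w₁ ∈ D, ∃ w₂ ∈ D, w₁ ≠ w₂ ∧ F w₁ = a ∧ F w₂ = a}

namespace IsProperDiscMap

variable {D : Set ℂ} {F : ℂ → ℂ} {t : ℂ}

lemma analyticOnNhd (M : IsProperDiscMap D F t) : AnalyticOnNhd ℂ F D :=
  M.differentiableOn.analyticOnNhd M.isOpen

lemma isOpen_image (M : IsProperDiscMap D F t) {s : Set ℂ} (hsD : s ⊆ D) (hs : IsOpen s) :
    IsOpen (F '' s) := by
  rcases M.analyticOnNhd.is_constant_or_isOpen M.isConnected.isPreconnected with ⟨c, hc⟩ | hopen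
  · have hev : F =ᶠ[𝓝 t] fun _ => c := mem_of_superset (M.isOpen.mem_nhds M.mem) hc
    exact absurd (hev.deriv_eq.trans (deriv_const t c)) M.deriv_ne_zero
  · exact hopen s hsD hs

lemma exists_subseq_tendsto (M : IsProperDiscMap D F t) {w : ℕ → ℂ} (hw : ∀ n, w n ∈ D) {a : ℂ}
    (ha : ‖a‖ < 1) (hlim : Tendsto (fun n => F (w n)) atTop (𝓝 a)) :
    ∃ y ∈ D, ∃ φ : ℕ → ℕ, StrictMono φ ∧ Tendsto (w ∘ φ) atTop (𝓝 y) ∧ F y = a := by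
  obtain ⟨r, har, hr1⟩ := exists_between ha
  have hev : ∀ᶠ n in atTop, w n ∈ {w | w ∈ D ∧ ‖F w‖ ≤ r} :=
    (hlim.norm.eventually_lt_const har).mono fun n hn => ⟨hw n, hn.le⟩
  obtain ⟨y, hy, φ, hφ, hφy⟩ := (M.isCompact_norm_le r hr1).tendsto_subseq' hev.frequently
  have hFy := (M.differentiableOn.continuousOn.continuousAt
    (M.isOpen.mem_nhds hy.1)).tendsto.comp hφy
  exact ⟨y, hy.1, φ, hφ, hφy, tendsto_nhds_unique hFy (hlim.comp hφ.tendsto_atTop)⟩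

lemma isOpen_multipleValues (M : IsProperDiscMap D F t) : IsOpen (multipleValues D F) := by
  rw [isOpen_iff_mem_nhds]
  rintro a ⟨w₁, hw₁, w₂, hw₂, hne, rfl, hFw₂⟩
  obtain ⟨N₁, N₂, hN₁, hN₂, hwN₁, hwN₂, hN⟩ := t2_separation hne
  have himage {N w} (hN : IsOpen N) (hwN : w ∈ N) (hw : w ∈ D) : F '' (N ∩ D) ∈ 𝓝 (F w) :=
    (M.isOpen_image inter_subset_right (hN.inter M.isOpen)).mem_nhds ⟨w, ⟨hwN, hw⟩, rfl⟩
  filter_upwards [himage hN₁ hwN₁ hw₁, hFw₂ ▸ himage hN₂ hwN₂ hw₂]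
  rintro x ⟨y₁, ⟨hyN₁, hy₁⟩, hFy₁⟩ ⟨y₂, ⟨hyN₂, hy₂⟩, hFy₂⟩
  refine ⟨y₁, hy₁, y₂, hy₂, ?_, hFy₁, hFy₂⟩
  rintro rfl
  exact disjoint_left.1 hN hyN₁ hyN₂

-- Two sequences of distinct preimages cannot merge at a point where `F` is locally injective.
lemma mem_multipleValues_of_mem_closure (M : IsProperDiscMap D F t) {a : ℂ} (ha : ‖a‖ < 1)
    (hcl : a ∈ closure (multipleValues D F)) (hcrit : ∀ w ∈ D, F w = a → deriv F w ≠ 0) :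
    a ∈ multipleValues D F := by
  obtain ⟨x, hx, hxa⟩ := mem_closure_iff_seq_limit.1 hcl
  choose w₁ hw₁ w₂ hw₂ hne hFw₁ hFw₂ using hx
  obtain ⟨y₁, hy₁, φ, hφ, hφy₁, hFy₁⟩ :=
    M.exists_subseq_tendsto hw₁ ha (by simpa only [hFw₁] using hxa)
  obtain ⟨y₂, hy₂, ψ, hψ, hψy₂, hFy₂⟩ := M.exists_subseq_tendsto (fun n => hw₂ (φ n)) ha
    (by simpa only [hFw₂, Function.comp_def] using hxa.comp hφ.tendsto_atTop)
  refine ⟨y₁, hy₁, y₂, hy₂, ?_, hFy₁, hFy₂⟩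
  rintro rfl
  obtain ⟨N, hN, hinj⟩ : ∃ N ∈ 𝓝 y₁, InjOn F N := by
    have hF := (M.analyticOnNhd y₁ hy₁).hasStrictDerivAt.hasStrictFDerivAt_equiv
      (hcrit y₁ hy₁ hFy₁)
    exact ⟨_, (hF.toOpenPartialHomeomorph F).open_source.mem_nhds
      hF.mem_toOpenPartialHomeomorph_source, (hF.toOpenPartialHomeomorph F).injOn⟩
  obtain ⟨n, hn₁, hn₂⟩ :=
    (((hφy₁.comp hψ.tendsto_atTop).eventually hN).and (hψy₂.eventually hN)).exists
  exact hne (φ (ψ n)) (hinj hn₁ hn₂ ((hFw₁ _).trans (hFw₂ _).symm))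

lemma countable_deriv_eq_zero (M : IsProperDiscMap D F t) :
    {w | w ∈ D ∧ deriv F w = 0}.Countable := by
  rcases M.analyticOnNhd.deriv.eqOn_zero_or_eventually_ne_zero_of_preconnected
    M.isConnected.isPreconnected with hzero | hne
  · exact absurd (hzero M.mem) M.deriv_ne_zero
  · have hdisc : IsDiscrete ({w | deriv F w = 0} ∩ D) := isDiscrete_of_codiscreteWithin hne
    exact ((HereditarilyLindelofSpace.isLindelof _).countable_of_isDiscrete hdisc).mono
      fun _ hw => hw.symm

lemma exists_ray_notMem_multipleValues (M : IsProperDiscMap D F t) :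
    ∃ e : ℂ, ‖e‖ = 1 ∧ ∀ r : ℝ, 0 < r → r < 1 → (r : ℂ) * e ∉ multipleValues D F := by
  obtain ⟨e, he, hcrit⟩ :=
    exists_norm_eq_one_forall_mul_notMem (M.countable_deriv_eq_zero.image F)
  refine ⟨e, he, fun r hr0 hr1 hr => ?_⟩
  -- Multiplicity propagates along the segment from `r * e` to `0`, which has only one preimage.
  have hcont : Continuous fun s : ℝ => (s : ℂ) * e := by fun_prop
  have hsub : Icc 0 r ⊆ (fun s : ℝ => (s : ℂ) * e) ⁻¹' multipleValues D F := by
    refine isPreconnected_Icc.subset_of_closure_inter_subset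
      (M.isOpen_multipleValues.preimage hcont) ⟨r, ⟨hr0.le, le_rfl⟩, hr⟩ ?_
    rintro s ⟨hs, hs0, hsr⟩
    refine M.mem_multipleValues_of_mem_closure ?_ (hcont.closure_preimage_subset _ hs) ?_
    · rw [norm_mul, he, norm_real, Real.norm_of_nonneg hs0, mul_one]
      exact hsr.trans_lt hr1
    · intro w hw hFw
      rcases hs0.eq_or_lt with rfl | hs0
      · simp only [ofReal_zero, zero_mul] at hFw
        exact M.eq_of_eq_zero w hw hFw ▸ M.deriv_ne_zero
      · exact fun hd => hcrit s hs0 ⟨w, ⟨hw, hd⟩, hFw⟩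
  obtain ⟨w₁, hw₁, w₂, hw₂, hne, hFw₁, hFw₂⟩ := hsub ⟨le_rfl, hr0.le⟩
  simp only [ofReal_zero, zero_mul] at hFw₁ hFw₂
  exact hne ((M.eq_of_eq_zero w₁ hw₁ hFw₁).trans (M.eq_of_eq_zero w₂ hw₂ hFw₂).symm)

lemma annulus_subset_image (M : IsProperDiscMap D F t) {r : ℝ} (hr0 : 0 < r) (hr1 : r < 1)
    {O₁ O₂ : Set ℂ} (hO₁ : IsOpen O₁) (hO₂ : IsOpen O₂) (hO : Disjoint O₁ O₂)
    (hcov : ∀ w ∈ D, r < ‖F w‖ → w ∈ O₁ ∪ O₂) (hne : (frontier D ∩ O₁).Nonempty) :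
    {a : ℂ | r < ‖a‖ ∧ ‖a‖ < 1} ⊆ F '' (O₁ ∩ (D ∩ {w | r < ‖F w‖})) := by
  have hW : IsOpen (O₁ ∩ (D ∩ {w | r < ‖F w‖})) := hO₁.inter
    (M.differentiableOn.continuousOn.norm.isOpen_inter_preimage M.isOpen isOpen_Ioi)
  refine (isPreconnected_annulus hr0).subset_of_closure_inter_subset
    (M.isOpen_image (fun w hw => hw.2.1) hW) ?_ ?_
  · obtain ⟨p, hp, hpO⟩ := hne
    have hpD : p ∉ D := (M.isOpen.frontier_eq ▸ hp).2
    have hN : O₁ ∩ {w | w ∈ D ∧ ‖F w‖ ≤ r}ᶜ ∈ 𝓝 p :=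
      (hO₁.inter (M.isCompact_norm_le r hr1).isClosed.isOpen_compl).mem_nhds
        ⟨hpO, fun h => hpD h.1⟩
    obtain ⟨w, ⟨hwO, hwr⟩, hwD⟩ := mem_closure_iff_nhds.1 (frontier_subset_closure hp) _ hN
    have hrw : r < ‖F w‖ := not_le.1 fun h => hwr ⟨hwD, h⟩
    exact ⟨F w, ⟨hrw, M.norm_lt_one w hwD⟩, ⟨w, ⟨hwO, hwD, hrw⟩, rfl⟩⟩
  · rintro a ⟨hcl, hra, ha1⟩
    obtain ⟨x, hx, hxa⟩ := mem_closure_iff_seq_limit.1 hcl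
    choose w hw hFw using hx
    obtain ⟨y, hy, φ, -, hφy, rfl⟩ :=
      M.exists_subseq_tendsto (fun n => (hw n).2.1) ha1 (by simpa only [hFw] using hxa)
    refine ⟨y, ⟨(hcov y hy hra).resolve_right fun hyO => ?_, hy, hra⟩, rfl⟩
    obtain ⟨n, hn⟩ := (hφy.eventually (hO₂.mem_nhds hyO)).exists
    exact disjoint_left.1 hO (hw (φ n)).1 hn

lemma exists_lt_one_forall_norm_le (M : IsProperDiscMap D F t) {K : Set ℂ} (hK : IsCompact K)
    (hKD : K ⊆ D) : ∃ r : ℝ, 0 < r ∧ r < 1 ∧ ∀ w ∈ K, ‖F w‖ ≤ r := by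
  have hKtD : insert t K ⊆ D := insert_subset M.mem hKD
  obtain ⟨w, hw, hmax⟩ := (hK.insert t).exists_isMaxOn (insert_nonempty t K)
    (M.differentiableOn.continuousOn.norm.mono hKtD)
  obtain ⟨r, hwr, hr1⟩ := exists_between (M.norm_lt_one w (hKtD hw))
  exact ⟨r, (norm_nonneg _).trans_lt hwr, hr1,
    fun y hy => (hmax (mem_insert_of_mem t hy)).trans hwr.le⟩

-- If the frontier splits, each piece alone accounts for all values near the unit circle, so these
-- are all taken twice.
theorem isPreconnected_frontier (M : IsProperDiscMap D F t) (hD : Bornology.IsBounded D) :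
    IsPreconnected (frontier D) := by
  rw [isPreconnected_iff_subset_of_fully_disjoint_closed isClosed_frontier]
  intro E₁ E₂ hE₁ hE₂ hE hdisj
  by_contra! hcon
  obtain ⟨⟨p₂, hp₂, hpE₁⟩, ⟨p₁, hp₁, hpE₂⟩⟩ := hcon.imp not_subset.1 not_subset.1
  obtain ⟨O₁, O₂, hO₁, hO₂, hEO₁, hEO₂, hO⟩ := normal_separation hE₁ hE₂ hdisj
  have hKD : closure D \ (O₁ ∪ O₂) ⊆ D := fun w ⟨hw, hwO⟩ => by
    by_contra hwD
    exact hwO (union_subset_union hEO₁ hEO₂ (hE (M.isOpen.frontier_eq ▸ ⟨hw, hwD⟩)))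
  obtain ⟨r, hr0, hr1, hr⟩ :=
    M.exists_lt_one_forall_norm_le (hD.isCompact_closure.diff (hO₁.union hO₂)) hKD
  have hcov (w) (hw : w ∈ D) (hrw : r < ‖F w‖) : w ∈ O₁ ∪ O₂ := by
    by_contra hwO
    exact (hr w ⟨subset_closure hw, hwO⟩).not_gt hrw
  have himage₁ := M.annulus_subset_image hr0 hr1 hO₁ hO₂ hO hcov
    ⟨p₁, hp₁, hEO₁ ((hE hp₁).resolve_right hpE₂)⟩
  have himage₂ := M.annulus_subset_image hr0 hr1 hO₂ hO₁ hO.symm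
    (fun w hw h => (hcov w hw h).symm) ⟨p₂, hp₂, hEO₂ ((hE hp₂).resolve_left hpE₁)⟩
  obtain ⟨e, he, hray⟩ := M.exists_ray_notMem_multipleValues
  obtain ⟨s, hrs, hs1⟩ := exists_between hr1
  have hs : (s : ℂ) * e ∈ {a : ℂ | r < ‖a‖ ∧ ‖a‖ < 1} := by
    simpa [he, abs_of_pos (hr0.trans hrs)] using And.intro hrs hs1
  obtain ⟨w₁, ⟨hwO₁, hw₁, -⟩, hFw₁⟩ := himage₁ hs
  obtain ⟨w₂, ⟨hwO₂, hw₂, -⟩, hFw₂⟩ := himage₂ hs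
  refine hray s (hr0.trans hrs) hs1 ⟨w₁, hw₁, w₂, hw₂, ?_, hFw₁, hFw₂⟩
  rintro rfl
  exact disjoint_left.1 hO hwO₁ hwO₂

end IsProperDiscMap

namespace IsGreenPotential

variable {D : Set ℂ} {t : ℂ} {h : ℂ → ℝ} {P c : ℂ → ℂ}

lemma norm_sq_mul_expWt_eq (S : IsGreenPotential D t h P) (hc : DifferentiableOn ℂ c D)
    (hct : c t = 1) (hq : ∀ w ∈ D, deriv c w + P w * c w = 0) {w : ℂ} (hw : w ∈ D) :
    ‖c w‖ ^ 2 * expWt h w = expWt h t := by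
  have hW (w) (hw : w ∈ D) : HasWirtingerDerivAt (fun w => c w * conj (c w) * expWt h w) 0 0 w := by
    have hcw := HasWirtingerDerivAt.of_differentiableOn S.isOpen hc hw
    have hq' : conj (deriv c w) + conj (P w) * conj (c w) = 0 := by
      rw [← map_mul, ← map_add, hq w hw, map_zero]
    refine ((hcw.mul hcw.conj_comp).mul (S.hasWirtingerDerivAt_expWt hw)).congr_deriv ?_ ?_
    · rw [map_zero]
      linear_combination (conj (c w) * expWt h w) * hq w hw
    · linear_combination (c w * expWt h w) * hq'
  have hconst := S.isOpen.is_const_of_fderiv_eq_zero (𝕜 := ℝ) S.isConnected.isPreconnected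
    (fun x hx => (HasFDerivAt.differentiableAt (hW x hx)).differentiableWithinAt)
    (fun x hx => (HasFDerivAt.fderiv (hW x hx)).trans (by ext; simp [wirtingerCLM_apply]))
    hw S.pole_mem
  simp only [mul_conj', hct, map_one, one_mul] at hconst
  exact_mod_cast hconst

theorem exists_isProperDiscMap (S : IsGreenPotential D t h P) (hc : DifferentiableOn ℂ c D)
    (hct : c t = 1) (hq : ∀ w ∈ D, deriv c w + P w * c w = 0) : ∃ F, IsProperDiscMap D F t := by
  have hcv (w) (hw : w ∈ D) := S.norm_sq_mul_expWt_eq hc hct hq hw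
  have hc0 (w) (hw : w ∈ D) : c w ≠ 0 := fun h0 =>
    (expWt_pos h t).ne (by rw [← hcv w hw, h0, norm_zero, zero_pow two_ne_zero, zero_mul])
  have ha0 : (√(expWt h t) : ℂ) ≠ 0 := ofReal_ne_zero.2 (Real.sqrt_pos.2 (expWt_pos h t)).ne'
  have hnorm (w) (hw : w ∈ D) : ‖√(expWt h t) * (w - t) / c w‖ ^ 2 = greenSq t h w := by
    have := norm_ne_zero_iff.2 (hc0 w hw)
    rw [norm_div, norm_mul, norm_real, Real.norm_of_nonneg (Real.sqrt_nonneg _), div_pow, mul_pow,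
      Real.sq_sqrt (expWt_pos h t).le, ← hcv w hw, greenSq]
    field_simp
  refine ⟨fun w => √(expWt h t) * (w - t) / c w, S.isOpen, S.isConnected, S.pole_mem,
    DifferentiableOn.fun_div (by fun_prop) hc hc0, fun w hw h0 => ?_, ?_, fun w hw => ?_,
    fun r hr => ?_⟩
  · simpa [ha0, hc0 w hw, sub_eq_zero] using h0
  · have hsub := ((hasDerivAt_id t).sub_const t).const_mul (√(expWt h t) : ℂ)
    have hct' := (hc.differentiableAt (S.isOpen.mem_nhds S.pole_mem)).hasDerivAt
    have hderiv := (hsub.fun_div hct' (hc0 t S.pole_mem)).deriv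
    simp only [id, hct, sub_self, mul_zero, zero_mul, mul_one, sub_zero, one_pow, div_one] at hderiv
    rwa [hderiv]
  · rw [← sq_lt_one_iff₀ (norm_nonneg _), hnorm w hw]
    exact S.greenSq_lt_one w hw
  · rcases lt_or_ge r 0 with hr0 | hr0
    · convert isCompact_empty (X := ℂ)
      exact eq_empty_of_forall_notMem fun w hw => (hr0.trans_le (norm_nonneg _)).not_ge hw.2
    · convert S.isCompact_greenSq_le (r ^ 2) (pow_lt_one₀ hr0 hr two_ne_zero) using 1
      ext w
      refine and_congr_right fun hw => ?_
      rw [← hnorm w hw, pow_le_pow_iff_left₀ (norm_nonneg _) hr0 two_ne_zero]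

end IsGreenPotential

/-! ### The Green function -/

lemma isCompact_sublevel_of_tendsto_frontier {X Y : Type*} [PseudoMetricSpace X] [ProperSpace X]
    [TopologicalSpace Y] [LinearOrder Y] [OrderClosedTopology Y] {D : Set X} {u : X → Y} {L a : Y}
    (hD : Bornology.IsBounded D) (hu : ContinuousOn u D)
    (hL : ∀ p ∈ frontier D, Tendsto u (𝓝[D] p) (𝓝 L)) (ha : a < L) :
    IsCompact {w | w ∈ D ∧ u w ≤ a} := by
  set S := {w | w ∈ D ∧ u w ≤ a}
  have hSD : S ⊆ D := fun w hw => hw.1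
  refine isCompact_of_isClosed_isBounded (isClosed_of_closure_subset fun p hp => ?_)
    (hD.subset hSD)
  have := mem_closure_iff_nhdsWithin_neBot.1 hp
  have hle : ∀ᶠ w in 𝓝[S] p, u w ≤ a := eventually_mem_nhdsWithin.mono fun w hw => hw.2
  by_cases hpD : p ∈ D
  · exact ⟨hpD, le_of_tendsto ((hu p hpD).mono hSD) hle⟩
  · have hpf : p ∈ frontier D := ⟨closure_mono hSD hp, fun h => hpD (interior_subset h)⟩
    exact absurd (le_of_tendsto ((hL p hpf).mono_left (nhdsWithin_mono p hSD)) hle) ha.not_ge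

lemma innerSL_gradient (u : ℂ → ℝ) (w : ℂ) : innerSL ℝ (gradient u w) = fderiv ℝ u w := by
  ext x
  exact InnerProductSpace.toDual_symm_apply (𝕜 := ℝ) (E := ℂ)

lemma gradient_eq_of_hasFDerivAt_innerSL {u : ℂ → ℝ} {g w : ℂ}
    (hu : HasFDerivAt u (innerSL ℝ g) w) : gradient u w = g :=
  HasGradientAt.gradient (𝕜 := ℝ) (F := ℂ) hu

lemma HasWirtingerDerivAt.of_hasFDerivAt_innerSL {u : ℂ → ℝ} {g w : ℂ}
    (hu : HasFDerivAt u (innerSL ℝ g) w) :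
    HasWirtingerDerivAt (fun x => (u x : ℂ)) (conj g / 2) (g / 2) w :=
  .of_hasFDerivAt (ofRealCLM.hasFDerivAt.comp w hu) fun x => by
    apply Complex.ext <;> simp [Complex.inner] <;> ring

lemma hasFDerivAt_re_innerSL {f : ℂ → ℂ} {f' w : ℂ} (hf : HasDerivAt f f' w) :
    HasFDerivAt (fun x => (f x).re) (innerSL ℝ (conj f')) w := by
  refine (reCLM.hasFDerivAt.comp w (hf.hasFDerivAt.restrictScalars ℝ)).congr_fderiv ?_
  ext x
  simp [Complex.inner, mul_comm]

namespace HarmonicOnD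

variable {h : ℂ → ℝ} {D : Set ℂ} {w : ℂ}

lemma exists_eventually_hasFDerivAt (hh : HarmonicOnD h D) (hw : w ∈ D) :
    ∃ f : ℂ → ℂ, DifferentiableAt ℂ (deriv f) w ∧
      ∀ᶠ x in 𝓝 w, HasFDerivAt h (innerSL ℝ (conj (deriv f x))) x := by
  obtain ⟨r, hr, -, f, hf, hre⟩ := hh w hw
  have hball := ball_mem_nhds w hr
  refine ⟨f, (hf.deriv isOpen_ball).differentiableAt hball, ?_⟩
  filter_upwards [eventually_eventually_nhds.2 hball] with x hx
  have hfx := (hf.differentiableAt hx).hasDerivAt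
  exact (hasFDerivAt_re_innerSL hfx).congr_of_eventuallyEq (mem_of_superset hx hre)

lemma hasFDerivAt_innerSL_gradient (hh : HarmonicOnD h D) (hw : w ∈ D) :
    HasFDerivAt h (innerSL ℝ (gradient h w)) w := by
  obtain ⟨f, -, hf⟩ := hh.exists_eventually_hasFDerivAt hw
  exact innerSL_gradient h w ▸ hf.self_of_nhds.differentiableAt.hasFDerivAt

lemma differentiableOn_conj_gradient (hh : HarmonicOnD h D) :
    DifferentiableOn ℂ (fun w => conj (gradient h w)) D := fun w hw => by
  obtain ⟨f, hf', hf⟩ := hh.exists_eventually_hasFDerivAt hw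
  refine (hf'.congr_of_eventuallyEq ?_).differentiableWithinAt
  filter_upwards [hf] with x hx
  rw [gradient_eq_of_hasFDerivAt_innerSL hx, conj_conj]

end HarmonicOnD

lemma greenSq_eq_exp {t w : ℂ} (hw : w ≠ t) (h : ℂ → ℝ) :
    greenSq t h w = Real.exp (2 * (Real.log (dist w t) + h w)) := by
  rw [mul_add, Real.exp_add, two_mul (Real.log _), Real.exp_add, Real.exp_log (dist_pos.2 hw),
    dist_eq_norm, ← sq]
  rfl

namespace IsGreenFunction

variable {D U : Set ℂ} {t w : ℂ} {G : ℂ → EReal} {h Γ : ℂ → ℝ}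

lemma greenSq_lt_one (hG : IsGreenFunction D t G)
    (hl : ∀ w ∈ D \ {t}, G w = ((Real.log (dist w t) + h w : ℝ) : EReal)) (hw : w ∈ D) :
    greenSq t h w < 1 := by
  rcases eq_or_ne w t with rfl | hwt
  · rw [greenSq_self]
    exact one_pos
  · have hneg := hG.neg w hw
    rw [hl w ⟨hw, hwt⟩, EReal.coe_neg'] at hneg
    rw [greenSq_eq_exp hwt, Real.exp_lt_one_iff]
    linarith

lemma tendsto_greenSq (hG : IsGreenFunction D t G)
    (hl : ∀ w ∈ D \ {t}, G w = ((Real.log (dist w t) + h w : ℝ) : EReal)) (ht : t ∉ frontier D)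
    (hw : w ∈ frontier D) : Tendsto (greenSq t h) (𝓝[D] w) (𝓝 1) := by
  have hexp := ((hG.bdry w hw).const_mul 2).rexp
  rw [mul_zero, Real.exp_zero] at hexp
  have hwt : ∀ᶠ x in 𝓝[D] w, x ≠ t := mem_nhdsWithin_of_mem_nhds
    (isOpen_ne.mem_nhds (ne_of_mem_of_not_mem hw ht))
  refine hexp.congr' ?_
  filter_upwards [hwt, self_mem_nhdsWithin] with x hxt hxD
  rw [greenSq_eq_exp hxt, hl x ⟨hxD, hxt⟩, EReal.toReal_coe]

theorem isGreenPotential (hG : IsGreenFunction D t G) (hD : IsOpen D) (hconn : IsConnected D)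
    (hbdd : Bornology.IsBounded D) (ht : t ∈ D) (hh : HarmonicOnD h D)
    (hl : ∀ w ∈ D \ {t}, G w = ((Real.log (dist w t) + h w : ℝ) : EReal)) :
    IsGreenPotential D t h fun w => conj (gradient h w) where
  isOpen := hD
  isConnected := hconn
  isBounded := hbdd
  pole_mem := ht
  differentiableOn := hh.differentiableOn_conj_gradient
  hasWirtingerDerivAt w hw := by
    rw [conj_conj]
    exact .of_hasFDerivAt_innerSL (hh.hasFDerivAt_innerSL_gradient hw)
  greenSq_lt_one w := hG.greenSq_lt_one hl
  isCompact_greenSq_le a ha := by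
    have hhc : ContinuousOn h D := fun w hw =>
      (hh.hasFDerivAt_innerSL_gradient hw).continuousAt.continuousWithinAt
    have hcont : ContinuousOn (greenSq t h) D := by
      unfold greenSq expWt
      fun_prop
    exact isCompact_sublevel_of_tendsto_frontier hbdd hcont
      (fun p => hG.tendsto_greenSq hl fun htf => (hD.frontier_eq ▸ htf).2 ht) ha

theorem isC1DefiningFunction (hG : IsGreenFunction D t G) (hD : IsOpen D)
    (hbdd : Bornology.IsBounded D) (hU : IsOpen U) (hDU : frontier D ⊆ U)
    (hΓ : ContDiffOn ℝ 1 Γ U) (hGΓ : ∀ w ∈ U ∩ closure D, G w = (Γ w : EReal))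
    (hne : ∀ w ∈ frontier D, gradient Γ w ≠ 0) : IsC1DefiningFunction D U Γ (gradient Γ) where
  isOpen := hD
  isBounded := hbdd
  isOpen_nhd := hU
  frontier_subset := hDU
  continuousOn_grad := (InnerProductSpace.toDual ℝ ℂ).symm.continuous.comp_continuousOn
    (hΓ.continuousOn_fderiv_of_isOpen hU le_rfl)
  hasStrictFDerivAt w hw := by
    rw [innerSL_gradient]
    exact (hΓ.contDiffAt (hU.mem_nhds hw)).hasStrictFDerivAt one_ne_zero
  eq_zero p hp := by
    have := mem_closure_iff_nhdsWithin_neBot.1 (frontier_subset_closure hp)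
    have hΓp : Tendsto Γ (𝓝[D] p) (𝓝 (Γ p)) :=
      (hΓ.continuousOn.continuousAt (hU.mem_nhds (hDU hp))).continuousWithinAt
    refine tendsto_nhds_unique hΓp ((hG.bdry p hp).congr' ?_)
    filter_upwards [self_mem_nhdsWithin, mem_nhdsWithin_of_mem_nhds (hU.mem_nhds (hDU hp))]
      with w hw hwU
    rw [hGΓ w ⟨hwU, subset_closure hw⟩, EReal.toReal_coe]
  lt_zero w hw hwU := by
    have hneg := hG.neg w hw
    rwa [hGΓ w ⟨hwU, subset_closure hw⟩, EReal.coe_neg'] at hneg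
  grad_ne_zero := hne

lemma notMem_of_eq_coe (hG : IsGreenFunction D t G) (ht : t ∈ D)
    (hGΓ : ∀ w ∈ U ∩ closure D, G w = (Γ w : EReal)) : t ∉ U := fun htU =>
  EReal.coe_ne_bot (Γ t) ((hGΓ t ⟨htU, subset_closure ht⟩).symm.trans hG.pole)

end IsGreenFunction

lemma IsGreenPotential.conj_grad_mul_eq {D : Set ℂ} {t : ℂ} {h Γ : ℂ → ℝ} {P : ℂ → ℂ}
    (S : IsGreenPotential D t h P) {g w : ℂ} (hw : w ∈ D) (hwt : w ≠ t)
    (hΓ : HasFDerivAt Γ (innerSL ℝ g) w)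
    (heq : ∀ᶠ x in 𝓝 w, greenSq t h x = Real.exp (2 * Γ x)) :
    conj g * (w - t) = greenNum t P w := by
  have hexp := ((hasDerivAt_id (Γ w)).const_mul 2).exp
  have hW := ((HasWirtingerDerivAt.of_hasFDerivAt_innerSL hΓ).ofReal_comp_hasDerivAt
    hexp).congr_of_eventuallyEq (heq.mono fun x hx => congrArg ofReal hx)
  have huniq := ((S.hasWirtingerDerivAt_greenSq hw).unique hW).1
  simp only [id, ← heq.self_of_nhds, ofReal_mul, ofReal_greenSq] at huniq
  have hv : (expWt h w : ℂ) ≠ 0 := ofReal_ne_zero.2 (expWt_pos h w).ne'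
  have hconj : conj (w - t) ≠ 0 := (map_ne_zero _).2 (sub_ne_zero.2 hwt)
  refine mul_left_cancel₀ (mul_ne_zero hconj hv) ?_
  push_cast at huniq
  linear_combination -huniq

theorem IsGreenFunction.exists_isGreenExtension {D U : Set ℂ} {t : ℂ} {G : ℂ → EReal} {Γ : ℂ → ℝ}
    (hG : IsGreenFunction D t G) (hD : IsOpen D) (hconn : IsConnected D)
    (hbdd : Bornology.IsBounded D) (ht : t ∈ D) (hU : IsOpen U) (hDU : frontier D ⊆ U)
    (hΓ : ContDiffOn ℝ 1 Γ U) (hGΓ : ∀ w ∈ U ∩ closure D, G w = (Γ w : EReal))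
    (hne : ∀ w ∈ frontier D, gradient Γ w ≠ 0) :
    ∃ h P, IsGreenExtension D t h P U Γ (gradient Γ) := by
  obtain ⟨h, hh, hl⟩ := hG.logharm
  have S := hG.isGreenPotential hD hconn hbdd ht hh hl
  have B := hG.isC1DefiningFunction hD hbdd hU hDU hΓ hGΓ hne
  have hneq (w) (hw : w ∈ U) : w ≠ t := ne_of_mem_of_not_mem hw (hG.notMem_of_eq_coe ht hGΓ)
  have heq (w) (hw : w ∈ D ∩ U) : greenSq t h w = Real.exp (2 * Γ w) := by
    have hGw := hGΓ w ⟨hw.2, subset_closure hw.1⟩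
    rw [hl w ⟨hw.1, hneq w hw.2⟩, EReal.coe_eq_coe_iff] at hGw
    rw [greenSq_eq_exp (hneq w hw.2), hGw]
  exact ⟨h, _, S, B, heq, fun w hw => S.conj_grad_mul_eq hw.1 (hneq w hw.2)
    (B.hasStrictFDerivAt w hw.2).hasFDerivAt
    (mem_of_superset ((hD.inter hU).mem_nhds hw) heq)⟩

/-! ### The boundary normal -/

namespace IsC1DefiningFunction

variable {D U : Set ℂ} {Γ : ℂ → ℝ} {g ν : ℂ → ℂ} {p : ℂ}

lemma exists_curve_hasDerivAt (B : IsC1DefiningFunction D U Γ g) (hp : p ∈ frontier D) :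
    ∃ γ : ℝ → ℂ, ∃ r : ℝ, r ≠ 0 ∧ γ 0 = p ∧ (∀ᶠ s in 𝓝 0, γ s ∈ frontier D) ∧
      HasDerivAt γ (r * (I * g p)) 0 := by
  obtain ⟨C, hpC, -⟩ := B.exists_boundaryChart hp
  obtain ⟨y, hy, rfl⟩ : p ∈ C.curve '' ball C.base C.radius := C.image_curve ▸ ⟨hp, hpC⟩
  refine ⟨fun s => C.curve (y + s), (conj C.dir * g (C.curve y)).re⁻¹,
    inv_ne_zero (C.re_conj_dir_mul_grad_pos hpC).ne', by simp, ?_, ?_⟩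
  · have hnear : ∀ᶠ s in 𝓝 (0 : ℝ), y + s ∈ ball C.base C.radius :=
      (continuous_const_add y).continuousAt.eventually_mem
        (isOpen_ball.mem_nhds (by rwa [add_zero]))
    filter_upwards [hnear] with s hs
    exact (C.image_curve.subset ⟨_, hs, rfl⟩).1
  · rw [ofReal_inv]
    refine HasDerivAt.comp_const_add y 0 ?_
    rw [add_zero]
    exact (C.hasStrictDerivAt_curve hy).hasDerivAt

lemma inner_grad_eq_norm (B : IsC1DefiningFunction D U Γ g) (hν : IsOutwardUnitNormal D ν)
    (hp : p ∈ frontier D) (hpos : 0 < innerSL ℝ (g p) (ν p)) : innerSL ℝ (g p) (ν p) = ‖g p‖ := by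
  obtain ⟨hν1, -, hνt⟩ := hν p hp
  obtain ⟨γ, r, hr, hγ0, hγ, hγ'⟩ := B.exists_curve_hasDerivAt hp
  have hinner : innerSL ℝ (g p) (ν p) = (conj (g p) * ν p).re := by
    simp [Complex.inner, mul_comm]
  have htangent : r * (conj (g p) * ν p).im = 0 := by
    rw [← hνt γ hγ0 hγ hγ'.differentiableAt, hγ'.deriv]
    simp
    ring
  have him := (mul_eq_zero.1 htangent).resolve_left hr
  rw [hinner] at hpos ⊢
  rw [← abs_of_pos hpos, abs_re_eq_norm.2 him, norm_mul, RCLike.norm_conj, hν1, mul_one]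

end IsC1DefiningFunction

/-! ### The kernels -/

lemma isNTBoundaryValue_of_continuousOn {D : Set ℂ} {f : ℂ → ℂ} (hf : ContinuousOn f (closure D)) :
    IsNTBoundaryValue D f f := by
  refine (ae_restrict_mem isClosed_frontier.measurableSet).mono fun w hw α _ => ?_
  exact (hf w (frontier_subset_closure hw)).mono fun x hx => subset_closure hx.1

lemma HardyH2c.of_diffContOnCl {D : Set ℂ} {f : ℂ → ℂ} (hD : IsOpen D)
    (hbdd : Bornology.IsBounded D) (hf : DiffContOnCl ℂ f D) : HardyH2c D f := by
  obtain ⟨M, hM⟩ :=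
    hbdd.isCompact_closure.bddAbove_image (hf.continuousOn.norm.pow 2)
  refine ⟨hf.differentiableOn, fun _ => M, fun x hx => ?_,
    fun x hx => hM (mem_image_of_mem _ (subset_closure hx))⟩
  obtain ⟨r, hr, hball⟩ := Metric.isOpen_iff.1 hD x hx
  exact ⟨r, hr, hball, fun _ => (M : ℂ), differentiableOn_const _, fun _ _ => (ofReal_re M).symm⟩

namespace IsSzegoKernel

variable {D : Set ℂ} {lam : ℂ → ℝ} {K : ℂ → ℂ → ℂ} {z w : ℂ}

lemma re_apply_self (hK : IsSzegoKernel D lam K) (hz : z ∈ D) :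
    (K z z).re = (2 * Real.pi)⁻¹ * ∫ ζ, ‖K ζ z‖ ^ 2 * lam ζ ∂bdryArc D := by
  have hrep := hK.reproduce _ _ (hK.hardy z hz) (isNTBoundaryValue_of_continuousOn (hK.cont z hz))
    z hz
  rw [hrep, ← ofReal_ofNat, ← ofReal_mul, ← ofReal_inv, re_ofReal_mul]
  simp only [mul_conj', ← ofReal_mul, ← ofReal_pow, integral_complex_ofReal, ofReal_re]

lemma cauchyIntegral_conj_div (hK : IsSzegoKernel D lam K) (hD : IsOpen D)
    (hbdd : Bornology.IsBounded D) {g : ℂ → ℂ} (hlam : ∀ p ∈ frontier D, lam p = ‖g p‖⁻¹)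
    (hg : ∀ p ∈ frontier D, g p ≠ 0) (hz : z ∈ D) (hw : w ∉ closure D) :
    cauchyIntegral D g (fun ζ => conj (K ζ z) / g ζ) w = -(w - z)⁻¹ := by
  have hf : DiffContOnCl ℂ (fun x => (x - w)⁻¹) D :=
    (differentiable_id.sub_const w).diffContOnCl.inv fun x hx =>
      sub_ne_zero.2 (ne_of_mem_of_not_mem hx hw)
  have hrep := hK.reproduce _ _ (.of_diffContOnCl hD hbdd hf)
    (isNTBoundaryValue_of_continuousOn hf.continuousOn) z hz
  rw [← inv_neg, neg_sub, hrep, cauchyIntegral]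
  congr 1
  refine setIntegral_congr_fun isClosed_frontier.measurableSet fun p hp => ?_
  have hgp := hg p hp
  simp only [hlam p hp, unitNormal, ofReal_inv]
  field_simp

end IsSzegoKernel

namespace IsBergmanKernel

variable {D : Set ℂ} {B : ℂ → ℂ → ℂ} {z : ℂ}

lemma integrableOn_norm_sq (hB : IsBergmanKernel D (fun _ => 1) B) (hD : IsOpen D) (hz : z ∈ D) :
    IntegrableOn (fun w => ‖B w z‖ ^ 2) D := by
  refine ⟨((hB.holo z hz).continuousOn.norm.pow 2).aestronglyMeasurable hD.measurableSet, ?_⟩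
  rw [hasFiniteIntegral_iff_ofReal (.of_forall fun w => sq_nonneg _)]
  simpa [lt_top_iff_ne_top] using hB.sqfin z hz

lemma apply_self (hB : IsBergmanKernel D (fun _ => 1) B) (hD : IsOpen D) (hz : z ∈ D) :
    B z z = (∫ w in D, ‖B w z‖ ^ 2 : ℝ) := by
  rw [hB.reproduce _ (hB.holo z hz) (hB.integrableOn_norm_sq hD hz) z hz,
    ← integral_complex_ofReal]
  simp only [mul_conj', ofReal_one, mul_one, ofReal_pow]

end IsBergmanKernel

theorem IsGreenExtension.pi_mul_re_lt_re {D U : Set ℂ} {t : ℂ} {h Γ lam : ℂ → ℝ} {P g : ℂ → ℂ}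
    {B K : ℂ → ℂ → ℂ} (F : IsGreenExtension D t h P U Γ g)
    (hB : IsBergmanKernel D (fun _ => 1) B) (hK : IsSzegoKernel D lam K)
    (hlam : ∀ p ∈ frontier D, lam p = ‖g p‖⁻¹) (hfr : ¬ IsPreconnected (frontier D)) :
    Real.pi * (B t t).re < (K t t).re := by
  have S := F.isGreenPotential
  have hg := F.isC1DefiningFunction.grad_ne_zero
  have ht := S.pole_mem
  have hb : ContinuousOn (fun ζ => conj (K ζ t) / g ζ) (frontier D) :=
    (continuous_conj.comp_continuousOn ((hK.cont t ht).mono frontier_subset_closure)).div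
      (F.isC1DefiningFunction.continuousOn_grad.mono F.isC1DefiningFunction.frontier_subset) hg
  obtain ⟨c, hc, hct, hcb⟩ := F.exists_diffContOnCl_eq_sub_mul hb fun w hw =>
    hK.cauchyIntegral_conj_div S.isOpen S.isBounded hlam hg ht hw
  obtain ⟨w₀, hw₀, hne⟩ : ∃ w ∈ D, deriv c w + P w * c w ≠ 0 := by
    by_contra! hq
    obtain ⟨_, M⟩ := S.exists_isProperDiscMap hc.differentiableOn hct hq
    exact hfr (M.isPreconnected_frontier S.isBounded)
  have hlt := F.two_pi_mul_norm_lt (hB.holo t ht) (hB.integrableOn_norm_sq S.isOpen ht) hc hct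
    hw₀ hne
  have hcK : ∫ w, ‖g w‖ * (‖c w‖ ^ 2 / ‖w - t‖ ^ 2) ∂bdryArc D =
      ∫ w, ‖K w t‖ ^ 2 * lam w ∂bdryArc D := by
    refine setIntegral_congr_fun isClosed_frontier.measurableSet fun p hp => ?_
    have hpt : ‖p - t‖ ≠ 0 := norm_ne_zero_iff.2 (sub_ne_zero.2 fun hpt =>
      (S.isOpen.frontier_eq ▸ hp).2 (hpt ▸ ht))
    have hgp := norm_ne_zero_iff.2 (hg p hp)
    simp only [hcb p hp, hlam p hp, norm_mul, norm_div, RCLike.norm_conj]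
    field_simp
  have hnorm : ‖B t t‖ = (B t t).re := by
    rw [hB.apply_self S.isOpen ht, norm_real, ofReal_re,
      Real.norm_of_nonneg (integral_nonneg fun _ => sq_nonneg _)]
  have hint : ∫ w in D, ‖B w t‖ ^ 2 = (B t t).re := by
    rw [hB.apply_self S.isOpen ht, ofReal_re]
  rw [hcK, hnorm, hint] at hlt
  rw [hK.re_apply_self ht, mul_inv]
  linarith

/-! ### Boundary components -/

lemma not_isPreconnected_iUnion_of_pairwise_disjoint {X ι : Type*} [TopologicalSpace X] [Finite ι]
    [Nontrivial ι] {E : ι → Set X} (hE : ∀ i, IsClosed (E i)) (hne : ∀ i, (E i).Nonempty)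
    (hdisj : Pairwise fun i j => Disjoint (E i) (E j)) : ¬ IsPreconnected (⋃ i, E i) := by
  intro hconn
  obtain ⟨a, b, hab⟩ := exists_pair_ne ι
  obtain ⟨x, hx⟩ := hne a
  obtain ⟨y, hy⟩ := hne b
  have hclosed : IsClosed (⋃ i : {i // i ≠ a}, E i) := isClosed_iUnion_of_finite fun i => hE i
  have hcover : ⋃ i, E i ⊆ E a ∪ ⋃ i : {i // i ≠ a}, E i := iUnion_subset fun i w hw => by
    rcases eq_or_ne i a with rfl | hi
    exacts [.inl hw, .inr (mem_iUnion.2 ⟨⟨i, hi⟩, hw⟩)]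
  obtain ⟨w, -, hwa, hw⟩ := isPreconnected_closed_iff.1 hconn _ _ (hE a) hclosed hcover
    ⟨x, mem_iUnion.2 ⟨a, hx⟩, hx⟩
    ⟨y, mem_iUnion.2 ⟨b, hy⟩, mem_iUnion.2 ⟨⟨b, hab.symm⟩, hy⟩⟩
  obtain ⟨i, hi⟩ := mem_iUnion.1 hw
  exact disjoint_left.1 (hdisj i.2) hi hwa

lemma IsAnalyticJordanCurve.nonempty {Γ : Set ℂ} (hΓ : IsAnalyticJordanCurve Γ) : Γ.Nonempty := by
  obtain ⟨γ, -, -, -, -, rfl⟩ := hΓ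
  exact range_nonempty γ

lemma IsAnalyticJordanCurve.isClosed {Γ : Set ℂ} (hΓ : IsAnalyticJordanCurve Γ) : IsClosed Γ := by
  obtain ⟨γ, hγ, hper, -, -, rfl⟩ := hΓ
  rw [← hper.image_Icc Real.two_pi_pos 0]
  exact (isCompact_Icc.image hγ.continuous).isClosed

lemma IsRegularRegion.not_isPreconnected_frontier {n : ℕ} {D : Set ℂ} (hD : IsRegularRegion n D)
    (hn : 1 < n) : ¬ IsPreconnected (frontier D) := by
  obtain ⟨-, -, -, Γ, hΓ, hdisj, hfr⟩ := hD
  have := Fin.nontrivial_iff_two_le.2 hn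
  rw [hfr]
  exact not_isPreconnected_iUnion_of_pairwise_disjoint (fun i => (hΓ i).isClosed)
    (fun i => (hΓ i).nonempty) hdisj

theorem saitoh_conjecture_general {D : Set ℂ} (hD : IsOpen D) (hconn : IsConnected D)
    (hbdd : Bornology.IsBounded D) (hfr : ¬ IsPreconnected (frontier D))
    {ν : ℂ → ℂ} (hν : IsOutwardUnitNormal D ν)
    {B : ℂ → ℂ → ℂ} (hB : IsBergmanKernel D (fun _ => 1) B) {z : ℂ} (hz : z ∈ D)
    {G : ℂ → EReal} (hG : IsGreenFunction D z G)
    {U : Set ℂ} (hU : IsOpen U) (hUbd : frontier D ⊆ U)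
    {GC1 : ℂ → ℝ} (hGC1 : ContDiffOn ℝ 1 GC1 U)
    (hGeq : ∀ w ∈ U ∩ closure D, G w = ((GC1 w : ℝ) : EReal))
    (hνpos : ∀ w ∈ frontier D, 0 < fderiv ℝ GC1 w (ν w))
    {K : ℂ → ℂ → ℂ} (hK : IsSzegoKernel D (fun w => (fderiv ℝ GC1 w (ν w))⁻¹) K) :
    Real.pi * (B z z).re < (K z z).re := by
  simp only [← innerSL_gradient] at hνpos hK
  obtain ⟨h, P, F⟩ := hG.exists_isGreenExtension hD hconn hbdd hz hU hUbd hGC1 hGeq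
    fun w hw hgrad => (hνpos w hw).ne' (by simp [hgrad])
  exact F.pi_mul_re_lt_re hB hK
    (fun p hp => by rw [F.isC1DefiningFunction.inner_grad_eq_norm hν hp (hνpos p hp)]) hfr

end

/-- Saitoh's conjecture (Guan's theorem): if `n > 1` then
`K̂(z) > π B(z)` for every `z ∈ D`, where `K̂` is the conjugate Hardy `H²` kernel
(the Szegő kernel with boundary weight `(∂G_D(·,z)/∂v)⁻¹`) and `B` is the
(unweighted) Bergman kernel. -/
theorem saitoh_conjecture
    (n : ℕ) (hn : 1 < n) (D : Set ℂ) (hD : IsRegularRegion n D)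
    (ν : ℂ → ℂ) (hν : IsOutwardUnitNormal D ν)
    (B : ℂ → ℂ → ℂ) (hB : IsBergmanKernel D (fun _ => 1) B)
    (z : ℂ) (hz : z ∈ D)
    (G : ℂ → EReal) (hG : IsGreenFunction D z G)
    (U : Set ℂ) (hU : IsOpen U) (hUbd : frontier D ⊆ U) (hUz : z ∉ U)
    (GC1 : ℂ → ℝ) (hGC1 : ContDiffOn ℝ 1 GC1 U)
    (hGeq : ∀ w ∈ U ∩ closure D, G w = ((GC1 w : ℝ) : EReal))
    (hνpos : ∀ w ∈ frontier D, 0 < fderiv ℝ GC1 w (ν w))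
    (K : ℂ → ℂ → ℂ)
    (hK : IsSzegoKernel D (fun w => (fderiv ℝ GC1 w (ν w))⁻¹) K) :
    Real.pi * (B z z).re < (K z z).re :=
  saitoh_conjecture_general hD.1 hD.2.1 hD.2.2.1 (hD.not_isPreconnected_frontier hn) hν hB hz hG hU
    hUbd hGC1 hGeq hνpos hK
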